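/- arXiv:2604.05949 — 5 statements merged into one kernel-verified Lean document; each statement's English description precedes it below -/
import Mathlib

section
/- If 𝒮 is a nonempty subfamily of 𝓛₀, then the intersection ⋂𝒮 (the topology whose open sets are exactly the sets belonging to every member of 𝒮) lies in 𝓛₀. If 𝒦 is a nonempty chain in 𝓛₀ (any two members comparable under ⊆), then the union ⋃𝒦 is a topology lying in 𝓛₀, and ⋃𝒦 ≠ η whenever η ∉ 𝒦. -/
/-!
A topology `τ ⊆ η` lies in `𝓛₀` if and only if every Euclidean open set missing `0` is `τ`-open and
every Euclidean compact set is `τ`-closed (`inL0_iff`). The second condition holds because a compact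
set stays compact in the coarser topology `τ`, which is Hausdorff; conversely, a compact interval
around `b ≠ 0` that misses `0` gives a separation of `b` from `0`. Since the condition only asks
for certain sets to be open, it passes to intersections and to unions of families.

In a chain, a union `W` of open sets that contains `0` equals `U ∪ (W \ {0})` for a single member
`U ∋ 0`, so `W` is open in the topology of `U`; hence the union of the chain is a topology.
Finally, if a member `τ` of `𝓛₀` contains `(-1, 1)`, then `τ = η`: a Euclidean open `U ∋ 0` is the
union of `U \ {0}` and `(-1, 1) \ ([-1, 1] \ U)`, and `[-1, 1] \ U` is compact. So if the union
of a chain is `η`, the member containing `(-1, 1)` is `η` itself.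
-/

open Topology Set

noncomputable section

/-- The Euclidean topology on `ℝ`. -/
def eta : TopologicalSpace ℝ := inferInstance

/-- `Coarser τ₁ τ₂` means every `τ₁`-open set is `τ₂`-open, i.e. `τ₁ ⊆ τ₂`
as families of open sets. -/
def Coarser (τ₁ τ₂ : TopologicalSpace ℝ) : Prop :=
  ∀ U : Set ℝ, IsOpen[τ₁] U → IsOpen[τ₂] U

/-- The family `𝓛`: Hausdorff topologies on `ℝ` coarser than the Euclidean one. -/
def InL (τ : TopologicalSpace ℝ) : Prop :=
  Coarser τ eta ∧ @T2Space ℝ τ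

/-- `τ` is coarse at `a`: the `τ`-neighborhood filter of `a` differs from the
Euclidean one. -/
def CoarseAt (τ : TopologicalSpace ℝ) (a : ℝ) : Prop :=
  @nhds ℝ τ a ≠ @nhds ℝ eta a

/-- `C(τ)`: the set of points at which `τ` is coarse. -/
def Cset (τ : TopologicalSpace ℝ) : Set ℝ := {a | CoarseAt τ a}

/-- The family `𝓛₀`: topologies in `𝓛` with `C(τ) ⊆ {0}`. -/
def InL0 (τ : TopologicalSpace ℝ) : Prop := InL τ ∧ Cset τ ⊆ {0}

/-- `(ℝ, τ)` is completely metrizable. -/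
def CompletelyMetrizable (τ : TopologicalSpace ℝ) : Prop :=
  ∃ m : MetricSpace ℝ,
    m.toUniformSpace.toTopologicalSpace = τ ∧ @CompleteSpace ℝ m.toUniformSpace

end

lemma isOpen_inter_compl_zero {U : Set ℝ} (hU : IsOpen[eta] U) : IsOpen[eta] (U ∩ {0}ᶜ) := by
  have hU' : IsOpen U := hU
  exact hU'.inter isOpen_compl_singleton

lemma isCompact_Icc_diff {U : Set ℝ} (hU : IsOpen[eta] U) :
    @IsCompact ℝ eta (Icc (-1 : ℝ) 1 \ U) := by
  have hU' : IsOpen U := hU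
  have h : IsCompact (Icc (-1 : ℝ) 1 \ U) := isCompact_Icc.diff hU'
  exact h

lemma isOpen_eta_Ioo : IsOpen[eta] (Ioo (-1 : ℝ) 1) := by
  have h : IsOpen (Ioo (-1 : ℝ) 1) := isOpen_Ioo
  exact h

/-- Membership in `𝓛₀` as a condition that certain sets are open, with no reference to separation
or neighbourhood filters. -/
lemma inL0_iff (τ : TopologicalSpace ℝ) :
    InL0 τ ↔ Coarser τ eta ∧ (∀ U : Set ℝ, IsOpen[eta] U → (0 : ℝ) ∉ U → IsOpen[τ] U) ∧
      (∀ K : Set ℝ, @IsCompact ℝ eta K → IsOpen[τ] Kᶜ) := by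
  constructor
  · rintro ⟨⟨hc, ht⟩, h0⟩
    refine ⟨hc, fun U hU hU0 => ?_, fun K hK => ?_⟩
    · rw [@isOpen_iff_mem_nhds ℝ τ U]
      intro a ha
      have hna : @nhds ℝ τ a = @nhds ℝ eta a := by
        by_contra hne
        have h : a = 0 := h0 hne
        exact hU0 (h ▸ ha)
      rw [hna]
      exact @IsOpen.mem_nhds ℝ eta a U hU ha
    · have hcont : @Continuous ℝ ℝ eta τ id := @Continuous.mk ℝ ℝ eta τ id hc
      have hK' : @IsCompact ℝ τ K := by
        have := @IsCompact.image ℝ ℝ eta τ K id hK hcont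
        rwa [image_id] at this
      exact (@IsCompact.isClosed ℝ τ ht K hK').isOpen_compl
  · rintro ⟨hc, hU, hK⟩
    refine ⟨⟨hc, ?_⟩, fun a ha => ?_⟩
    · -- Separation of a nonzero point from any other point.
      have key : ∀ a b : ℝ, a ≠ b → b ≠ 0 →
          ∃ u v : Set ℝ, IsOpen[τ] u ∧ IsOpen[τ] v ∧ a ∈ u ∧ b ∈ v ∧ Disjoint u v := by
        intro a b hab hb
        obtain ⟨r, hr, hr'⟩ : ∃ r > 0, r < |a - b| ∧ r < |b| := by
          have h1 : 0 < |a - b| := abs_pos.2 (sub_ne_zero.2 hab)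
          have h2 : 0 < |b| := abs_pos.2 hb
          obtain ⟨r, hr, hr'⟩ := exists_between (lt_min h1 h2)
          exact ⟨r, hr, lt_min_iff.1 hr'⟩
        refine ⟨(Metric.closedBall b r)ᶜ, Metric.ball b r, hK _ (isCompact_closedBall b r),
          hU _ Metric.isOpen_ball ?_, ?_, Metric.mem_ball_self hr, ?_⟩
        · simp only [Metric.mem_ball, Real.dist_eq, zero_sub, abs_neg, not_lt]
          exact hr'.2.le
        · simp only [mem_compl_iff, Metric.mem_closedBall, Real.dist_eq, not_le]
          exact hr'.1
        · exact (disjoint_compl_left).mono_right Metric.ball_subset_closedBall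
      refine @T2Space.mk ℝ τ fun a b hab => ?_
      by_cases hb : b = 0
      · have ha : a ≠ 0 := fun h => hab (h.trans hb.symm)
        obtain ⟨u, v, hu, hv, hbu, hav, hd⟩ := key b a hab.symm ha
        exact ⟨v, u, hv, hu, hav, hbu, hd.symm⟩
      · exact key a b hab hb
    · by_contra ha0
      apply ha
      apply le_antisymm
      · intro s hs
        obtain ⟨t, hts, ht, hat⟩ := (@mem_nhds_iff ℝ eta a s).1 hs
        have ht' : IsOpen[eta] (t ∩ {0}ᶜ) := isOpen_inter_compl_zero ht
        exact (@mem_nhds_iff ℝ τ a s).2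
          ⟨t ∩ {0}ᶜ, fun x hx => hts hx.1, hU _ ht' (by simp), hat, ha0⟩
      · intro s hs
        obtain ⟨t, hts, ht, hat⟩ := (@mem_nhds_iff ℝ τ a s).1 hs
        exact (@mem_nhds_iff ℝ eta a s).2 ⟨t, hts, hc t ht, hat⟩

/-- A Euclidean open set is `τ`-open as soon as it contains a `τ`-open set around `0`. -/
lemma InL0.isOpen_of_subset {τ : TopologicalSpace ℝ} (hτ : InL0 τ) {V W : Set ℝ}
    (hW : IsOpen[eta] W) (hV : IsOpen[τ] V) (h0 : (0 : ℝ) ∈ V) (hVW : V ⊆ W) : IsOpen[τ] W := by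
  have h1 : IsOpen[τ] (W ∩ {0}ᶜ) :=
    ((inL0_iff τ).1 hτ).2.1 _ (isOpen_inter_compl_zero hW) (by simp)
  have h2 : W = V ∪ (W ∩ {0}ᶜ) := by
    ext x
    constructor
    · intro hx
      by_cases hx0 : x = 0
      · exact Or.inl (hx0 ▸ h0)
      · exact Or.inr ⟨hx, hx0⟩
    · rintro (hx | hx)
      · exact hVW hx
      · exact hx.1
  rw [h2]
  exact @IsOpen.union ℝ V (W ∩ {0}ᶜ) τ hV h1

/-- The only member of `𝓛₀` in which `(-1, 1)` is open is the Euclidean topology. -/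
lemma InL0.eq_eta {τ : TopologicalSpace ℝ} (hτ : InL0 τ)
    (h : IsOpen[τ] (Ioo (-1 : ℝ) 1)) : τ = eta := by
  obtain ⟨hc, hU, hK⟩ := (inL0_iff τ).1 hτ
  refine TopologicalSpace.ext_iff.2 fun U => ⟨hc U, fun hUo => ?_⟩
  by_cases h0 : (0 : ℝ) ∈ U
  · have hopen := @IsOpen.inter ℝ τ _ _ h
      (hK _ (isCompact_Icc_diff hUo))
    refine hτ.isOpen_of_subset hUo hopen ⟨by norm_num, fun hx => hx.2 h0⟩ ?_
    rintro x ⟨hx, hx'⟩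
    by_contra hxU
    exact hx' ⟨Ioo_subset_Icc_self hx, hxU⟩
  · exact hU U hUo h0

/-- The union of a nonempty chain in `𝓛₀`, as a topology. -/
@[reducible]
def chainUnion (𝒦 : Set (TopologicalSpace ℝ)) (hne : 𝒦.Nonempty) (hL : ∀ τ ∈ 𝒦, InL0 τ)
    (hch : ∀ τ₁ ∈ 𝒦, ∀ τ₂ ∈ 𝒦, Coarser τ₁ τ₂ ∨ Coarser τ₂ τ₁) : TopologicalSpace ℝ where
  IsOpen U := ∃ τ ∈ 𝒦, IsOpen[τ] U
  isOpen_univ := by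
    obtain ⟨τ, hτ⟩ := hne
    exact ⟨τ, hτ, @isOpen_univ ℝ τ⟩
  isOpen_inter := by
    rintro s t ⟨τ₁, h₁, hs⟩ ⟨τ₂, h₂, ht⟩
    rcases hch τ₁ h₁ τ₂ h₂ with h | h
    · exact ⟨τ₂, h₂, @IsOpen.inter ℝ τ₂ s t (h s hs) ht⟩
    · exact ⟨τ₁, h₁, @IsOpen.inter ℝ τ₁ s t hs (h t ht)⟩
  isOpen_sUnion := by
    intro S hS
    have hW : IsOpen[eta] (⋃₀ S) := @isOpen_sUnion ℝ eta S fun U hU => by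
      obtain ⟨τ, hτ, hUo⟩ := hS U hU
      exact (hL τ hτ).1.1 U hUo
    by_cases h0 : (0 : ℝ) ∈ ⋃₀ S
    · obtain ⟨U, hU, h0U⟩ := h0
      obtain ⟨τ, hτ, hUo⟩ := hS U hU
      exact ⟨τ, hτ, (hL τ hτ).isOpen_of_subset hW hUo h0U (subset_sUnion_of_mem hU)⟩
    · obtain ⟨τ, hτ⟩ := hne
      exact ⟨τ, hτ, ((inL0_iff τ).1 (hL τ hτ)).2.1 _ hW h0⟩

/-- Nonempty intersections of subfamilies of 𝓛₀ lie in 𝓛₀, and the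
union of a nonempty chain in 𝓛₀ is a topology in 𝓛₀, differing from η when η is
not in the chain. -/
theorem statement_12 :
    (∀ 𝒮 : Set (TopologicalSpace ℝ), 𝒮.Nonempty → (∀ τ ∈ 𝒮, InL0 τ) →
      ∃ σ : TopologicalSpace ℝ,
        (∀ U : Set ℝ, IsOpen[σ] U ↔ ∀ τ ∈ 𝒮, IsOpen[τ] U) ∧ InL0 σ) ∧
    (∀ 𝒦 : Set (TopologicalSpace ℝ), 𝒦.Nonempty → (∀ τ ∈ 𝒦, InL0 τ) →
      (∀ τ₁ ∈ 𝒦, ∀ τ₂ ∈ 𝒦, Coarser τ₁ τ₂ ∨ Coarser τ₂ τ₁) →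
      ∃ σ : TopologicalSpace ℝ,
        (∀ U : Set ℝ, IsOpen[σ] U ↔ ∃ τ ∈ 𝒦, IsOpen[τ] U) ∧ InL0 σ ∧
        (eta ∉ 𝒦 → σ ≠ eta)) := by
  constructor
  · intro 𝒮 hne hL
    -- Mathlib orders topologies by reverse inclusion of open sets, so `sSup` is the intersection.
    have hσ : ∀ U : Set ℝ, IsOpen[sSup 𝒮] U ↔ ∀ τ ∈ 𝒮, IsOpen[τ] U := fun U => isOpen_sSup_iff
    refine ⟨sSup 𝒮, hσ, (inL0_iff _).2 ⟨fun U hU => ?_, fun U hU h0 => ?_, fun K hK => ?_⟩⟩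
    · obtain ⟨τ, hτ⟩ := hne
      exact (hL τ hτ).1.1 U ((hσ U).1 hU τ hτ)
    · exact (hσ U).2 fun τ hτ => ((inL0_iff τ).1 (hL τ hτ)).2.1 U hU h0
    · exact (hσ _).2 fun τ hτ => ((inL0_iff τ).1 (hL τ hτ)).2.2 K hK
  · intro 𝒦 hne hL hch
    have hσ : ∀ U : Set ℝ, IsOpen[chainUnion 𝒦 hne hL hch] U ↔ ∃ τ ∈ 𝒦, IsOpen[τ] U :=
      fun U => Iff.rfl
    refine ⟨chainUnion 𝒦 hne hL hch, hσ,
      (inL0_iff _).2 ⟨fun U hU => ?_, fun U hU h0 => ?_, fun K hK => ?_⟩, fun hη heq => ?_⟩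
    · obtain ⟨τ, hτ, hUo⟩ := (hσ U).1 hU
      exact (hL τ hτ).1.1 U hUo
    · obtain ⟨τ, hτ⟩ := hne
      exact (hσ U).2 ⟨τ, hτ, ((inL0_iff τ).1 (hL τ hτ)).2.1 U hU h0⟩
    · obtain ⟨τ, hτ⟩ := hne
      exact (hσ _).2 ⟨τ, hτ, ((inL0_iff τ).1 (hL τ hτ)).2.2 K hK⟩
    · have hI := isOpen_eta_Ioo
      rw [← heq] at hI
      obtain ⟨τ, hτ, hUo⟩ := (hσ _).1 hI
      exact hη ((hL τ hτ).eq_eta hUo ▸ hτ)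
end

section
/- There exists a chain 𝒥 ⊆ 𝓛 (any two members comparable under ⊆) with |𝒥| = c such that for every τ ∈ 𝒥 the space (ℝ, τ) is completely metrizable, and all the spaces (ℝ, τ) with τ ∈ 𝒥 are homeomorphic to one another. -/
/-!
Let `φ : ℝ → ℝ` be `1`-Lipschitz with `φ 0 = 0` and `φ > 0` elsewhere. Then
`d_φ(x, y) = min |x - y| (φ x + φ y)` is a metric on `ℝ`: the points `x` and `y` are joined either
directly or by a shortcut through `0`. Since `d_φ(x, y) ≤ |x - y|`, its topology is coarser than
the Euclidean one. It is complete: a Cauchy sequence along which `φ` gets arbitrarily small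
converges to `0`, and otherwise it is Cauchy for the usual metric.

The chain consists of the topologies of `d_{φ_l}` for `l > 0`, where `φ_l(x) = φ(l x) / l` and
`φ(x) = min |x| (inf_n max (x / (n+1)!) (n! - x))`. Each of these is homeomorphic to every other by
a dilation of `ℝ`. The function `φ` satisfies `φ(c x) ≤ c φ(x)` for `c ≥ 1`, so that `φ_l`, and with
it `d_{φ_l}`, decreases in `l`; this makes the family a chain. The topologies are distinct because
`φ(n!) ≤ 1 / (n+1)` tends to `0`, whereas `φ(r n!) ≥ min r (1 - r)` for `0 < r < 1`: if `l < k`, the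
sequence `n! / k` tends to `0` for `d_{φ_k}` but not for `d_{φ_l}`.
-/

open Topology Set

noncomputable section

/-! ### The shortcut metric -/

/-- The length of the shortest way from `x` to `y`, either directly or by a shortcut through `0`
whose legs have lengths `φ x` and `φ y`. -/
def shortcutDist (φ : ℝ → ℝ) (x y : ℝ) : ℝ := min |x - y| (φ x + φ y)

/-- The conditions on `φ` that make `shortcutDist φ` a complete metric. -/
structure Gauge (φ : ℝ → ℝ) : Prop where
  zero : φ 0 = 0
  pos : ∀ x, x ≠ 0 → 0 < φ x
  lip : ∀ x y, φ x ≤ φ y + |x - y|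

lemma Gauge.nonneg {φ : ℝ → ℝ} (h : Gauge φ) (x : ℝ) : 0 ≤ φ x := by
  rcases eq_or_ne x 0 with rfl | hx
  · exact h.zero.ge
  · exact (h.pos x hx).le

lemma shortcutDist_comm (φ : ℝ → ℝ) (x y : ℝ) : shortcutDist φ x y = shortcutDist φ y x := by
  unfold shortcutDist
  rw [abs_sub_comm, add_comm]

lemma Gauge.triangle {φ : ℝ → ℝ} (h : Gauge φ) (x y z : ℝ) :
    shortcutDist φ x z ≤ shortcutDist φ x y + shortcutDist φ y z := by
  unfold shortcutDist
  have h1 := abs_sub_le x y z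
  have h2 := h.lip x y
  have h3 := h.lip z y
  rw [abs_sub_comm z y] at h3
  have h4 := h.nonneg y
  rcases min_choice |x - y| (φ x + φ y) with e | e <;>
    rcases min_choice |y - z| (φ y + φ z) with e' | e' <;> rw [e, e']
  · exact (min_le_left _ _).trans h1
  all_goals exact (min_le_right _ _).trans (by linarith)

lemma Gauge.eq_of_dist {φ : ℝ → ℝ} (h : Gauge φ) {x y : ℝ} (hxy : shortcutDist φ x y = 0) :
    x = y := by
  unfold shortcutDist at hxy
  have hx := h.nonneg x
  have hy := h.nonneg y
  rcases min_choice |x - y| (φ x + φ y) with e | e <;> rw [e] at hxy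
  · exact sub_eq_zero.1 (abs_eq_zero.1 hxy)
  · have hx0 : x = 0 := by
      by_contra hne
      linarith [h.pos x hne]
    have hy0 : y = 0 := by
      by_contra hne
      linarith [h.pos y hne]
    rw [hx0, hy0]

lemma Gauge.dist_self {φ : ℝ → ℝ} (h : Gauge φ) (x : ℝ) : shortcutDist φ x x = 0 := by
  have := h.nonneg x
  simp only [shortcutDist, sub_self, abs_zero]
  exact min_eq_left (by linarith)

/-- The metric space structure on `ℝ` with distance `shortcutDist φ`. -/
@[reducible] def Gauge.metric {φ : ℝ → ℝ} (h : Gauge φ) : MetricSpace ℝ where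
  dist := shortcutDist φ
  dist_self := h.dist_self
  dist_comm := shortcutDist_comm φ
  dist_triangle := h.triangle
  eq_of_dist_eq_zero := h.eq_of_dist

/-- The topology of the metric `shortcutDist φ`. -/
@[reducible] def Gauge.top {φ : ℝ → ℝ} (h : Gauge φ) : TopologicalSpace ℝ :=
  h.metric.toUniformSpace.toTopologicalSpace

lemma Gauge.exists_limit {φ : ℝ → ℝ} (h : Gauge φ) (u : ℕ → ℝ)
    (hu : ∀ ε > 0, ∃ N, ∀ m ≥ N, ∀ n ≥ N, shortcutDist φ (u m) (u n) < ε) :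
    ∃ a, ∀ ε > 0, ∃ N, ∀ n ≥ N, shortcutDist φ (u n) a < ε := by
  by_cases hsmall : ∀ ε > 0, ∀ N, ∃ n ≥ N, φ (u n) < ε
  · refine ⟨0, fun ε hε => ?_⟩
    obtain ⟨N, hN⟩ := hu (ε / 2) (by linarith)
    obtain ⟨m, hm, hm'⟩ := hsmall (ε / 2) (by linarith) N
    refine ⟨N, fun n hn => ?_⟩
    have h1 := h.triangle (u n) (u m) 0
    have h2 := hN n hn m hm
    have h3 : shortcutDist φ (u m) 0 ≤ φ (u m) + φ 0 := min_le_right _ _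
    rw [h.zero] at h3
    linarith
  · push Not at hsmall
    obtain ⟨δ, hδ, N₀, hN₀⟩ := hsmall
    have hc : CauchySeq u := by
      rw [Metric.cauchySeq_iff]
      intro ε hε
      obtain ⟨N, hN⟩ := hu (min ε δ) (lt_min hε hδ)
      refine ⟨max N N₀, fun m hm n hn => ?_⟩
      have h1 := hN m (le_of_max_le_left hm) n (le_of_max_le_left hn)
      have h2 := hN₀ m (le_of_max_le_right hm)
      have h3 := h.nonneg (u n)
      rw [Real.dist_eq]
      rcases min_lt_iff.1 h1 with h4 | h4
      · exact h4.trans_le (min_le_left _ _)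
      · have := min_le_right ε δ
        linarith
    obtain ⟨a, ha⟩ := cauchySeq_tendsto_of_complete hc
    refine ⟨a, fun ε hε => ?_⟩
    obtain ⟨N, hN⟩ := Metric.tendsto_atTop.1 ha ε hε
    refine ⟨N, fun n hn => (min_le_left _ _).trans_lt ?_⟩
    simpa [Real.dist_eq] using hN n hn

lemma Gauge.completelyMetrizable {φ : ℝ → ℝ} (h : Gauge φ) : CompletelyMetrizable h.top := by
  refine ⟨h.metric, rfl, ?_⟩
  refine @Metric.complete_of_cauchySeq_tendsto ℝ h.metric.toPseudoMetricSpace fun u hu => ?_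
  obtain ⟨a, ha⟩ :=
    h.exists_limit u ((@Metric.cauchySeq_iff ℝ ℕ h.metric.toPseudoMetricSpace _ _ u).1 hu)
  exact ⟨a, (@Metric.tendsto_atTop ℝ ℕ h.metric.toPseudoMetricSpace _ _ u a).2 ha⟩

lemma continuous_of_dist_le {α β : Type*} [MetricSpace α] [MetricSpace β] {f : α → β} {K : ℝ}
    (h : ∀ x y, dist (f x) (f y) ≤ K * dist x y) : Continuous f :=
  (LipschitzWith.of_dist_le' h).continuous

lemma t2_of_metricSpace {α : Type*} [MetricSpace α] : T2Space α := inferInstance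

lemma Gauge.inL {φ : ℝ → ℝ} (h : Gauge φ) : InL h.top := by
  refine ⟨fun U hU => ?_, ?_⟩
  · have hc := @continuous_of_dist_le ℝ ℝ inferInstance h.metric id 1 fun x y => by
      rw [one_mul]
      exact min_le_left _ _
    exact @Continuous.isOpen_preimage ℝ ℝ _ h.top id hc U hU
  · exact @t2_of_metricSpace ℝ h.metric

/-- A smaller `φ` gives a coarser topology. -/
lemma Gauge.coarser {φ ψ : ℝ → ℝ} (h : Gauge φ) (h' : Gauge ψ) (hle : ∀ x, φ x ≤ ψ x) :
    Coarser h.top h'.top := by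
  intro U hU
  have hc := @continuous_of_dist_le ℝ ℝ h'.metric h.metric id 1 fun x y => by
    rw [one_mul]
    exact min_le_min le_rfl (add_le_add (hle x) (hle y))
  exact @Continuous.isOpen_preimage ℝ ℝ h'.top h.top id hc U hU

/-! ### The function with fast-growing dips -/

/-- The `n`-th dip: it falls with slope `-1` until near `n!`, where its value is about `1 / (n+1)`,
and then grows so slowly that it reaches `1` only at `(n+1)!`. -/
def dip (n : ℕ) (x : ℝ) : ℝ := max (x / (n + 1).factorial) (n.factorial - x)

/-- The infimum of all dips, cut off by `|x|` so as to vanish at `0`. -/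
def dips (x : ℝ) : ℝ := min |x| (⨅ n, dip n x)

lemma one_le_fact (n : ℕ) : (1 : ℝ) ≤ n.factorial := by
  exact_mod_cast n.factorial_pos

lemma fact_mono {m n : ℕ} (h : m ≤ n) : (m.factorial : ℝ) ≤ n.factorial := by
  exact_mod_cast Nat.factorial_le h

lemma dip_nonneg (n : ℕ) (x : ℝ) : 0 ≤ dip n x := by
  rcases le_total 0 x with h | h
  · exact le_max_of_le_left (by positivity)
  · exact le_max_of_le_right (by linarith [one_le_fact n])

lemma iInf_dip_le (n : ℕ) (x : ℝ) : ⨅ n, dip n x ≤ dip n x :=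
  ciInf_le ⟨0, by rintro _ ⟨m, rfl⟩; exact dip_nonneg m x⟩ n

lemma dip_lip (n : ℕ) (x y : ℝ) : dip n x ≤ dip n y + |x - y| := by
  have h1 := le_abs_self (x - y)
  have h2 := neg_abs_le (x - y)
  refine max_le ?_ ?_
  · have h3 : y / (n + 1).factorial ≤ dip n y := le_max_left _ _
    have h4 : (x - y) / (n + 1).factorial ≤ |x - y| :=
      (div_le_div_of_nonneg_right h1 (by positivity)).trans
        (div_le_self (abs_nonneg _) (one_le_fact _))
    rw [sub_div] at h4
    linarith
  · have h3 : n.factorial - y ≤ dip n y := le_max_right _ _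
    linarith

lemma gauge_dips : Gauge dips where
  zero := by
    simp only [dips, abs_zero]
    exact min_eq_left (le_ciInf fun n => dip_nonneg n 0)
  pos := fun x hx => by
    refine lt_min (abs_pos.2 hx) ?_
    rcases lt_or_gt_of_ne hx with h | h
    · refine lt_of_lt_of_le one_pos (le_ciInf fun n => le_max_of_le_right ?_)
      linarith [one_le_fact n]
    · obtain ⟨N, hN⟩ := exists_nat_ge (x + 1)
      have hN' : (N : ℝ) ≤ N.factorial := by exact_mod_cast N.self_le_factorial
      have hpos : (0 : ℝ) < min 1 (x / N.factorial) := lt_min one_pos (by positivity)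
      refine hpos.trans_le (le_ciInf fun n => ?_)
      -- The dips from the `N`-th on have not come down below `1`; the earlier ones are rising.
      rcases le_or_gt N n with hn | hn
      · exact (min_le_left _ _).trans (le_max_of_le_right (by linarith [fact_mono hn]))
      · refine (min_le_right _ _).trans (le_max_of_le_left ?_)
        exact div_le_div_of_nonneg_left h.le (by positivity) (fact_mono hn)
  lip := fun x y => by
    rw [← sub_le_iff_le_add]
    refine le_min ?_ (le_ciInf fun n => ?_)
    · have h1 : dips x ≤ |x| := min_le_left _ _
      have h2 := abs_sub_abs_le_abs_sub x y
      linarith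
    · have h1 : dips x ≤ dip n x := (min_le_right _ _).trans (iInf_dip_le n x)
      have h2 := dip_lip n x y
      linarith

lemma dips_mul_le {c : ℝ} (hc : 1 ≤ c) (x : ℝ) : dips (c * x) ≤ c * dips x := by
  have hc0 : 0 < c := by linarith
  rw [← div_le_iff₀' hc0]
  refine le_min ?_ (le_ciInf fun n => ?_) <;> rw [div_le_iff₀' hc0]
  · refine (min_le_left _ _).trans ?_
    rw [abs_mul, abs_of_pos hc0]
  · refine ((min_le_right _ _).trans (iInf_dip_le n _)).trans (max_le ?_ ?_)
    · rw [mul_div_assoc]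
      exact mul_le_mul_of_nonneg_left (le_max_left _ _) hc0.le
    · have h1 : c * (n.factorial - x) ≤ c * dip n x :=
        mul_le_mul_of_nonneg_left (le_max_right _ _) hc0.le
      nlinarith [one_le_fact n]

lemma dips_fact_le (n : ℕ) : dips n.factorial ≤ 1 / (n + 1) := by
  refine ((min_le_right _ _).trans (iInf_dip_le n _)).trans (max_le (le_of_eq ?_) ?_)
  · rw [Nat.factorial_succ]
    push_cast
    field_simp
  · rw [sub_self]
    positivity

lemma le_dips_mul_fact {r : ℝ} (h0 : 0 < r) (h1 : r < 1) (n : ℕ) :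
    min r (1 - r) ≤ dips (r * n.factorial) := by
  have hn := one_le_fact n
  refine le_min ?_ (le_ciInf fun m => ?_)
  · rw [abs_of_pos (by positivity)]
    exact (min_le_left _ _).trans (le_mul_of_one_le_right h0.le hn)
  · rcases le_or_gt n m with hm | hm
    · refine (min_le_right _ _).trans (le_max_of_le_right ?_)
      nlinarith [fact_mono hm]
    · refine (min_le_left _ _).trans (le_max_of_le_left ?_)
      rw [le_div_iff₀ (by positivity)]
      exact mul_le_mul_of_nonneg_left (fact_mono hm) h0.le

/-! ### The chain of topologies -/

/-- The rescaling of `dips` for which the dilation by `l`, from `shortcutDist (scaled l)` to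
`shortcutDist dips`, multiplies distances by `l`. -/
def scaled (l x : ℝ) : ℝ := dips (l * x) / l

lemma gauge_scaled {l : ℝ} (hl : 0 < l) : Gauge (scaled l) where
  zero := by simp [scaled, gauge_dips.zero]
  pos := fun x hx => div_pos (gauge_dips.pos _ (mul_ne_zero hl.ne' hx)) hl
  lip := fun x y => by
    unfold scaled
    rw [div_le_iff₀ hl, add_mul, div_mul_cancel₀ _ hl.ne']
    have := gauge_dips.lip (l * x) (l * y)
    rwa [← mul_sub, abs_mul, abs_of_pos hl, mul_comm l |x - y|] at this

lemma scaled_anti {l k : ℝ} (hl : 0 < l) (h : l ≤ k) (x : ℝ) : scaled k x ≤ scaled l x := by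
  have hk : 0 < k := hl.trans_le h
  have := dips_mul_le ((one_le_div hl).2 h) (l * x)
  rw [← mul_assoc, div_mul_cancel₀ _ hl.ne'] at this
  unfold scaled
  rw [div_le_iff₀ hk]
  calc dips (k * x) ≤ k / l * dips (l * x) := this
    _ = dips (l * x) / l * k := by ring

lemma shortcutDist_scaled {l k : ℝ} (hl : 0 < l) (hk : 0 < k) (x y : ℝ) :
    shortcutDist (scaled k) (l / k * x) (l / k * y) = l / k * shortcutDist (scaled l) x y := by
  have hkx : ∀ z, scaled k (l / k * z) = l / k * scaled l z := fun z => by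
    unfold scaled
    rw [← mul_assoc, mul_div_cancel₀ _ hk.ne']
    field_simp
  unfold shortcutDist
  rw [hkx, hkx, ← mul_sub, ← mul_add, abs_mul, abs_of_pos (div_pos hl hk),
    mul_min_of_nonneg _ _ (div_pos hl hk).le]

lemma nonempty_homeomorph {l k : ℝ} (hl : 0 < l) (hk : 0 < k) :
    Nonempty (@Homeomorph ℝ ℝ (gauge_scaled hl).top (gauge_scaled hk).top) := by
  refine ⟨@Homeomorph.mk ℝ ℝ (gauge_scaled hl).top (gauge_scaled hk).top
    ⟨fun x => l / k * x, fun x => k / l * x, fun x => ?_, fun x => ?_⟩ ?_ ?_⟩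
  · field_simp
  · field_simp
  · exact @continuous_of_dist_le ℝ ℝ (gauge_scaled hl).metric (gauge_scaled hk).metric _ (l / k)
      fun x y => (shortcutDist_scaled hl hk x y).le
  · exact @continuous_of_dist_le ℝ ℝ (gauge_scaled hk).metric (gauge_scaled hl).metric _ (k / l)
      fun x y => (shortcutDist_scaled hk hl x y).le

/-- The sequence `n! / k` converges to `0` for the parameter `k` but not for a smaller one. -/
lemma top_ne {l k : ℝ} (hl : 0 < l) (hk : 0 < k) (h : l < k) :
    (gauge_scaled hl).top ≠ (gauge_scaled hk).top := by
  intro heq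
  have hr0 : 0 < l / k := div_pos hl hk
  have hr1 : l / k < 1 := (div_lt_one hk).2 h
  have hk0 : Filter.Tendsto (fun n : ℕ => (n.factorial : ℝ) / k) Filter.atTop
      (@nhds ℝ (gauge_scaled hk).top 0) := by
    refine (@Metric.tendsto_atTop ℝ ℕ (gauge_scaled hk).metric.toPseudoMetricSpace _ _ _ _).2
      fun ε hε => ?_
    obtain ⟨N, hN⟩ := exists_nat_one_div_lt (mul_pos hε hk)
    refine ⟨N, fun n hn => ?_⟩
    have h1 : shortcutDist (scaled k) (n.factorial / k) 0 ≤
        scaled k (n.factorial / k) + scaled k 0 := min_le_right _ _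
    rw [(gauge_scaled hk).zero, add_zero] at h1
    refine h1.trans_lt ?_
    unfold scaled
    rw [mul_div_cancel₀ _ hk.ne', div_lt_iff₀ hk]
    refine ((dips_fact_le n).trans ?_).trans_lt hN
    exact one_div_le_one_div_of_le (by positivity) (by exact_mod_cast Nat.succ_le_succ hn)
  rw [← heq] at hk0
  set δ := min (l / k) (1 - l / k) / l with hδ
  have hδ0 : 0 < δ := div_pos (lt_min hr0 (by linarith)) hl
  obtain ⟨N, hN⟩ :=
    (@Metric.tendsto_atTop ℝ ℕ (gauge_scaled hl).metric.toPseudoMetricSpace _ _ _ _).1 hk0 δ hδ0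
  have h1 : shortcutDist (scaled l) (N.factorial / k) 0 < δ := hN N le_rfl
  have h2 : δ ≤ scaled l (N.factorial / k) := by
    unfold scaled
    rw [hδ, show l * ((N.factorial : ℝ) / k) = l / k * N.factorial by ring]
    exact div_le_div_of_nonneg_right (le_dips_mul_fact hr0 hr1 N) hl.le
  -- The direct way to `0` is at least as long as the shortcut, since `scaled l` is `1`-Lipschitz.
  have h3 := (gauge_scaled hl).lip (N.factorial / k) 0
  rw [(gauge_scaled hl).zero, zero_add] at h3
  refine absurd h1 (not_lt.2 (le_min (h2.trans h3) ?_))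
  rw [(gauge_scaled hl).zero, add_zero]
  exact h2

end

/-- There is a chain 𝒥 ⊆ 𝓛 with |𝒥| = 𝔠 of topologies giving
completely metrizable, mutually homeomorphic spaces. -/
theorem statement_14 :
    ∃ 𝒥 : Set (TopologicalSpace ℝ),
      Cardinal.mk ↥𝒥 = Cardinal.continuum ∧
      (∀ τ₁ ∈ 𝒥, ∀ τ₂ ∈ 𝒥, Coarser τ₁ τ₂ ∨ Coarser τ₂ τ₁) ∧
      (∀ τ ∈ 𝒥, InL τ ∧ CompletelyMetrizable τ) ∧
      ∀ τ ∈ 𝒥, ∀ τ' ∈ 𝒥, Nonempty (@Homeomorph ℝ ℝ τ τ') := by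
  refine ⟨Set.range fun l : Set.Ioi (0 : ℝ) => (gauge_scaled l.2).top, ?_, ?_, ?_, ?_⟩
  · rw [Cardinal.mk_range_eq, Cardinal.mk_Ioi_real]
    intro l k hlk
    by_contra hne
    rcases lt_or_gt_of_ne hne with h | h
    · exact top_ne l.2 k.2 h hlk
    · exact top_ne k.2 l.2 h hlk.symm
  · rintro _ ⟨l, rfl⟩ _ ⟨k, rfl⟩
    rcases le_total l k with h | h
    · exact Or.inr ((gauge_scaled k.2).coarser (gauge_scaled l.2) (scaled_anti l.2 h))
    · exact Or.inl ((gauge_scaled l.2).coarser (gauge_scaled k.2) (scaled_anti k.2 h))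
  · rintro _ ⟨l, rfl⟩
    exact ⟨(gauge_scaled l.2).inL, (gauge_scaled l.2).completelyMetrizable⟩
  · rintro _ ⟨l, rfl⟩ _ ⟨k, rfl⟩
    exact nonempty_homeomorph l.2 k.2
end

section
/- There exist four chains 𝒦₀, 𝒦₁, 𝒦₂, 𝒦₃ ⊆ 𝓛₀, each of cardinality c, such that for each i ∈ {0,1,2,3} all spaces (ℝ, τ) with τ ∈ 𝒦ᵢ are homeomorphic to one another, and: (i) for τ ∈ 𝒦₀ the space (ℝ, τ) is second countable but not regular; (ii) for τ ∈ 𝒦₁ the space (ℝ, τ) is neither regular nor first countable; (iii) for τ ∈ 𝒦₂ the space (ℝ, τ) is completely normal but not first countable; (iv) for τ ∈ 𝒦₃ the space (ℝ, τ) is completely metrizable; (v) 𝒦₀ ∪ 𝒦₁ ∪ 𝒦₂ is a chain and each of 𝒦₀, 𝒦₁, 𝒦₂ is dense in 𝒦₀ ∪ 𝒦₁ ∪ 𝒦₂; (vi) every topology in 𝒦₀ ∪ 𝒦₁ ∪ 𝒦₂ is coarser than every topology in 𝒦₃. -/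
/-!
The topologies are built by changing the Euclidean neighbourhoods of `0` only. If `F` is a filter
with a base of Euclidean open sets and `F` is finer than the filter of neighbourhoods of infinity,
then `tau F`, in which `0` has the neighbourhood filter `𝓝 0 ⊔ F`, is a Hausdorff topology coarser
than the Euclidean one and coarse at most at `0`.

The filters come from the levels `t ∈ (0, 1)` of the 1-periodic sawtooth `saw`. For a set `P`, the
filter `levFilter P t` consists of the traces near infinity of the open sets containing
`{saw < t} ∪ ({saw = t} ∩ P)`. The choice of `P` decides the type of the space:

* `P = ∅`: the sublevel set is open, which gives a countable base, but a closed neighbourhood of `0`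
  has to contain points of the level `t` (`secondCountable_lev`, `not_regular_lev`);
* `P = Iio 0`: on the positive side regularity fails for the same reason, and on the negative side
  a diagonal argument excludes a countable base at `0` (`not_firstCountable_lev`);
* `P = univ`: the closed sublevel set `{saw ≤ t}` has a base of closed neighbourhoods, whence
  complete normality (`completelyNormal_lev`), and the diagonal argument applies again.

For the fourth chain `uniFilter s` uses only the sets `{saw < r}` with `r > s`. Then the
neighbourhoods of `0` are given by a continuous height function vanishing only at `0`, and a
cone-like metric with apex `0` is complete and induces the topology (`completelyMetrizable_tau`).

For levels `s < t`, whatever the types, the topology of level `t` is strictly coarser than that of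
level `s` (`Good.coarser`, `Good.ne`). The homeomorphisms `phi c` of `ℝ` fix `0`, preserve the
intervals `[n, n + 1]` and act transitively on the levels, so all spaces of one type are
homeomorphic (`homeomorph_family`). The first three chains use levels in `(1/2, 1)` indexed by
three fibres of a `ℚ`-linear functional `ℝ → ℚ`; these are pairwise disjoint, dense and of
cardinality continuum (`exists_fibres`), so the union is a chain in which each of the three is
dense. The fourth chain uses the levels in `(0, 1/2)`, hence finer topologies.
-/

open Topology Set

/-- A family of topologies on ℝ is a chain (w.r.t. inclusion of open sets). -/
def IsChainTop (𝒦 : Set (TopologicalSpace ℝ)) : Prop :=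
  ∀ τ₁ ∈ 𝒦, ∀ τ₂ ∈ 𝒦, Coarser τ₁ τ₂ ∨ Coarser τ₂ τ₁

/-- `𝒦'` is dense in the chain `𝒦`: strictly between any two comparable distinct
members of `𝒦` there is a third member from `𝒦'`. -/
def DenseInChain (𝒦' 𝒦 : Set (TopologicalSpace ℝ)) : Prop :=
  ∀ X ∈ 𝒦, ∀ Y ∈ 𝒦, Coarser X Y → X ≠ Y →
    ∃ Z ∈ 𝒦', Z ≠ X ∧ Z ≠ Y ∧ Coarser X Z ∧ Coarser Z Y

open Filter

noncomputable section

/-! ### Topologies obtained by changing the neighbourhoods of `0` -/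

/-- The topology on `ℝ` whose open sets are the Euclidean open sets `U` such that `U ∈ F`
whenever `0 ∈ U`. If `F` has a base of Euclidean open sets, the neighbourhood filter of `0`
becomes `𝓝 0 ⊔ F`; all other neighbourhood filters stay Euclidean. -/
@[reducible]
def tau (F : Filter ℝ) : TopologicalSpace ℝ where
  IsOpen U := IsOpen U ∧ ((0 : ℝ) ∈ U → U ∈ F)
  isOpen_univ := ⟨isOpen_univ, fun _ => univ_mem⟩
  isOpen_inter _ _ hU hV := ⟨hU.1.inter hV.1, fun h => inter_mem (hU.2 h.1) (hV.2 h.2)⟩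
  isOpen_sUnion _ hS := ⟨isOpen_sUnion fun U hU => (hS U hU).1, fun ⟨U, hU, h0⟩ =>
    mem_of_superset ((hS U hU).2 h0) (Set.subset_sUnion_of_mem hU)⟩

lemma isOpen_tau {F : Filter ℝ} {U : Set ℝ} :
    IsOpen[tau F] U ↔ IsOpen U ∧ ((0 : ℝ) ∈ U → U ∈ F) := Iff.rfl

lemma isOpen_tau_of_not_mem {F : Filter ℝ} {U : Set ℝ} (hU : IsOpen U) (h : (0 : ℝ) ∉ U) :
    IsOpen[tau F] U := ⟨hU, fun hz => absurd hz h⟩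

/-- `F` has a base of Euclidean open sets. -/
def OpenBase (F : Filter ℝ) : Prop := ∀ S ∈ F, ∃ U ⊆ S, IsOpen U ∧ U ∈ F

lemma nhds_tau_zero {F : Filter ℝ} (hF : OpenBase F) : @nhds ℝ (tau F) 0 = 𝓝 0 ⊔ F := by
  ext S
  rw [@mem_nhds_iff ℝ (tau F), mem_sup]
  constructor
  · rintro ⟨U, hUS, hU, h0⟩
    exact ⟨mem_of_superset (hU.1.mem_nhds h0) hUS, mem_of_superset (hU.2 h0) hUS⟩
  · rintro ⟨h0, hS⟩
    obtain ⟨U, hUS, hU, hUF⟩ := hF S hS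
    obtain ⟨V, hVS, hV, h0V⟩ := mem_nhds_iff.1 h0
    exact ⟨U ∪ V, union_subset hUS hVS,
      ⟨hU.union hV, fun _ => mem_of_superset hUF subset_union_left⟩, Or.inr h0V⟩

lemma nhds_tau_ne {F : Filter ℝ} {a : ℝ} (ha : a ≠ 0) : @nhds ℝ (tau F) a = 𝓝 a := by
  ext S
  rw [@mem_nhds_iff ℝ (tau F), mem_nhds_iff]
  constructor
  · rintro ⟨U, hUS, hU, h0⟩
    exact ⟨U, hUS, hU.1, h0⟩
  · rintro ⟨U, hUS, hU, h0⟩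
    exact ⟨U ∩ {0}ᶜ, inter_subset_left.trans hUS,
      isOpen_tau_of_not_mem (hU.inter isOpen_compl_singleton) (by simp), h0, ha⟩

lemma t2_tau {F : Filter ℝ} (hF : F ≤ cocompact ℝ) : @T2Space ℝ (tau F) := by
  -- a nonzero point and `0` are separated because bounded sets are negligible for `F`
  have key : ∀ a : ℝ, a ≠ 0 → ∃ u v : Set ℝ, IsOpen[tau F] u ∧ IsOpen[tau F] v ∧
      a ∈ u ∧ 0 ∈ v ∧ Disjoint u v := by
    intro a ha
    have ha' : 0 < |a| := abs_pos.2 ha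
    refine ⟨Metric.ball a (|a| / 2), (Metric.closedBall a (|a| / 2))ᶜ,
      isOpen_tau_of_not_mem Metric.isOpen_ball ?_,
      ⟨Metric.isClosed_closedBall.isOpen_compl,
        fun _ => hF (isCompact_closedBall _ _).compl_mem_cocompact⟩,
      Metric.mem_ball_self (by positivity), ?_, ?_⟩
    · simp only [Metric.mem_ball, Real.dist_eq, zero_sub, abs_neg]; linarith
    · simp only [mem_compl_iff, Metric.mem_closedBall, Real.dist_eq, zero_sub, abs_neg]; linarith
    · exact disjoint_compl_right.mono_left Metric.ball_subset_closedBall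
  refine @T2Space.mk ℝ (tau F) ?_
  intro x y hxy
  rcases eq_or_ne x 0 with rfl | hx
  · obtain ⟨u, v, hu, hv, h1, h2, h3⟩ := key y hxy.symm
    exact ⟨v, u, hv, hu, h2, h1, h3.symm⟩
  rcases eq_or_ne y 0 with rfl | hy
  · exact key x hx
  obtain ⟨u, v, hu, hv, h1, h2, h3⟩ := t2_separation hxy
  exact ⟨u ∩ {0}ᶜ, v ∩ {0}ᶜ,
    isOpen_tau_of_not_mem (hu.inter isOpen_compl_singleton) (by simp),
    isOpen_tau_of_not_mem (hv.inter isOpen_compl_singleton) (by simp), ⟨h1, hx⟩, ⟨h2, hy⟩,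
    h3.mono inter_subset_left inter_subset_left⟩

lemma inL0_tau {F : Filter ℝ} (hF : F ≤ cocompact ℝ) : InL0 (tau F) := by
  refine ⟨⟨fun U hU => hU.1, t2_tau hF⟩, fun a ha => ?_⟩
  by_contra h
  exact ha (nhds_tau_ne h)

lemma coarser_tau {F G : Filter ℝ} (h : G ≤ F) : Coarser (tau F) (tau G) :=
  fun _ hU => ⟨hU.1, fun h0 => h (hU.2 h0)⟩

lemma Coarser.antisymm {τ₁ τ₂ : TopologicalSpace ℝ} (h₁ : Coarser τ₁ τ₂) (h₂ : Coarser τ₂ τ₁) :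
    τ₁ = τ₂ := by
  ext U
  exact ⟨h₁ U, h₂ U⟩

/-- A Euclidean homeomorphism fixing `0` that matches the filters is a homeomorphism of the
modified topologies. -/
lemma homeomorph_tau {F G : Filter ℝ} (e : ℝ ≃ₜ ℝ) (h0 : e 0 = 0) (h : Tendsto e F G)
    (h' : Tendsto e.symm G F) : Nonempty (@Homeomorph ℝ ℝ (tau F) (tau G)) := by
  refine ⟨@Homeomorph.mk ℝ ℝ (tau F) (tau G) e.toEquiv ?_ ?_⟩
  · refine @Continuous.mk ℝ ℝ (tau F) (tau G) _ fun U hU =>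
      ⟨hU.1.preimage e.continuous, fun hz => ?_⟩
    refine h (hU.2 ?_)
    simpa [h0] using hz
  · refine @Continuous.mk ℝ ℝ (tau G) (tau F) _ fun U hU =>
      ⟨hU.1.preimage e.symm.continuous, fun hz => ?_⟩
    refine h' (hU.2 ?_)
    have : e.symm 0 = 0 := by rw [e.symm_apply_eq, h0]
    change e.symm 0 ∈ U at hz
    rwa [this] at hz

/-! ### The sawtooth function and its symmetries -/

/-- The 1-periodic sawtooth with value `1` at the integers and `0` at the half-integers. -/
def saw (x : ℝ) : ℝ := |2 * Int.fract x - 1|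

lemma continuous_saw : Continuous saw := by
  have : Continuous ((fun u : ℝ => |2 * u - 1|) ∘ Int.fract) := by
    refine ContinuousOn.comp_fract'' (Continuous.continuousOn (by fun_prop)) (by norm_num)
  exact this

lemma saw_nonneg (x : ℝ) : 0 ≤ saw x := abs_nonneg _

lemma saw_le_one (x : ℝ) : saw x ≤ 1 := by
  have h1 := Int.fract_nonneg x
  have h2 := Int.fract_lt_one x
  exact abs_le.2 ⟨by linarith, by linarith⟩

/-- The point of `[n + 1/2, n + 1)` at which the sawtooth has value `v ∈ [0, 1)`. -/
def pt (n : ℤ) (v : ℝ) : ℝ := n + (1 + v) / 2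

lemma continuous_pt (n : ℤ) : Continuous (pt n) := by unfold pt; fun_prop

lemma saw_pt (n : ℤ) {v : ℝ} (h0 : 0 ≤ v) (h1 : v < 1) : saw (pt n v) = v := by
  have : Int.fract (pt n v) = (1 + v) / 2 := by
    rw [pt, Int.fract_intCast_add, Int.fract_eq_self]
    constructor <;> linarith
  rw [saw, this, show 2 * ((1 + v) / 2) - 1 = v by ring, abs_of_nonneg h0]

/-- For `c > 0` an odd increasing bijection of `[-1, 1]`; on `[0, 1]` it is the Möbius map
multiplying `w / (1 - w)` by `c`. -/
def sig (c w : ℝ) : ℝ := c * w / (1 + (c - 1) * |w|)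

lemma sig_den_pos {c w : ℝ} (hc : 0 < c) (hw : |w| ≤ 1) : 0 < 1 + (c - 1) * |w| := by
  rcases hw.lt_or_eq with h | h
  · nlinarith [abs_nonneg w]
  · rw [h]; linarith

lemma sig_strictMono {c : ℝ} (hc : 0 < c) {w w' : ℝ} (hw : |w| ≤ 1) (hw' : |w'| ≤ 1)
    (h : w < w') : sig c w < sig c w' := by
  have d := sig_den_pos hc hw
  have d' := sig_den_pos hc hw'
  rw [sig, sig, div_lt_div_iff₀ d d', mul_assoc, mul_assoc]
  refine mul_lt_mul_of_pos_left ?_ hc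
  rcases le_or_gt 0 w with h0 | h0
  · rw [abs_of_nonneg h0, abs_of_nonneg (h0.trans h.le)]; nlinarith
  rcases le_or_gt 0 w' with h1 | h1
  · have := mul_neg_of_neg_of_pos h0 d'
    have := mul_nonneg h1 d.le
    linarith
  · rw [abs_of_neg h0, abs_of_neg h1]; nlinarith

lemma abs_sig {c w : ℝ} (hc : 0 < c) (hw : |w| ≤ 1) : |sig c w| = sig c |w| := by
  rw [sig, sig, abs_div, abs_mul, abs_of_pos hc, abs_of_pos (sig_den_pos hc hw), abs_abs]

lemma sig_one {c : ℝ} (hc : 0 < c) : sig c 1 = 1 := by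
  simp [sig, hc.ne']

lemma sig_neg_one {c : ℝ} (hc : 0 < c) : sig c (-1) = -1 := by
  simp [sig, hc.ne']

lemma sig_inv {c w : ℝ} (hc : 0 < c) (hw : |w| ≤ 1) : sig c⁻¹ (sig c w) = w := by
  have d := sig_den_pos hc hw
  have e : 1 + (c⁻¹ - 1) * |sig c w| = (1 + (c - 1) * |w|)⁻¹ := by
    rw [abs_sig hc hw, sig, abs_abs]
    have := d.ne'
    apply eq_inv_of_mul_eq_one_left
    rw [add_mul, mul_assoc, div_mul_cancel₀ _ this, one_mul]
    have : c⁻¹ * c = 1 := inv_mul_cancel₀ hc.ne'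
    linear_combination |w| * this
  rw [sig, e, sig]
  field_simp

lemma sig_mem {c : ℝ} (hc : 0 < c) {w : ℝ} (h1 : -1 ≤ w) (h2 : w < 1) :
    -1 ≤ sig c w ∧ sig c w < 1 := by
  have hw : |w| ≤ 1 := abs_le.2 ⟨h1, h2.le⟩
  constructor
  · rcases h1.eq_or_lt with rfl | h
    · rw [sig_neg_one hc]
    · have := sig_strictMono hc (by simp) hw h
      rw [sig_neg_one hc] at this
      exact this.le
  · have := sig_strictMono hc hw (by simp) h2
    rwa [sig_one hc] at this

lemma sig_continuousAt {c s : ℝ} (hc : 0 < c) (hs : |s| ≤ 1) : ContinuousAt (sig c) s := by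
  unfold sig
  exact ContinuousAt.div (by fun_prop) (by fun_prop) (ne_of_gt (sig_den_pos hc hs))

/-- The map of `ℝ` acting on every `[n, n + 1]` as `sig c` on `[-1, 1]`. -/
def phi (c x : ℝ) : ℝ := ⌊x⌋ + (1 + sig c (2 * Int.fract x - 1)) / 2

lemma phi_mem {c : ℝ} (hc : 0 < c) (x : ℝ) :
    -1 ≤ sig c (2 * Int.fract x - 1) ∧ sig c (2 * Int.fract x - 1) < 1 :=
  sig_mem hc (by linarith [Int.fract_nonneg x]) (by linarith [Int.fract_lt_one x])

lemma floor_phi {c : ℝ} (hc : 0 < c) (x : ℝ) : ⌊phi c x⌋ = ⌊x⌋ := by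
  obtain ⟨h1, h2⟩ := phi_mem hc x
  rw [phi, Int.floor_intCast_add, add_eq_left, Int.floor_eq_zero_iff]
  constructor <;> linarith

lemma fract_phi {c : ℝ} (hc : 0 < c) (x : ℝ) :
    2 * Int.fract (phi c x) - 1 = sig c (2 * Int.fract x - 1) := by
  rw [Int.fract, floor_phi hc, phi]
  ring

lemma abs_two_fract (x : ℝ) : |2 * Int.fract x - 1| ≤ 1 := saw_le_one x

lemma saw_phi {c : ℝ} (hc : 0 < c) (x : ℝ) : saw (phi c x) = sig c (saw x) := by
  rw [saw, fract_phi hc, abs_sig hc (abs_two_fract x), saw]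

lemma phi_inv {c : ℝ} (hc : 0 < c) (x : ℝ) : phi c⁻¹ (phi c x) = x := by
  rw [phi, floor_phi hc, fract_phi hc, sig_inv hc (abs_two_fract x)]
  rw [show (1 + (2 * Int.fract x - 1)) / 2 = Int.fract x by ring, Int.floor_add_fract]

lemma phi_zero {c : ℝ} (hc : 0 < c) : phi c 0 = 0 := by
  simp [phi, sig_neg_one hc]

lemma phi_strictMono {c : ℝ} (hc : 0 < c) : StrictMono (phi c) := by
  intro x y h
  rcases (Int.floor_mono h.le).lt_or_eq with hf | hf
  · have h1 : phi c x < ⌊x⌋ + 1 := by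
      rw [← floor_phi hc x]; exact Int.lt_floor_add_one _
    have h2 : (⌊y⌋ : ℝ) ≤ phi c y := by
      rw [← floor_phi hc y]; exact Int.floor_le _
    have h3 : (⌊x⌋ : ℝ) + 1 ≤ ⌊y⌋ := by exact_mod_cast hf
    linarith
  · have : Int.fract x < Int.fract y := by
      rw [Int.fract, Int.fract, hf]; linarith
    have := sig_strictMono hc (abs_two_fract x) (abs_two_fract y) (by linarith)
    rw [phi, phi, hf]
    linarith

/-- `phi c` as a homeomorphism, with inverse `phi c⁻¹`. -/
def phiHomeo {c : ℝ} (hc : 0 < c) : ℝ ≃ₜ ℝ :=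
  OrderIso.toHomeomorph
    { toFun := phi c
      invFun := phi c⁻¹
      left_inv := phi_inv hc
      right_inv := fun x => by simpa using phi_inv (inv_pos.2 hc) x
      map_rel_iff' := (phi_strictMono hc).le_iff_le }

/-- The sawtooth symmetries act transitively on the levels in `(0, 1)`. -/
lemma exists_sig_eq {s t : ℝ} (hs : s ∈ Ioo (0 : ℝ) 1) (ht : t ∈ Ioo (0 : ℝ) 1) :
    ∃ c, 0 < c ∧ sig c s = t := by
  obtain ⟨h1, h2⟩ := hs
  obtain ⟨h3, h4⟩ := ht
  have a1 : 0 < 1 - s := by linarith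
  have a2 : 0 < 1 - t := by linarith
  refine ⟨t * (1 - s) / (s * (1 - t)), by positivity, ?_⟩
  have : 1 + (t * (1 - s) / (s * (1 - t)) - 1) * s = (1 - s) / (1 - t) := by
    field_simp
    ring
  rw [sig, abs_of_pos h1, this]
  field_simp

/-- If a family of filters is carried along by every `phi c`, its modified topologies are all
homeomorphic. -/
lemma homeomorph_family (F : ℝ → Filter ℝ)
    (hF : ∀ c, 0 < c → ∀ s ∈ Ioo (0 : ℝ) 1, Tendsto (phi c) (F s) (F (sig c s)))
    {s t : ℝ} (hs : s ∈ Ioo (0 : ℝ) 1) (ht : t ∈ Ioo (0 : ℝ) 1) :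
    Nonempty (@Homeomorph ℝ ℝ (tau (F s)) (tau (F t))) := by
  obtain ⟨c, hc, rfl⟩ := exists_sig_eq hs ht
  refine homeomorph_tau (phiHomeo hc) (phi_zero hc) (hF c hc s hs) ?_
  have := hF c⁻¹ (inv_pos.2 hc) _ ht
  rwa [sig_inv hc (abs_le.2 ⟨by linarith [hs.1], hs.2.le⟩)] at this

/-! ### Filters attached to a level of the sawtooth -/

lemma mem_cocompact_tail {S : Set ℝ} (hS : S ∈ cocompact ℝ) : ∃ R : ℝ, ∀ x, R < |x| → x ∈ S := by
  obtain ⟨K, hK, hKS⟩ := mem_cocompact.1 hS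
  obtain ⟨R, hR⟩ := hK.isBounded.exists_norm_le
  refine ⟨R, fun x hx => hKS fun hxK => ?_⟩
  have := hR x hxK
  rw [Real.norm_eq_abs] at this
  linarith

lemma tail_mem_cocompact (R : ℝ) : {x : ℝ | R < |x|} ∈ cocompact ℝ := by
  refine mem_of_superset (isCompact_closedBall (0 : ℝ) R).compl_mem_cocompact fun x hx => ?_
  simpa using hx

lemma isOpen_tail (R : ℝ) : IsOpen {x : ℝ | R < |x|} := isOpen_lt continuous_const continuous_abs

/-- `F` consists of sets which near infinity look like the sublevel set of `saw` at `s`, up to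
the behaviour infinitesimally close to the level `s` itself. -/
structure Good (s : ℝ) (F : Filter ℝ) : Prop where
  le_cocompact : F ≤ cocompact ℝ
  openBase : OpenBase F
  tail : ∀ S ∈ F, ∃ R : ℝ, ∀ x, R < |x| → saw x < s → x ∈ S
  upper : ∀ r, s < r → {x | saw x < r} ∈ F

lemma lt_abs_pt (n : ℕ) {v : ℝ} (hv : 0 ≤ v) : (n : ℝ) < pt n v ∧ (n : ℝ) < |pt n v| := by
  have : (n : ℝ) < pt n v := by rw [pt]; push_cast; linarith
  exact ⟨this, this.trans_le (le_abs_self _)⟩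

/-- Topologies with different levels are comparable, whatever happens at the levels themselves:
the higher level gives the coarser topology. -/
lemma Good.coarser {s t : ℝ} {F G : Filter ℝ} (hF : Good s F) (hG : Good t G) (h : s < t) :
    Coarser (tau G) (tau F) := by
  refine coarser_tau fun S hS => ?_
  obtain ⟨R, hR⟩ := hG.tail S hS
  exact mem_of_superset (inter_mem (hF.le_cocompact (tail_mem_cocompact R)) (hF.upper t h))
    fun x hx => hR x hx.1 hx.2

lemma Good.ne {s t : ℝ} {F G : Filter ℝ} (hF : Good s F) (hG : Good t G) (h : s < t)
    (hs : 0 < s) (ht : t < 1) : tau G ≠ tau F := by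
  intro he
  -- a set that sees the levels up to `(s + t) / 2` only
  set U : Set ℝ := {x | saw x < (s + t) / 2} ∪ {x | |x| < 1} with hU
  have hUo : IsOpen U := (isOpen_lt continuous_saw continuous_const).union
    (isOpen_lt continuous_abs continuous_const)
  have h0 : (0 : ℝ) ∈ U := Or.inr (by simp)
  have hUF : IsOpen[tau F] U :=
    ⟨hUo, fun _ => mem_of_superset (hF.upper _ (by linarith)) subset_union_left⟩
  rw [← he] at hUF
  obtain ⟨R, hR⟩ := hG.tail U (hUF.2 h0)
  obtain ⟨n, hn⟩ := exists_nat_gt (max R 1)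
  have hn1 := (le_max_left _ _).trans_lt hn
  have hn2 := (le_max_right _ _).trans_lt hn
  have hv : (0 : ℝ) ≤ (s + t) / 2 := by linarith
  have hp := (lt_abs_pt n hv).2
  have hsaw := saw_pt n hv (by linarith)
  rcases hR (pt n ((s + t) / 2)) (hn1.trans hp) (by rw [hsaw]; linarith) with h1 | h1
  · simp only [mem_ofPred_eq, hsaw, lt_irrefl] at h1
  · simp only [mem_ofPred_eq] at h1
    linarith

/-- The open sublevel set `{saw < t}` together with those points of the level `t` lying in `P`. -/
def lev (P : Set ℝ) (t : ℝ) : Set ℝ := {x | saw x < t ∨ (saw x = t ∧ x ∈ P)}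

/-- Euclidean neighbourhoods of `lev P t`, restricted to neighbourhoods of infinity. -/
def levFilter (P : Set ℝ) (t : ℝ) : Filter ℝ := cocompact ℝ ⊓ 𝓝ˢ (lev P t)

lemma mem_levFilter {P : Set ℝ} {t : ℝ} {S : Set ℝ} :
    S ∈ levFilter P t ↔ ∃ R : ℝ, ∃ W, IsOpen W ∧ lev P t ⊆ W ∧ {x | R < |x|} ∩ W ⊆ S := by
  rw [levFilter, mem_inf_iff_superset]
  constructor
  · rintro ⟨A, hA, B, hB, h⟩
    obtain ⟨R, hR⟩ := mem_cocompact_tail hA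
    obtain ⟨W, hW, hEW, hWB⟩ := mem_nhdsSet_iff_exists.1 hB
    exact ⟨R, W, hW, hEW, fun x hx => h ⟨hR x hx.1, hWB hx.2⟩⟩
  · rintro ⟨R, W, hW, hEW, h⟩
    exact ⟨_, tail_mem_cocompact R, W, hW.mem_nhdsSet.2 hEW, h⟩

lemma good_levFilter (P : Set ℝ) (t : ℝ) : Good t (levFilter P t) where
  le_cocompact := inf_le_left
  openBase S hS := by
    obtain ⟨R, W, hW, hEW, h⟩ := mem_levFilter.1 hS
    exact ⟨_, h, (isOpen_tail R).inter hW, mem_levFilter.2 ⟨R, W, hW, hEW, Subset.rfl⟩⟩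
  tail S hS := by
    obtain ⟨R, W, hW, hEW, h⟩ := mem_levFilter.1 hS
    exact ⟨R, fun x hx hs => h ⟨hx, hEW (Or.inl hs)⟩⟩
  upper r hr := mem_levFilter.2 ⟨0, _, isOpen_lt continuous_saw continuous_const,
    fun x hx => by
      rcases hx with hx | hx
      · exact lt_trans hx hr
      · exact hx.1.trans_lt hr, inter_subset_right⟩

lemma tendsto_phi_levFilter {P : Set ℝ} (hP : ∀ c, 0 < c → ∀ x ∈ P, phi c x ∈ P) (c : ℝ)
    (hc : 0 < c) (s : ℝ) (hs : s ∈ Ioo (0 : ℝ) 1) :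
    Tendsto (phi c) (levFilter P s) (levFilter P (sig c s)) := by
  refine Tendsto.inf (phiHomeo hc).isClosedEmbedding.tendsto_cocompact ?_
  refine Continuous.tendsto_nhdsSet (phiHomeo hc).continuous ?_
  have hs1 : |s| ≤ 1 := abs_le.2 ⟨by linarith [hs.1], hs.2.le⟩
  rintro x (hx | hx)
  · refine Or.inl ?_
    rw [saw_phi hc]
    exact sig_strictMono hc (by rw [abs_of_nonneg (saw_nonneg x)]; exact saw_le_one x) hs1 hx
  · refine Or.inr ⟨?_, hP c hc x hx.2⟩
    rw [saw_phi hc, hx.1]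

/-- If positive points of the level `t` are left out, the closed neighbourhoods of `0` always
contain some of them, although some neighbourhood does not. -/
lemma not_regular_lev {P : Set ℝ} (hP : ∀ x ∈ P, x < 0) {t : ℝ} (ht : t ∈ Ioo (0 : ℝ) 1) :
    ¬ @RegularSpace ℝ (tau (levFilter P t)) := by
  intro hreg
  have hgood := good_levFilter P t
  set U : Set ℝ := {x | saw x < t} ∪ Iio 1 with hU
  have hUo : IsOpen U := (isOpen_lt continuous_saw continuous_const).union isOpen_Iio
  have hUn : U ∈ @nhds ℝ (tau (levFilter P t)) 0 := by
    rw [nhds_tau_zero hgood.openBase]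
    refine ⟨hUo.mem_nhds (Or.inr (by simp)), mem_levFilter.2 ⟨0, U, hUo, ?_, inter_subset_right⟩⟩
    rintro x (hx | hx)
    · exact Or.inl hx
    · exact Or.inr ((hP x hx.2).trans one_pos)
  obtain ⟨C, hC, hCc, hCU⟩ :=
    @exists_mem_nhds_isClosed_subset ℝ (tau (levFilter P t)) hreg 0 U hUn
  have hCE : IsClosed C := ⟨((@isOpen_compl_iff _ _ (tau (levFilter P t))).2 hCc).1⟩
  rw [nhds_tau_zero hgood.openBase] at hC
  obtain ⟨R, hR⟩ := hgood.tail C hC.2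
  obtain ⟨n, hn⟩ := exists_nat_gt (max R 1)
  have hn1 := (le_max_left _ _).trans_lt hn
  have hn2 := (le_max_right _ _).trans_lt hn
  have hmem : pt n t ∈ C := by
    refine hCE.mem_of_tendsto ((continuous_pt n).continuousAt.tendsto.mono_left
      (nhdsWithin_le_nhds (s := Iio t))) ?_
    filter_upwards [self_mem_nhdsWithin, mem_nhdsWithin_of_mem_nhds (Ioi_mem_nhds ht.1)]
      with v hv hv0
    have hv : v < t := hv
    have hv0 : 0 < v := hv0
    exact hR _ (hn1.trans (lt_abs_pt n hv0.le).2) (by rwa [saw_pt n hv0.le (hv.trans ht.2)])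
  rcases hCU hmem with h | h
  · simp only [mem_ofPred_eq, saw_pt n ht.1.le ht.2, lt_irrefl] at h
  · have := (lt_abs_pt n ht.1.le).1
    have h : pt n t < 1 := h
    linarith

/-- If all negative points of the level `t` are included, a diagonal argument excludes a
countable neighbourhood base at `0`: every candidate `U k` contains a point `y k < -k` above the
level `t`, and the complement of `{y k}` is a neighbourhood of `0`. -/
lemma not_firstCountable_lev {P : Set ℝ} (hP : ∀ x < 0, x ∈ P) {t : ℝ}
    (ht : t ∈ Ioo (0 : ℝ) 1) : ¬ @FirstCountableTopology ℝ (tau (levFilter P t)) := by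
  intro hfc
  have hgood := good_levFilter P t
  have hcg := hfc.nhds_generated_countable 0
  obtain ⟨U, hU⟩ := (@nhds ℝ (tau (levFilter P t)) 0).exists_antitone_basis
  have hex : ∀ k : ℕ, ∃ y : ℝ, y < -k ∧ t < saw y ∧ y ∈ U k := by
    intro k
    have hk := hU.1.mem_of_mem (i := k) trivial
    rw [nhds_tau_zero hgood.openBase] at hk
    obtain ⟨R, W, hW, hEW, h⟩ := mem_levFilter.1 hk.2
    obtain ⟨n, hn⟩ := exists_nat_gt (max R k)
    have hn1 := (le_max_left _ _).trans_lt hn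
    have hn2 := (le_max_right _ _).trans_lt hn
    have hneg : ∀ v : ℝ, v < 1 → pt (-n - 1) v < -n := by
      intro v hv
      rw [pt]; push_cast; linarith
    have hn0 : (0 : ℝ) ≤ n := n.cast_nonneg
    have hx : pt (-n - 1) t ∈ W := hEW (Or.inr ⟨saw_pt _ ht.1.le ht.2,
      hP _ ((hneg t ht.2).trans_le (by linarith))⟩)
    have hev : ∀ᶠ v in 𝓝[>] t, pt (-n - 1) v ∈ W :=
      ((continuous_pt _).continuousAt.tendsto.mono_left nhdsWithin_le_nhds) (hW.mem_nhds hx)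
    obtain ⟨v, ⟨hvW, hvt⟩, hv1⟩ := ((hev.and self_mem_nhdsWithin).and
      (mem_nhdsWithin_of_mem_nhds (Iio_mem_nhds ht.2))).exists
    have hvt : t < v := hvt
    have hv1 : v < 1 := hv1
    have hlt := hneg v hv1
    refine ⟨pt (-n - 1) v, by linarith, ?_, h ⟨?_, hvW⟩⟩
    · rwa [saw_pt _ (ht.1.trans hvt).le hv1]
    · change R < |_|
      have := neg_le_abs (pt (-n - 1) v)
      linarith
  choose y hy1 hy2 hy3 using hex
  have hclosed : IsClosed (range y) := by
    have hp : IsProperMap y := by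
      rw [isProperMap_iff_tendsto_cocompact]
      refine ⟨continuous_of_discreteTopology, ?_⟩
      rw [cocompact_eq_cofinite, Nat.cofinite_eq_atTop]
      have h1 : Tendsto y atTop atBot :=
        tendsto_atBot_mono (fun k => (hy1 k).le)
          (tendsto_neg_atTop_atBot.comp tendsto_natCast_atTop_atTop)
      exact h1.mono_right atBot_le_cocompact
    exact hp.isClosedMap.isClosed_range
  have hV : (range y)ᶜ ∈ @nhds ℝ (tau (levFilter P t)) 0 := by
    rw [nhds_tau_zero hgood.openBase]
    refine ⟨hclosed.isOpen_compl.mem_nhds ?_,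
      mem_levFilter.2 ⟨0, _, hclosed.isOpen_compl, ?_, inter_subset_right⟩⟩
    · rintro ⟨k, hk⟩
      have := hy1 k
      have hk0 : (0 : ℝ) ≤ k := k.cast_nonneg
      linarith
    · rintro x hx ⟨k, rfl⟩
      have := hy2 k
      rcases hx with hx | hx
      · exact lt_asymm this hx
      · exact this.ne' hx.1
  obtain ⟨k, -, hk⟩ := hU.1.mem_iff.1 hV
  exact hk (hy3 k) ⟨k, rfl⟩

lemma secondCountable_lev (t : ℝ) : @SecondCountableTopology ℝ (tau (levFilter ∅ t)) := by
  have hlev : lev ∅ t = {x | saw x < t} := by simp [lev]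
  have ho : IsOpen {x | saw x < t} := isOpen_lt continuous_saw continuous_const
  obtain ⟨b, hbc, -, hb⟩ := TopologicalSpace.exists_countable_basis ℝ
  let B : ℕ → Set ℝ := fun n =>
    {x | |x| < 1 / ((n : ℝ) + 1)} ∪ ({x | (n : ℝ) < |x|} ∩ {x | saw x < t})
  have hBo : ∀ n, IsOpen (B n) := fun n =>
    (isOpen_lt continuous_abs continuous_const).union ((isOpen_tail n).inter ho)
  have hB0 : ∀ n, (0 : ℝ) ∈ B n := fun n => Or.inl (by simp; positivity)
  refine @TopologicalSpace.IsTopologicalBasis.secondCountableTopology ℝ (tau (levFilter ∅ t))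
    ((fun u => u ∩ {0}ᶜ) '' b ∪ range B) ?_ ((hbc.image _).union (countable_range B))
  refine @TopologicalSpace.isTopologicalBasis_of_isOpen_of_nhds ℝ (tau (levFilter ∅ t)) _ ?_ ?_
  · rintro _ (⟨u, hu, rfl⟩ | ⟨n, rfl⟩)
    · exact isOpen_tau_of_not_mem ((hb.isOpen hu).inter isOpen_compl_singleton) (by simp)
    · exact ⟨hBo n, fun _ => mem_levFilter.2 ⟨n, _, ho, hlev.le, subset_union_right⟩⟩
  · intro a u ha hu
    rcases eq_or_ne a 0 with rfl | h
    · obtain ⟨R, W, hW, hEW, hS⟩ := mem_levFilter.1 (hu.2 ha)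
      obtain ⟨ε, hε, hεu⟩ := Metric.isOpen_iff.1 hu.1 0 ha
      obtain ⟨n, hn⟩ := exists_nat_gt (max R (1 / ε))
      have hn1 := (le_max_left _ _).trans_lt hn
      have hn2 := (le_max_right _ _).trans_lt hn
      refine ⟨B n, Or.inr ⟨n, rfl⟩, hB0 n, ?_⟩
      rintro x (hx | hx)
      · refine hεu ?_
        have hx : |x| < 1 / ((n : ℝ) + 1) := hx
        rw [Metric.mem_ball, Real.dist_eq, sub_zero]
        refine hx.trans ?_
        rw [div_lt_comm₀ (by positivity) hε]
        linarith
      · exact hS ⟨hn1.trans hx.1, hEW (hlev ▸ hx.2)⟩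
    · obtain ⟨v, hv, hav, hvu⟩ := hb.exists_subset_of_mem_open ha hu.1
      exact ⟨v ∩ {0}ᶜ, Or.inl ⟨v, hv, rfl⟩, ⟨hav, h⟩, inter_subset_left.trans hvu⟩

/-! ### Complete normality -/

/-- Separated sets have disjoint Euclidean open neighbourhoods. If one of them contains `0`, a
closed neighbourhood of `0` missing the other one, which exists because `F` has a base of closed
sets, turns these into open sets of the modified topology. -/
lemma completelyNormal_tau {F : Filter ℝ} (hF : OpenBase F)
    (hc : ∀ S ∈ F, ∃ C ⊆ S, IsClosed C ∧ C ∈ F) : @CompletelyNormalSpace ℝ (tau F) := by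
  have hcl : ∀ A : Set ℝ, closure A ⊆ @closure ℝ (tau F) A := fun A =>
    closure_minimal (@subset_closure ℝ (tau F) A)
      ⟨((@isOpen_compl_iff _ _ (tau F)).2 (@isClosed_closure ℝ (tau F) A)).1⟩
  have sep : ∀ A B : Set ℝ, Disjoint (@closure ℝ (tau F) A) B → Disjoint A (@closure ℝ (tau F) B) →
      ∃ U V : Set ℝ, IsOpen U ∧ IsOpen V ∧ A ⊆ U ∧ B ⊆ V ∧ Disjoint U V := fun A B h h' =>
    separatedNhds_iff_disjoint.2 (CompletelyNormalSpace.completely_normal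
      (h.mono_left (hcl A)) (h'.mono_right (hcl B)))
  have sepZero : ∀ A B : Set ℝ, (0 : ℝ) ∈ A → Disjoint (@closure ℝ (tau F) A) B →
      Disjoint A (@closure ℝ (tau F) B) →
      ∃ U V : Set ℝ, IsOpen[tau F] U ∧ IsOpen[tau F] V ∧ A ⊆ U ∧ B ⊆ V ∧ Disjoint U V := by
    intro A B h0 h h'
    obtain ⟨U, V, hU, hV, hAU, hBV, hUV⟩ := sep A B h h'
    have hO : IsOpen[tau F] (@closure ℝ (tau F) B)ᶜ :=
      (@isOpen_compl_iff _ _ (tau F)).2 (@isClosed_closure ℝ (tau F) B)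
    have h0O : (0 : ℝ) ∈ (@closure ℝ (tau F) B)ᶜ := fun hB => disjoint_left.1 h' h0 hB
    obtain ⟨C, hCO, hC, hCF⟩ := hc _ (hO.2 h0O)
    obtain ⟨δ, hδ, hδO⟩ := Metric.nhds_basis_closedBall.mem_iff.1 (hO.1.mem_nhds h0O)
    -- a closed neighbourhood of `0` missing `B`
    set T : Set ℝ := C ∪ Metric.closedBall 0 δ with hT
    have hTc : IsClosed T := hC.union Metric.isClosed_closedBall
    have hTn : T ∈ @nhds ℝ (tau F) 0 := by
      rw [nhds_tau_zero hF]
      exact ⟨mem_of_superset (Metric.closedBall_mem_nhds 0 hδ) subset_union_right,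
        mem_of_superset hCF subset_union_left⟩
    have hTB : ∀ x ∈ B, x ∉ T := fun x hx hxT =>
      (union_subset hCO hδO hxT) (@subset_closure ℝ (tau F) B x hx)
    obtain ⟨I, hIT, hI, h0I⟩ := (@mem_nhds_iff ℝ (tau F) _ _).1 hTn
    refine ⟨I ∪ (U ∩ {0}ᶜ), V ∩ Tᶜ, @IsOpen.union ℝ _ _ (tau F) hI
        (isOpen_tau_of_not_mem (hU.inter isOpen_compl_singleton) (by simp)),
      isOpen_tau_of_not_mem (hV.inter hTc.isOpen_compl) fun hz => hz.2 (hIT h0I), ?_,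
      fun x hx => ⟨hBV hx, hTB x hx⟩, ?_⟩
    · intro x hx
      rcases eq_or_ne x 0 with rfl | hne
      · exact Or.inl h0I
      · exact Or.inr ⟨hAU hx, hne⟩
    · rw [disjoint_left]
      rintro x (hx | hx) hx'
      · exact hx'.2 (hIT hx)
      · exact disjoint_left.1 hUV hx.1 hx'.1
  refine @CompletelyNormalSpace.mk ℝ (tau F) ?_
  intro A B h h'
  rw [← @separatedNhds_iff_disjoint ℝ (tau F)]
  by_cases hA : (0 : ℝ) ∈ A
  · exact sepZero A B hA h h'
  by_cases hB : (0 : ℝ) ∈ B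
  · obtain ⟨U, V, hU, hV, hAU, hBV, hUV⟩ := sepZero B A hB h'.symm h.symm
    exact ⟨V, U, hV, hU, hBV, hAU, hUV.symm⟩
  obtain ⟨U, V, hU, hV, hAU, hBV, hUV⟩ := sep A B h h'
  exact ⟨U ∩ {0}ᶜ, V ∩ {0}ᶜ,
    isOpen_tau_of_not_mem (hU.inter isOpen_compl_singleton) (by simp),
    isOpen_tau_of_not_mem (hV.inter isOpen_compl_singleton) (by simp),
    fun x hx => ⟨hAU hx, fun hx0 => hA (hx0 ▸ hx)⟩, fun x hx => ⟨hBV hx, fun hx0 => hB (hx0 ▸ hx)⟩,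
    hUV.mono inter_subset_left inter_subset_left⟩

lemma completelyNormal_lev (t : ℝ) : @CompletelyNormalSpace ℝ (tau (levFilter univ t)) := by
  refine completelyNormal_tau (good_levFilter _ t).openBase fun S hS => ?_
  obtain ⟨R, W, hW, hEW, h⟩ := mem_levFilter.1 hS
  have hE : IsClosed (lev univ t) := by
    have : lev univ t = {x | saw x ≤ t} := by
      ext x
      simp [lev, le_iff_lt_or_eq]
    rw [this]
    exact isClosed_le continuous_saw continuous_const
  obtain ⟨u, hu, hEu, huW⟩ := normal_exists_closure_subset hE hW hEW
  refine ⟨{x | R + 1 ≤ |x|} ∩ closure u, ?_,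
    (isClosed_le continuous_const continuous_abs).inter isClosed_closure, ?_⟩
  · rintro x ⟨hx, hxu⟩
    have hx : R + 1 ≤ |x| := hx
    exact h ⟨by change R < |x|; linarith, huW hxu⟩
  · refine mem_levFilter.2 ⟨R + 1, u, hu, hEu, ?_⟩
    rintro x ⟨hx, hxu⟩
    exact ⟨show R + 1 ≤ |x| from le_of_lt hx, subset_closure hxu⟩

/-! ### Completely metrizable members -/

/-- Sets containing, near infinity, `{saw < r}` for some `r > s`. -/
def uniFilter (s : ℝ) : Filter ℝ := cocompact ℝ ⊓ comap (fun x => max (saw x) s) (𝓝 s)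

lemma mem_uniFilter {s : ℝ} {S : Set ℝ} :
    S ∈ uniFilter s ↔ ∃ R r : ℝ, s < r ∧ ∀ x, R < |x| → saw x < r → x ∈ S := by
  rw [uniFilter, mem_inf_iff_superset]
  constructor
  · rintro ⟨A, hA, B, ⟨D, hD, hDB⟩, h⟩
    obtain ⟨R, hR⟩ := mem_cocompact_tail hA
    obtain ⟨ε, hε, hεD⟩ := Metric.mem_nhds_iff.1 hD
    refine ⟨R, s + ε, by linarith, fun x hx hs => h ⟨hR x hx, hDB (hεD ?_)⟩⟩
    rw [Metric.mem_ball, Real.dist_eq, abs_of_nonneg (by linarith [le_max_right (saw x) s])]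
    have : max (saw x) s < s + ε := max_lt hs (by linarith)
    linarith
  · rintro ⟨R, r, hr, h⟩
    exact ⟨_, tail_mem_cocompact R, _, preimage_mem_comap (Iio_mem_nhds hr),
      fun x hx => h x hx.1 ((le_max_left _ _).trans_lt hx.2)⟩

lemma good_uniFilter (s : ℝ) : Good s (uniFilter s) where
  le_cocompact := inf_le_left
  openBase S hS := by
    obtain ⟨R, r, hr, h⟩ := mem_uniFilter.1 hS
    exact ⟨{x | R < |x|} ∩ {x | saw x < r}, fun x hx => h x hx.1 hx.2,
      (isOpen_tail R).inter (isOpen_lt continuous_saw continuous_const),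
      mem_uniFilter.2 ⟨R, r, hr, fun x h1 h2 => ⟨h1, h2⟩⟩⟩
  tail S hS := by
    obtain ⟨R, r, hr, h⟩ := mem_uniFilter.1 hS
    exact ⟨R, fun x hx hs => h x hx (hs.trans hr)⟩
  upper r hr := mem_uniFilter.2 ⟨0, r, hr, fun x _ h => h⟩

lemma tendsto_phi_uniFilter (c : ℝ) (hc : 0 < c) (s : ℝ) (hs : s ∈ Ioo (0 : ℝ) 1) :
    Tendsto (phi c) (uniFilter s) (uniFilter (sig c s)) := by
  refine Tendsto.inf (phiHomeo hc).isClosedEmbedding.tendsto_cocompact ?_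
  have hs1 : |s| ≤ 1 := abs_le.2 ⟨by linarith [hs.1], hs.2.le⟩
  rw [tendsto_comap_iff]
  have : (fun x => max (saw x) (sig c s)) ∘ phi c = sig c ∘ fun x => max (saw x) s := by
    ext x
    have hx : |saw x| ≤ 1 := by rw [abs_of_nonneg (saw_nonneg x)]; exact saw_le_one x
    simp only [Function.comp, saw_phi hc]
    rcases lt_trichotomy (saw x) s with h | h | h
    · rw [max_eq_right h.le, max_eq_right (sig_strictMono hc hx hs1 h).le]
    · rw [h, max_self, max_self]
    · rw [max_eq_left h.le, max_eq_left (sig_strictMono hc hs1 hx h).le]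
  rw [this]
  exact (sig_continuousAt hc hs1).tendsto.comp tendsto_comap

/-- The cone-like distance given by a height function `h`: the point of height `0` is the apex,
and horizontal distances (truncated at `1`) are scaled by the smaller height. -/
def coneDist (h : ℝ → ℝ) (x y : ℝ) : ℝ := |h x - h y| + min (h x) (h y) * min 1 |x - y|

lemma coneDist_triangle {h : ℝ → ℝ} (hnn : ∀ x, 0 ≤ h x) (x y z : ℝ) :
    coneDist h x z ≤ coneDist h x y + coneDist h y z := by
  unfold coneDist
  have hr : min 1 |x - z| ≤ min 1 |x - y| + min 1 |y - z| := by
    have := abs_sub_le x y z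
    have h1 := abs_nonneg (x - y)
    have h2 := abs_nonneg (y - z)
    rcases min_cases 1 |x - z| with ⟨e1, -⟩ | ⟨e1, -⟩ <;>
    rcases min_cases 1 |x - y| with ⟨e2, -⟩ | ⟨e2, -⟩ <;>
    rcases min_cases 1 |y - z| with ⟨e3, -⟩ | ⟨e3, -⟩ <;> rw [e1, e2, e3] <;>
    linarith [min_le_left 1 |x - z|, min_le_right 1 |x - z|]
  have n1 : 0 ≤ min 1 |x - y| := le_min zero_le_one (abs_nonneg _)
  have n2 : 0 ≤ min 1 |y - z| := le_min zero_le_one (abs_nonneg _)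
  have n3 : min 1 |x - z| ≤ 1 := min_le_left _ _
  generalize min 1 |x - y| = p at *
  generalize min 1 |y - z| = q at *
  generalize min 1 |x - z| = r at *
  have hx := hnn x
  have hy := hnn y
  have hz := hnn z
  generalize h x = a at *
  generalize h y = b at *
  generalize h z = c at *
  have hm : 0 ≤ min a c := le_min hx hz
  rcases le_or_gt (min a c) b with hb | hb
  · -- the intermediate point is at least as high as the lower endpoint
    have h1 : min a c ≤ min a b := le_min (min_le_left _ _) hb
    have h2 : min a c ≤ min b c := le_min hb (min_le_right _ _)
    have := abs_sub_le a b c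
    nlinarith [mul_le_mul_of_nonneg_left hr hm, mul_le_mul_of_nonneg_right h1 n1,
      mul_le_mul_of_nonneg_right h2 n2]
  · -- going down to height `b` and up again costs twice the descent
    obtain ⟨hba, hbc⟩ := lt_min_iff.1 hb
    rw [min_eq_right hba.le, min_eq_left hbc.le, abs_of_pos (sub_pos.2 hba),
      abs_of_neg (sub_neg.2 hbc)]
    have e : |a - c| = a + c - 2 * min a c := by
      rcases le_total a c with h | h
      · rw [min_eq_left h, abs_of_nonpos (by linarith)]; ring
      · rw [min_eq_right h, abs_of_nonneg (by linarith)]; ring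
    rw [e]
    nlinarith [mul_le_mul_of_nonneg_left hr hy,
      mul_nonneg (sub_nonneg.2 hb.le) (sub_nonneg.2 n3)]

lemma coneDist_eq_zero {h : ℝ → ℝ} (hnn : ∀ x, 0 ≤ h x) (hz : ∀ x, h x = 0 → x = 0) {x y : ℝ}
    (he : coneDist h x y = 0) : x = y := by
  have hm : 0 ≤ min (h x) (h y) := le_min (hnn x) (hnn y)
  have hr : 0 ≤ min 1 |x - y| := le_min zero_le_one (abs_nonneg _)
  have h1 := abs_nonneg (h x - h y)
  have h2 := mul_nonneg hm hr
  unfold coneDist at he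
  have e1 : h x = h y := sub_eq_zero.1 (abs_eq_zero.1 (by linarith))
  have e2 : min (h x) (h y) * min 1 |x - y| = 0 := by linarith
  rcases mul_eq_zero.1 e2 with e | e
  · rw [← e1, min_self] at e
    rw [hz x e, hz y (e1 ▸ e)]
  · by_contra hne
    have : 0 < min 1 |x - y| := lt_min one_pos (abs_pos.2 (sub_ne_zero.2 hne))
    exact absurd e (ne_of_gt this)

/-- The metric space structure on `ℝ` with distance `coneDist h`. -/
@[reducible]
def coneMetric (h : ℝ → ℝ) (hnn : ∀ x, 0 ≤ h x) (hz : ∀ x, h x = 0 → x = 0) : MetricSpace ℝ where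
  dist := coneDist h
  dist_self x := by simp [coneDist]
  dist_comm x y := by simp only [coneDist, abs_sub_comm, min_comm (h x)]
  dist_triangle := coneDist_triangle hnn
  eq_of_dist_eq_zero := coneDist_eq_zero hnn hz

/-- Away from the apex, small cone distance forces small Euclidean distance. -/
lemma abs_sub_lt_of_coneDist {h : ℝ → ℝ} {x y m ε : ℝ} (hm : 0 < m) (hx : m ≤ h x) (hy : m ≤ h y)
    (hd : coneDist h x y < m * min 1 ε) : |x - y| < ε := by
  have hr : 0 ≤ min 1 |x - y| := le_min zero_le_one (abs_nonneg _)
  have h1 : m * min 1 |x - y| ≤ coneDist h x y := by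
    unfold coneDist
    have := mul_le_mul_of_nonneg_right (le_min hx hy) hr
    linarith [abs_nonneg (h x - h y)]
  have h2 := lt_of_mul_lt_mul_left (h1.trans_lt hd) hm.le
  by_contra hcon
  exact absurd (min_le_min_left 1 (not_lt.1 hcon)) (not_le.2 h2)

lemma abs_sub_le_coneDist {h : ℝ → ℝ} (hnn : ∀ x, 0 ≤ h x) (x y : ℝ) :
    |h x - h y| ≤ coneDist h x y := by
  have := mul_nonneg (le_min (hnn x) (hnn y)) (le_min zero_le_one (abs_nonneg (x - y)))
  unfold coneDist
  linarith

lemma tendsto_coneDist {h : ℝ → ℝ} (hcont : Continuous h) (x : ℝ) :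
    Tendsto (fun y => coneDist h y x) (𝓝 x) (𝓝 0) := by
  have : Continuous fun y => coneDist h y x := by unfold coneDist; fun_prop
  have h0 := this.tendsto x
  simpa [coneDist] using h0

/-- If the neighbourhoods of `0` are given by a continuous height function vanishing exactly at
`0`, the cone metric is a complete metric for the modified topology. -/
lemma completelyMetrizable_tau {F : Filter ℝ} {h : ℝ → ℝ} (hcont : Continuous h)
    (hnn : ∀ x, 0 ≤ h x) (hz : ∀ x, h x = 0 → x = 0) (h0 : h 0 = 0)
    (hF : @nhds ℝ (tau F) 0 = comap h (𝓝 0)) : CompletelyMetrizable (tau F) := by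
  have hd0 : ∀ x, coneDist h x 0 = h x := by
    intro x
    rw [coneDist, h0, sub_zero, abs_of_nonneg (hnn x), min_eq_right (hnn x), zero_mul, add_zero]
  refine ⟨coneMetric h hnn hz, ?_, ?_⟩
  · refine TopologicalSpace.ext_nhds fun x => ?_
    have e : @nhds ℝ (coneMetric h hnn hz).toUniformSpace.toTopologicalSpace x =
        comap (fun y => coneDist h y x) (𝓝 0) :=
      (@nhds_comap_dist ℝ (coneMetric h hnn hz).toPseudoMetricSpace x).symm
    rw [e]
    rcases eq_or_ne x 0 with rfl | hx
    · simp only [hd0, hF]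
    rw [nhds_tau_ne hx]
    refine le_antisymm ?_ (tendsto_coneDist hcont x).le_comap
    have hpos : 0 < h x := (hnn x).lt_of_ne fun hh => hx (hz x hh.symm)
    refine Metric.nhds_basis_ball.ge_iff.2 fun ε hε => ?_
    have hm : 0 < min 1 ε := lt_min one_pos hε
    refine ⟨Iio (min (h x / 2) (h x / 2 * min 1 ε)), Iio_mem_nhds (by positivity), fun y hy => ?_⟩
    have hy : coneDist h y x < min (h x / 2) (h x / 2 * min 1 ε) := hy
    have hy1 := hy.trans_le (min_le_left _ _)
    have hy2 := hy.trans_le (min_le_right _ _)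
    have := abs_lt.1 ((abs_sub_le_coneDist hnn y x).trans_lt hy1)
    exact abs_sub_lt_of_coneDist (half_pos hpos) (by linarith) (by linarith) hy2
  · refine @Metric.complete_of_cauchySeq_tendsto ℝ (coneMetric h hnn hz).toPseudoMetricSpace ?_
    intro u hu
    have hu' := (@Metric.cauchySeq_iff ℝ ℕ (coneMetric h hnn hz).toPseudoMetricSpace _ _ u).1 hu
    have hu' : ∀ ε > 0, ∃ N, ∀ m ≥ N, ∀ n ≥ N, coneDist h (u m) (u n) < ε := hu'
    have hconv : ∀ a, Tendsto (fun n => coneDist h (u n) a) atTop (𝓝 0) →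
        Tendsto u atTop (@nhds ℝ (coneMetric h hnn hz).toUniformSpace.toTopologicalSpace a) :=
      fun a ha => (@tendsto_iff_dist_tendsto_zero ℝ ℕ
        (coneMetric h hnn hz).toPseudoMetricSpace _ _ _).2 ha
    have hcau : CauchySeq (fun n => h (u n)) := by
      refine Metric.cauchySeq_iff.2 fun ε hε => ?_
      obtain ⟨N, hN⟩ := hu' ε hε
      exact ⟨N, fun m hm n hn => (abs_sub_le_coneDist hnn _ _).trans_lt (hN m hm n hn)⟩
    obtain ⟨l, hl⟩ := cauchySeq_tendsto_of_complete hcau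
    have hl0 : 0 ≤ l := ge_of_tendsto' hl fun n => hnn _
    rcases hl0.eq_or_lt with rfl | hlpos
    · exact ⟨0, hconv 0 (by simpa only [hd0] using hl)⟩
    obtain ⟨N₀, hN₀⟩ := eventually_atTop.1 (hl.eventually (lt_mem_nhds (half_lt_self hlpos)))
    have hcu : CauchySeq u := by
      refine Metric.cauchySeq_iff.2 fun ε hε => ?_
      have hm : 0 < min 1 ε := lt_min one_pos hε
      obtain ⟨N, hN⟩ := hu' (l / 2 * min 1 ε) (by positivity)
      refine ⟨max N N₀, fun m hm n hn => ?_⟩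
      exact abs_sub_lt_of_coneDist (half_pos hlpos) (hN₀ m ((le_max_right _ _).trans hm)).le
        (hN₀ n ((le_max_right _ _).trans hn)).le
        (hN m ((le_max_left _ _).trans hm) n ((le_max_left _ _).trans hn))
    obtain ⟨a, ha⟩ := cauchySeq_tendsto_of_complete hcu
    exact ⟨a, hconv a ((tendsto_coneDist hcont a).comp ha)⟩

lemma completelyMetrizable_uni (s : ℝ) : CompletelyMetrizable (tau (uniFilter s)) := by
  -- small either near `0`, or far out at points whose level is not much above `s`
  set h : ℝ → ℝ := fun x => min |x| (1 / (1 + |x|) + (max (saw x) s - s)) with hh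
  have hpos : ∀ x, 0 < 1 / (1 + |x|) + (max (saw x) s - s) := fun x => by
    have : 0 < 1 / (1 + |x|) := by positivity
    linarith [le_max_right (saw x) s]
  refine completelyMetrizable_tau (h := h) ?_ (fun x => le_min (abs_nonneg x) (hpos x).le) ?_ ?_ ?_
  · have := continuous_saw
    refine continuous_abs.min (Continuous.add ?_ (by fun_prop))
    exact continuous_const.div (by fun_prop) fun x => by positivity
  · intro x hx
    rcases min_choice |x| (1 / (1 + |x|) + (max (saw x) s - s)) with e | e
    · exact abs_eq_zero.1 (e ▸ hx)
    · exact absurd (e ▸ hx) (hpos x).ne'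
  · simp only [hh, abs_zero]
    exact min_eq_left (by simpa using (hpos 0).le)
  · rw [nhds_tau_zero (good_uniFilter s).openBase]
    ext S
    rw [mem_sup, mem_comap]
    constructor
    · rintro ⟨h0, hS⟩
      obtain ⟨ε, hε, hεS⟩ := Metric.mem_nhds_iff.1 h0
      obtain ⟨R, r, hr, hRS⟩ := mem_uniFilter.1 hS
      have hR1 : 0 < 1 / (1 + |R|) := by positivity
      refine ⟨Iio (min ε (min (1 / (1 + |R|)) (r - s))),
        Iio_mem_nhds (lt_min hε (lt_min hR1 (by linarith))), fun x hx => ?_⟩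
      have hx : h x < min ε (min (1 / (1 + |R|)) (r - s)) := hx
      have hx1 := hx.trans_le (min_le_left _ _)
      have hx2 := hx.trans_le ((min_le_right _ _).trans (min_le_left _ _))
      have hx3 := hx.trans_le ((min_le_right _ _).trans (min_le_right _ _))
      rcases min_choice |x| (1 / (1 + |x|) + (max (saw x) s - s)) with e | e
      · refine hεS ?_
        rw [Metric.mem_ball, Real.dist_eq, sub_zero]
        simp only [hh, e] at hx1
        exact hx1
      · simp only [hh, e] at hx2 hx3
        have p : 0 < 1 / (1 + |x|) := by positivity
        have q := le_max_right (saw x) s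
        have q' := le_max_left (saw x) s
        refine hRS x ?_ (by linarith)
        have : 1 / (1 + |x|) < 1 / (1 + |R|) := by linarith
        rw [one_div_lt_one_div (by positivity) (by positivity)] at this
        linarith [le_abs_self R]
    · rintro ⟨D, hD, hDS⟩
      obtain ⟨ε, hε, hεD⟩ := Metric.mem_nhds_iff.1 hD
      have key : ∀ x, h x < ε → x ∈ S := fun x hx => hDS (hεD (by
        rw [Metric.mem_ball, Real.dist_eq, sub_zero,
          abs_of_nonneg (le_min (abs_nonneg x) (hpos x).le)]
        exact hx))
      refine ⟨Metric.mem_nhds_iff.2 ⟨ε, hε, fun x hx => key x ?_⟩,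
        mem_uniFilter.2 ⟨2 / ε, s + ε / 2, by linarith, fun x hx hs => key x ?_⟩⟩
      · rw [Metric.mem_ball, Real.dist_eq, sub_zero] at hx
        exact (min_le_left _ _).trans_lt hx
      · refine (min_le_right _ _).trans_lt ?_
        have h1 : 1 / (1 + |x|) < ε / 2 := by
          rw [div_lt_comm₀ (by positivity) (by positivity), one_div_div]
          linarith
        have h2 : max (saw x) s < s + ε / 2 := max_lt hs (by linarith)
        linarith

/-! ### Index sets and assembly -/

/-- A `ℚ`-linear functional on `ℝ` provides disjoint dense fibres of cardinality continuum. -/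
lemma exists_fibres : ∃ f : ℝ → ℚ, (∀ q : ℚ, Cardinal.mk {x | f x = q} = Cardinal.continuum) ∧
    ∀ q : ℚ, ∀ x y : ℝ, x < y → ∃ z, f z = q ∧ x < z ∧ z < y := by
  obtain ⟨f, hf⟩ : ∃ f : Module.Dual ℚ ℝ, f 1 ≠ 0 := by
    by_contra! hcon
    exact one_ne_zero ((Module.forall_dual_apply_eq_zero_iff ℚ (1 : ℝ)).1 hcon)
  obtain ⟨y, hy⟩ : ∃ y : ℝ, f y = 1 :=
    ⟨(f 1)⁻¹ • 1, by rw [map_smul, smul_eq_mul, inv_mul_cancel₀ hf]⟩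
  have hcard : ∀ q : ℚ, Cardinal.mk {x | f x = q} = Cardinal.continuum := by
    intro q
    refine le_antisymm ((Cardinal.mk_set_le _).trans Cardinal.mk_real.le) ?_
    by_contra hlt
    -- the fibre and `ℚ` together parametrize `ℝ`
    let i : ℝ → {x | f x = q} × ℚ := fun x =>
      (⟨x + (q - f x) • y, by simp [hy]⟩, f x)
    have hi : Function.Injective i := by
      intro a b hab
      obtain ⟨h1, h2⟩ := Prod.mk.inj hab
      have h1 := congrArg Subtype.val h1
      simp only [h2] at h1
      exact add_right_cancel h1
    have h1 := Cardinal.mk_le_of_injective hi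
    rw [Cardinal.mk_real, Cardinal.mk_prod, Cardinal.lift_id, Cardinal.lift_id] at h1
    exact absurd h1 (not_le.2 (Cardinal.mul_lt_of_lt Cardinal.aleph0_le_continuum (not_le.1 hlt)
      (by rw [Cardinal.mkRat]; exact Cardinal.aleph0_lt_continuum)))
  refine ⟨f, hcard, fun q a b hab => ?_⟩
  obtain ⟨w, hw, hw0⟩ : ∃ w : ℝ, f w = 0 ∧ 0 < w := by
    have hnt : Nontrivial {x | f x = 0} := by
      rw [← Cardinal.one_lt_iff_nontrivial, hcard 0]
      exact Cardinal.one_lt_aleph0.trans Cardinal.aleph0_lt_continuum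
    obtain ⟨⟨w, hw⟩, hne⟩ := exists_ne (⟨0, by simp⟩ : {x | f x = 0})
    have hw : f w = 0 := hw
    have hne : w ≠ 0 := fun h => hne (Subtype.ext h)
    rcases hne.lt_or_gt with h | h
    · exact ⟨-w, by simp [hw], by linarith⟩
    · exact ⟨w, hw, h⟩
  obtain ⟨r, hr1, hr2⟩ := exists_rat_btwn
    (div_lt_div_of_pos_right (sub_lt_sub_right hab (q • y)) hw0)
  rw [div_lt_iff₀ hw0] at hr1
  rw [lt_div_iff₀ hw0] at hr2
  refine ⟨q • y + r • w, by simp [hy, hw], ?_, ?_⟩ <;>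
  · rw [Rat.smul_def r w]
    linarith

/-- An increasing map of `ℝ` into an interval of length `1 / 2` centred at `m`. -/
def squeeze (m x : ℝ) : ℝ := m + Real.arctan x / (2 * Real.pi)

lemma squeeze_strictMono (m : ℝ) : StrictMono (squeeze m) := fun x y h => by
  have := Real.arctan_strictMono h
  have hp := Real.pi_pos
  unfold squeeze
  gcongr

lemma squeeze_mem (m x : ℝ) : squeeze m x ∈ Ioo (m - 1 / 4) (m + 1 / 4) := by
  have h1 := Real.neg_pi_div_two_lt_arctan x
  have h2 := Real.arctan_lt_pi_div_two x
  have hp := Real.pi_pos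
  have a : -(1 / 4) < Real.arctan x / (2 * Real.pi) := by
    rw [lt_div_iff₀ (by positivity)]; linarith
  have b : Real.arctan x / (2 * Real.pi) < 1 / 4 := by
    rw [div_lt_iff₀ (by positivity)]; linarith
  constructor <;> unfold squeeze <;> linarith

lemma squeeze_three_quarters (x : ℝ) : squeeze (3 / 4) x ∈ Ioo (1 / 2 : ℝ) 1 := by
  have := squeeze_mem (3 / 4) x
  norm_num at this ⊢
  exact this

lemma squeeze_quarter (x : ℝ) : squeeze (1 / 4) x ∈ Ioo (0 : ℝ) (1 / 2) := by
  have := squeeze_mem (1 / 4) x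
  norm_num at this ⊢
  exact this

/-- The topology with level `squeeze (3 / 4) x`, the part `P` of the level set being included. -/
@[reducible]
def levTop (P : Set ℝ) (x : ℝ) : TopologicalSpace ℝ := tau (levFilter P (squeeze (3 / 4) x))

/-- The completely metrizable topology with level `squeeze (1 / 4) x`. -/
@[reducible]
def uniTop (x : ℝ) : TopologicalSpace ℝ := tau (uniFilter (squeeze (1 / 4) x))

lemma mem_Ioo_lev (x : ℝ) : squeeze (3 / 4) x ∈ Ioo (0 : ℝ) 1 :=
  ⟨by linarith [(squeeze_three_quarters x).1], (squeeze_three_quarters x).2⟩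

lemma mem_Ioo_uni (x : ℝ) : squeeze (1 / 4) x ∈ Ioo (0 : ℝ) 1 :=
  ⟨(squeeze_quarter x).1, by linarith [(squeeze_quarter x).2]⟩

lemma levTop_coarser (P Q : Set ℝ) {x y : ℝ} (h : x < y) : Coarser (levTop Q y) (levTop P x) :=
  (good_levFilter P _).coarser (good_levFilter Q _) (squeeze_strictMono _ h)

lemma levTop_ne (P Q : Set ℝ) {x y : ℝ} (h : x < y) : levTop Q y ≠ levTop P x :=
  (good_levFilter P _).ne (good_levFilter Q _) (squeeze_strictMono _ h) (mem_Ioo_lev x).1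
    (mem_Ioo_lev y).2

lemma levTop_injective (P : Set ℝ) : Function.Injective (levTop P) := fun x y h => by
  rcases lt_trichotomy x y with hxy | hxy | hxy
  · exact absurd h.symm (levTop_ne P P hxy)
  · exact hxy
  · exact absurd h (levTop_ne P P hxy)

lemma uniTop_coarser {x y : ℝ} (h : x < y) : Coarser (uniTop y) (uniTop x) :=
  (good_uniFilter _).coarser (good_uniFilter _) (squeeze_strictMono _ h)

lemma uniTop_injective : Function.Injective uniTop := by
  have hne : ∀ x y : ℝ, x < y → uniTop y ≠ uniTop x := fun x y h =>
    (good_uniFilter _).ne (good_uniFilter _) (squeeze_strictMono _ h) (mem_Ioo_uni x).1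
      (mem_Ioo_uni y).2
  intro x y h
  rcases lt_trichotomy x y with hxy | hxy | hxy
  · exact absurd h.symm (hne _ _ hxy)
  · exact hxy
  · exact absurd h (hne _ _ hxy)

/-- The parts of the level set that are included for the first three chains. -/
def part : Fin 3 → Set ℝ := ![∅, Iio 0, univ]

lemma phi_mem_part (i : Fin 3) (c : ℝ) (hc : 0 < c) (x : ℝ) (hx : x ∈ part i) :
    phi c x ∈ part i := by
  fin_cases i
  · exact absurd hx (notMem_empty x)
  · have := phi_strictMono hc (show x < 0 from hx)
    rw [phi_zero hc] at this
    exact this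
  · exact mem_univ _

/-- The `i`-th chain: levels are indexed by the fibre of `f` over `i`. -/
def chain (f : ℝ → ℚ) (i : Fin 3) : Set (TopologicalSpace ℝ) :=
  levTop (part i) '' {x | f x = (i : ℕ)}

lemma mem_union_chain {f : ℝ → ℚ} {τ : TopologicalSpace ℝ} :
    τ ∈ chain f 0 ∪ chain f 1 ∪ chain f 2 ↔ ∃ i, τ ∈ chain f i := by
  simp [Fin.exists_fin_succ, or_assoc]

/-- Members with different indices are comparable whatever their types, while equal indices force
equality because the fibres are disjoint. -/
lemma isChainTop_union (f : ℝ → ℚ) : IsChainTop (chain f 0 ∪ chain f 1 ∪ chain f 2) := by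
  intro τ₁ h₁ τ₂ h₂
  obtain ⟨i, x, hx, rfl⟩ := mem_union_chain.1 h₁
  obtain ⟨j, y, hy, rfl⟩ := mem_union_chain.1 h₂
  rcases lt_trichotomy x y with h | rfl | h
  · exact Or.inr (levTop_coarser _ _ h)
  · have hij : i = j := by
      have : ((i : ℕ) : ℚ) = (j : ℕ) := Eq.trans (Eq.symm hx) hy
      exact Fin.ext (by exact_mod_cast this)
    rw [hij]
    exact Or.inl fun _ hU => hU
  · exact Or.inl (levTop_coarser _ _ h)

lemma denseInChain_chain {f : ℝ → ℚ}
    (hf : ∀ q : ℚ, ∀ x y : ℝ, x < y → ∃ z, f z = q ∧ x < z ∧ z < y) (k : Fin 3) :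
    DenseInChain (chain f k) (chain f 0 ∪ chain f 1 ∪ chain f 2) := by
  intro τ₁ h₁ τ₂ h₂ hle hne
  obtain ⟨i, x, hx, rfl⟩ := mem_union_chain.1 h₁
  obtain ⟨j, y, hy, rfl⟩ := mem_union_chain.1 h₂
  rcases lt_trichotomy x y with h | rfl | h
  · exact absurd (hle.antisymm (levTop_coarser _ _ h)) hne
  · have hij : i = j := by
      have : ((i : ℕ) : ℚ) = (j : ℕ) := Eq.trans (Eq.symm hx) hy
      exact Fin.ext (by exact_mod_cast this)
    exact absurd (by rw [hij]) hne
  · obtain ⟨z, hz, hyz, hzx⟩ := hf (k : ℕ) y x h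
    exact ⟨_, ⟨z, hz, rfl⟩, (levTop_ne _ _ hzx).symm, levTop_ne _ _ hyz, levTop_coarser _ _ hzx,
      levTop_coarser _ _ hyz⟩

lemma homeomorph_chain (f : ℝ → ℚ) (i : Fin 3) :
    ∀ τ ∈ chain f i, ∀ τ' ∈ chain f i, Nonempty (@Homeomorph ℝ ℝ τ τ') := by
  rintro _ ⟨x, -, rfl⟩ _ ⟨y, -, rfl⟩
  exact homeomorph_family _ (tendsto_phi_levFilter (phi_mem_part i)) (mem_Ioo_lev x)
    (mem_Ioo_lev y)

end

/-- four chains 𝒦₀, 𝒦₁, 𝒦₂, 𝒦₃ ⊆ 𝓛₀ of size 𝔠, each consisting of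
mutually homeomorphic topologies, satisfying (i)–(vi). -/
theorem statement_15 :
    ∃ K0 K1 K2 K3 : Set (TopologicalSpace ℝ),
      (∀ τ ∈ K0 ∪ K1 ∪ K2 ∪ K3, InL0 τ) ∧
      IsChainTop K0 ∧ IsChainTop K1 ∧ IsChainTop K2 ∧ IsChainTop K3 ∧
      Cardinal.mk ↥K0 = Cardinal.continuum ∧
      Cardinal.mk ↥K1 = Cardinal.continuum ∧
      Cardinal.mk ↥K2 = Cardinal.continuum ∧
      Cardinal.mk ↥K3 = Cardinal.continuum ∧
      (∀ τ ∈ K0, ∀ τ' ∈ K0, Nonempty (@Homeomorph ℝ ℝ τ τ')) ∧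
      (∀ τ ∈ K1, ∀ τ' ∈ K1, Nonempty (@Homeomorph ℝ ℝ τ τ')) ∧
      (∀ τ ∈ K2, ∀ τ' ∈ K2, Nonempty (@Homeomorph ℝ ℝ τ τ')) ∧
      (∀ τ ∈ K3, ∀ τ' ∈ K3, Nonempty (@Homeomorph ℝ ℝ τ τ')) ∧
      -- (i)
      (∀ τ ∈ K0, @SecondCountableTopology ℝ τ ∧ ¬ @RegularSpace ℝ τ) ∧
      -- (ii)
      (∀ τ ∈ K1, ¬ @RegularSpace ℝ τ ∧ ¬ @FirstCountableTopology ℝ τ) ∧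
      -- (iii)
      (∀ τ ∈ K2, @CompletelyNormalSpace ℝ τ ∧ ¬ @FirstCountableTopology ℝ τ) ∧
      -- (iv)
      (∀ τ ∈ K3, CompletelyMetrizable τ) ∧
      -- (v)
      IsChainTop (K0 ∪ K1 ∪ K2) ∧
      DenseInChain K0 (K0 ∪ K1 ∪ K2) ∧
      DenseInChain K1 (K0 ∪ K1 ∪ K2) ∧
      DenseInChain K2 (K0 ∪ K1 ∪ K2) ∧
      -- (vi)
      (∀ τ ∈ K0 ∪ K1 ∪ K2, ∀ τ' ∈ K3, Coarser τ τ') := by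
  obtain ⟨f, hcard, hdense⟩ := exists_fibres
  have hchain := isChainTop_union f
  have hsub : ∀ i, chain f i ⊆ chain f 0 ∪ chain f 1 ∪ chain f 2 := fun i τ h =>
    mem_union_chain.2 ⟨i, h⟩
  have hmono : ∀ i, IsChainTop (chain f i) := fun i τ₁ h₁ τ₂ h₂ =>
    hchain τ₁ (hsub i h₁) τ₂ (hsub i h₂)
  have hmk : ∀ i, Cardinal.mk (chain f i) = Cardinal.continuum := fun i => by
    rw [chain, Cardinal.mk_image_eq (levTop_injective _), hcard]
  refine ⟨chain f 0, chain f 1, chain f 2, range uniTop, ?_, hmono 0, hmono 1, hmono 2, ?_,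
    hmk 0, hmk 1, hmk 2, ?_, homeomorph_chain f 0, homeomorph_chain f 1, homeomorph_chain f 2,
    ?_, ?_, ?_, ?_, ?_, hchain, denseInChain_chain hdense 0, denseInChain_chain hdense 1,
    denseInChain_chain hdense 2, ?_⟩
  · rintro τ (h | ⟨x, rfl⟩)
    · obtain ⟨i, x, -, rfl⟩ := mem_union_chain.1 h
      exact inL0_tau (good_levFilter _ _).le_cocompact
    · exact inL0_tau (good_uniFilter _).le_cocompact
  · rintro _ ⟨x, rfl⟩ _ ⟨y, rfl⟩
    rcases lt_trichotomy x y with h | rfl | h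
    · exact Or.inr (uniTop_coarser h)
    · exact Or.inl fun _ hU => hU
    · exact Or.inl (uniTop_coarser h)
  · rw [Cardinal.mk_range_eq _ uniTop_injective, Cardinal.mk_real]
  · rintro _ ⟨x, rfl⟩ _ ⟨y, rfl⟩
    exact homeomorph_family _ tendsto_phi_uniFilter (mem_Ioo_uni x) (mem_Ioo_uni y)
  · rintro _ ⟨x, -, rfl⟩
    exact ⟨secondCountable_lev _,
      not_regular_lev (fun y hy => absurd hy (notMem_empty y)) (mem_Ioo_lev x)⟩
  · rintro _ ⟨x, -, rfl⟩
    exact ⟨not_regular_lev (fun y hy => hy) (mem_Ioo_lev x),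
      not_firstCountable_lev (fun y hy => hy) (mem_Ioo_lev x)⟩
  · rintro _ ⟨x, -, rfl⟩
    exact ⟨completelyNormal_lev _, not_firstCountable_lev (fun y _ => mem_univ y) (mem_Ioo_lev x)⟩
  · rintro _ ⟨x, rfl⟩
    exact completelyMetrizable_uni _
  · rintro τ h _ ⟨y, rfl⟩
    obtain ⟨i, x, -, rfl⟩ := mem_union_chain.1 h
    exact (good_uniFilter _).coarser (good_levFilter _ _)
      ((squeeze_quarter y).2.trans (squeeze_three_quarters x).1)
end

section
/- There exists a family 𝒱 ⊆ 𝓛₀ of pairwise distinct topologies with |𝒱| = 2^c such that for each ϑ ∈ 𝒱 no topology from 𝓛 lies strictly between ϑ and η, i.e., there is no τ ∈ 𝓛 with ϑ ⊊ τ ⊊ η. -/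
/-!
Let `P` be an ultrafilter on `ℝ` that converges to `+∞` and contains every dense open set. Declare
a Euclidean open set `U` to be open when `0 ∈ U → U ∈ P`; this gives a topology `thetaTop P` which
agrees with `η` off `0`, and which is Hausdorff because `P` lives at infinity.

It is a lower neighbour of `η`: if `W` is Euclidean open then `W ∪ int Wᶜ` is dense and open, so
`W ∉ P` forces `int Wᶜ ∈ P`. Hence if a topology `τ ⊇ thetaTop P` contains some `W` which is not
`thetaTop P`-open, then for each Euclidean open `U ∋ 0` the set `U ∪ int Wᶜ` is `τ`-open, so
`W ∩ U = W ∩ (U ∪ int Wᶜ)` is `τ`-open, and `U = (U \ {0}) ∪ (W ∩ U)` is `τ`-open too.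

To obtain `2^𝔠` such ultrafilters, take an independent family of `𝔠` subsets of a countable
set (`indepSet`): every `S : Set (Set ℕ)` prescribes which of its members shall be large, and this
prescription is realised by a filter on `ℕ` at infinity (`baseFilter S`). Pulling it back along
`x ↦ ⌊x⌋₊` and adding the residual sets, which meet every interval `(n, n+1)`, yields the
ultrafilters on `ℝ`.
-/

open Topology Set

open Filter

/-! ### An independent family on `ℕ` -/

open scoped Classical in
/-- The trace of `X` on a finite set `s`. -/
noncomputable def trace (X : Set ℕ) (s : Finset ℕ) : Finset ℕ := s.filter (· ∈ X)

/-- A coding by natural numbers of the pairs `(s, F)`, with `F` a finite family of finite sets. -/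
def pairEquiv : Finset ℕ × Finset (Finset ℕ) ≃ ℕ := Denumerable.eqv _

/-- The independent family on the countable set of pairs `(s, F)` coded by `pairEquiv`: the `X`-th
member consists of those `(s, F)` with `X ∩ s ∈ F`. -/
def indepSet (X : Set ℕ) : Set ℕ :=
  {n | trace X (pairEquiv.symm n).1 ∈ (pairEquiv.symm n).2}

open scoped Classical in
/-- The code of the pair `(s, {X ∩ s | X ∈ t ∩ S})`, where `p = (t, s)`. -/
noncomputable def codePair (S : Set (Set ℕ)) (p : Finset (Set ℕ) × Finset ℕ) : ℕ :=
  pairEquiv (p.2, (p.1.filter (· ∈ S)).image (fun X => trace X p.2))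

/-- A filter on `ℕ` containing `indepSet X` for `X ∈ S` and its complement for `X ∉ S`. Currying
matters: the finite set `s` may be chosen large depending on the finite family `t`. -/
noncomputable def baseFilter (S : Set (Set ℕ)) : Filter ℕ :=
  map (codePair S) (curry atTop atTop)

instance baseFilter_neBot (S : Set (Set ℕ)) : (baseFilter S).NeBot := by
  unfold baseFilter
  have : (curry (atTop : Filter (Finset (Set ℕ))) (atTop : Filter (Finset ℕ))).NeBot := by
    refine ⟨fun h => ?_⟩
    rw [← empty_mem_iff_bot, mem_curry_iff] at h
    obtain ⟨t, ht⟩ := h.exists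
    obtain ⟨s, hs⟩ := ht.exists
    exact hs
  infer_instance

lemma indepSet_mem {S : Set (Set ℕ)} {X : Set ℕ} (hX : X ∈ S) :
    indepSet X ∈ baseFilter S := by
  rw [baseFilter, mem_map, mem_curry_iff]
  filter_upwards [eventually_ge_atTop {X}] with t ht
  refine Eventually.of_forall fun s => ?_
  simp only [indepSet, codePair, mem_preimage, mem_ofPred_eq, Equiv.symm_apply_apply]
  refine Finset.mem_image.2 ⟨X, ?_, rfl⟩
  simp only [Finset.mem_filter]
  exact ⟨ht (by simp), hX⟩

lemma trace_ne {X Y : Set ℕ} (h : X ≠ Y) : ∀ᶠ s in atTop, trace Y s ≠ trace X s := by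
  have : ∃ n, ¬ (n ∈ X ↔ n ∈ Y) := by
    by_contra! hc
    exact h (Set.ext hc)
  obtain ⟨n, hn⟩ := this
  filter_upwards [eventually_ge_atTop {n}] with s hs heq
  have hns : n ∈ s := hs (by simp)
  have := congrArg (n ∈ ·) heq
  simp only [trace, Finset.mem_filter, hns, true_and, eq_iff_iff] at this
  exact hn this.symm

lemma indepSet_compl_mem {S : Set (Set ℕ)} {X : Set ℕ} (hX : X ∉ S) :
    (indepSet X)ᶜ ∈ baseFilter S := by
  rw [baseFilter, mem_map, mem_curry_iff]
  refine Eventually.of_forall fun t => ?_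
  have h : ∀ᶠ s in atTop, ∀ Y ∈ t, Y ∈ S → trace Y s ≠ trace X s := by
    rw [eventually_all_finset]
    intro Y _
    by_cases hY : Y ∈ S
    · filter_upwards [trace_ne (X := X) (Y := Y) (fun h => hX (h ▸ hY))] with s hs _ using hs
    · simp [hY]
  filter_upwards [h] with s hs
  simp only [indepSet, codePair, mem_preimage, mem_compl_iff, mem_ofPred_eq,
    Equiv.symm_apply_apply]
  intro hc
  obtain ⟨Y, hY, hYX⟩ := Finset.mem_image.1 hc
  simp only [Finset.mem_filter] at hY
  exact hs Y hY.1 hY.2 hYX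

lemma baseFilter_le (S : Set (Set ℕ)) : baseFilter S ≤ atTop := by
  rw [← Nat.cofinite_eq_atTop, le_cofinite_iff_eventually_ne]
  intro n
  rw [baseFilter, eventually_map, eventually_curry_iff]
  refine Eventually.of_forall fun t => ?_
  obtain ⟨k, hk⟩ := Infinite.exists_notMem_finset (pairEquiv.symm n).1
  filter_upwards [eventually_ge_atTop {k}] with s hs h
  suffices s = (pairEquiv.symm n).1 from hk (this ▸ hs (by simp))
  rw [← h, codePair, Equiv.symm_apply_apply]

/-! ### Ultrafilters on `ℝ` at infinity -/

/-- The filter on `ℝ` generated by the residual sets and the preimages of the members of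
`baseFilter S` under the floor map. -/
noncomputable def realFilter (S : Set (Set ℕ)) : Filter ℝ :=
  comap (fun x : ℝ => ⌊x⌋₊) (baseFilter S) ⊓ residual ℝ

lemma floor_eq_of_mem_Ioo {n : ℕ} {x : ℝ} (hx : x ∈ Ioo (n : ℝ) (n + 1)) : ⌊x⌋₊ = n :=
  (Nat.floor_eq_iff ((Nat.cast_nonneg n).trans hx.1.le)).2 ⟨hx.1.le, hx.2⟩

instance realFilter_neBot (S : Set (Set ℕ)) : (realFilter S).NeBot := by
  rw [realFilter, inf_neBot_iff]
  rintro s ⟨A, hA, hAs⟩ D hD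
  obtain ⟨n, hn⟩ := (baseFilter_neBot S).nonempty_of_mem hA
  obtain ⟨x, hx, hxD⟩ := (dense_of_mem_residual hD).inter_open_nonempty
    (Ioo (n : ℝ) (n + 1)) isOpen_Ioo ⟨n + 1 / 2, by constructor <;> linarith⟩
  refine ⟨x, hAs ?_, hxD⟩
  simpa [floor_eq_of_mem_Ioo hx] using hn

/-- The union of the open unit intervals `(n, n+1)` with `n ∈ A`. -/
def unitIntervals (A : Set ℕ) : Set ℝ := ⋃ n ∈ A, Ioo (n : ℝ) (n + 1)

lemma isOpen_unitIntervals (A : Set ℕ) : IsOpen (unitIntervals A) :=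
  isOpen_biUnion fun _ _ => isOpen_Ioo

lemma realFilter_le_atTop (S : Set (Set ℕ)) : realFilter S ≤ atTop := by
  refine inf_le_left.trans ?_
  refine (comap_mono (baseFilter_le S)).trans ?_
  intro s hs
  obtain ⟨a, ha⟩ := mem_atTop_sets.1 hs
  refine ⟨Ici (⌈a⌉₊ + 1), Ici_mem_atTop _, fun x hx => ha x ?_⟩
  have h1 : ⌈a⌉₊ + 1 ≤ ⌊x⌋₊ := hx
  have h2 := (Nat.le_floor_iff' (by omega)).1 h1
  push_cast at h2
  linarith [Nat.le_ceil a]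

lemma unitIntervals_mem {S : Set (Set ℕ)} {A : Set ℕ} (hA : A ∈ baseFilter S) :
    unitIntervals A ∈ realFilter S := by
  have h1 : ∀ᶠ x in realFilter S, ⌊x⌋₊ ∈ A :=
    mem_inf_of_left (preimage_mem_comap hA)
  -- The natural numbers form a countable, hence meagre, subset of `ℝ`.
  have h2 : ∀ᶠ x in realFilter S, x ∈ (range (Nat.cast : ℕ → ℝ))ᶜ :=
    mem_inf_of_right (residual_of_dense_Gδ (countable_range _).isGδ_compl
      ((countable_range _).dense_compl ℝ))
  have h3 : ∀ᶠ x in realFilter S, 0 ≤ x := realFilter_le_atTop S (eventually_ge_atTop 0)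
  filter_upwards [h1, h2, h3] with x hx1 hx2 hx3
  refine mem_iUnion₂.2 ⟨_, hx1, lt_of_le_of_ne (Nat.floor_le hx3) ?_, Nat.lt_floor_add_one x⟩
  exact fun h => hx2 ⟨_, h⟩

/-- An ultrafilter refining `realFilter S`. -/
noncomputable def realUltra (S : Set (Set ℕ)) : Ultrafilter ℝ := Ultrafilter.of (realFilter S)

lemma realUltra_le (S : Set (Set ℕ)) : (realUltra S : Filter ℝ) ≤ realFilter S :=
  Ultrafilter.of_le _

/-! ### The topology attached to an ultrafilter -/

/-- The topology of those Euclidean open sets which belong to `P` if they contain `0`. -/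
def thetaTop (P : Filter ℝ) : TopologicalSpace ℝ where
  IsOpen U := IsOpen U ∧ (0 ∈ U → U ∈ P)
  isOpen_univ := ⟨isOpen_univ, fun _ => univ_mem⟩
  isOpen_inter := fun _ _ hs ht =>
    ⟨hs.1.inter ht.1, fun h => inter_mem (hs.2 h.1) (ht.2 h.2)⟩
  isOpen_sUnion := fun _ h =>
    ⟨isOpen_sUnion fun U hU => (h U hU).1, fun ⟨U, hU, h0⟩ =>
      mem_of_superset ((h U hU).2 h0) (subset_sUnion_of_mem hU)⟩

lemma thetaTop_isOpen_iff {P : Filter ℝ} {U : Set ℝ} :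
    IsOpen[thetaTop P] U ↔ IsOpen U ∧ (0 ∈ U → U ∈ P) := Iff.rfl

lemma thetaTop_isOpen_diff (P : Filter ℝ) {U : Set ℝ} (hU : IsOpen U) :
    IsOpen[thetaTop P] (U \ {0}) :=
  ⟨hU.sdiff isClosed_singleton, fun h => absurd rfl h.2⟩

lemma thetaTop_isOpen_union {P : Filter ℝ} {U V : Set ℝ} (hU : IsOpen U) (hV : IsOpen V)
    (hVP : V ∈ P) : IsOpen[thetaTop P] (U ∪ V) :=
  ⟨hU.union hV, fun _ => mem_of_superset hVP subset_union_right⟩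

lemma thetaTop_separate_zero {P : Filter ℝ} (hP : P ≤ atTop) {y : ℝ} (hy : y ≠ 0) :
    ∃ U V : Set ℝ, IsOpen[thetaTop P] U ∧ IsOpen[thetaTop P] V ∧ 0 ∈ U ∧ y ∈ V ∧
      Disjoint U V := by
  obtain ⟨U, V, hU, hV, h0, hyV, hd⟩ := t2_separation hy.symm
  refine ⟨U ∪ Ioi (y + 1), (V ∩ Iio (y + 1)) \ {0},
    thetaTop_isOpen_union hU isOpen_Ioi (hP (Ioi_mem_atTop _)),
    thetaTop_isOpen_diff P (hV.inter isOpen_Iio), Or.inl h0, ⟨⟨hyV, by simp⟩, hy⟩, ?_⟩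
  rw [Set.disjoint_left] at hd ⊢
  rintro x (hx | hx) ⟨⟨h1, h2⟩, -⟩
  · exact hd hx h1
  · exact lt_asymm (mem_Ioi.1 hx) (mem_Iio.1 h2)

lemma thetaTop_t2 {P : Filter ℝ} (hP : P ≤ atTop) : @T2Space ℝ (thetaTop P) := by
  refine @T2Space.mk ℝ (thetaTop P) fun x y hxy => ?_
  by_cases hx : x = 0
  · subst hx
    exact thetaTop_separate_zero hP hxy.symm
  by_cases hy : y = 0
  · subst hy
    obtain ⟨U, V, hU, hV, h0, hyV, hd⟩ := thetaTop_separate_zero hP hx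
    exact ⟨V, U, hV, hU, hyV, h0, hd.symm⟩
  obtain ⟨U, V, hU, hV, hxU, hyV, hd⟩ := t2_separation hxy
  exact ⟨U \ {0}, V \ {0}, thetaTop_isOpen_diff P hU, thetaTop_isOpen_diff P hV, ⟨hxU, hx⟩,
    ⟨hyV, hy⟩, hd.mono sdiff_subset sdiff_subset⟩

lemma thetaTop_inL0 {P : Filter ℝ} (hP : P ≤ atTop) : InL0 (thetaTop P) := by
  refine ⟨⟨fun U hU => hU.1, thetaTop_t2 hP⟩, fun a ha => ?_⟩
  by_contra h0
  apply ha
  ext s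
  rw [@mem_nhds_iff ℝ (thetaTop P), @mem_nhds_iff ℝ eta]
  constructor
  · rintro ⟨U, hUs, hU, haU⟩
    exact ⟨U, hUs, hU.1, haU⟩
  · rintro ⟨U, hUs, hU, haU⟩
    exact ⟨U \ {0}, sdiff_subset.trans hUs, thetaTop_isOpen_diff P hU, haU, h0⟩

/-- An ultrafilter containing the residual sets behaves on open sets like a maximal filter of open sets. -/
lemma interior_compl_mem {P : Ultrafilter ℝ} (hP : (P : Filter ℝ) ≤ residual ℝ) {W : Set ℝ}
    (hW : IsOpen W) (hWP : W ∉ P) : interior Wᶜ ∈ P := by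
  have hd : W ∪ interior Wᶜ ∈ (P : Filter ℝ) := by
    refine hP (residual_of_dense_open (hW.union isOpen_interior) ?_)
    rw [dense_iff_closure_eq, closure_union, interior_compl, eq_univ_iff_forall]
    intro x
    by_cases hx : x ∈ closure W
    · exact Or.inl hx
    · exact Or.inr (subset_closure hx)
  exact (Ultrafilter.union_mem_iff.1 hd).resolve_left hWP

lemma thetaTop_no_between {P : Ultrafilter ℝ} (hP : (P : Filter ℝ) ≤ residual ℝ)
    {τ : TopologicalSpace ℝ} (h1 : Coarser (thetaTop P) τ) (hne : thetaTop P ≠ τ)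
    (h2 : Coarser τ eta) : τ = eta := by
  obtain ⟨W, hWτ, hW⟩ : ∃ W, IsOpen[τ] W ∧ ¬ IsOpen[thetaTop P] W := by
    by_contra! hc
    exact hne (TopologicalSpace.ext_iff.2 fun U => ⟨h1 U, hc U⟩)
  have hWo : IsOpen[eta] W := h2 W hWτ
  rw [thetaTop_isOpen_iff] at hW
  push Not at hW
  obtain ⟨h0, hWP⟩ := hW hWo
  obtain ⟨V, hVo, hVP, hVW⟩ : ∃ V, IsOpen[eta] V ∧ V ∈ P ∧ V ⊆ Wᶜ :=
    ⟨_, @isOpen_interior ℝ eta _, interior_compl_mem hP hWo hWP, @interior_subset ℝ eta _⟩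
  refine TopologicalSpace.ext_iff.2 fun U => ⟨h2 U, fun hU => ?_⟩
  have hU' : IsOpen[eta] U := hU
  have hdiff := h1 _ (thetaTop_isOpen_diff P hU')
  by_cases hU0 : (0 : ℝ) ∈ U
  · have hWU := @IsOpen.inter ℝ τ _ _ hWτ (h1 _ (thetaTop_isOpen_union hU' hVo hVP))
    have hEq : U = (U \ {0}) ∪ (W ∩ (U ∪ V)) := by
      ext x
      constructor
      · intro hx
        by_cases hx0 : x = 0
        · subst hx0
          exact Or.inr ⟨h0, Or.inl hx⟩
        · exact Or.inl ⟨hx, hx0⟩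
      · rintro (hx | ⟨hxW, hx | hx⟩)
        · exact hx.1
        · exact hx
        · exact absurd hxW (hVW hx)
    rw [hEq]
    exact @IsOpen.union ℝ _ _ τ hdiff hWU
  · rwa [sdiff_singleton_eq_self hU0] at hdiff

lemma subset_of_thetaTop_eq {S T : Set (Set ℕ)}
    (h : thetaTop (realUltra S) = thetaTop (realUltra T)) : S ⊆ T := by
  intro X hX
  by_contra hXT
  have hS := realUltra_le S (unitIntervals_mem (indepSet_mem hX))
  have hT := realUltra_le T (unitIntervals_mem (indepSet_compl_mem hXT))
  have hT1 := realUltra_le T (realFilter_le_atTop T (Ioi_mem_atTop 1))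
  have hopen := thetaTop_isOpen_union (isOpen_Ioo (a := (-1 : ℝ)) (b := 1))
    (isOpen_unitIntervals _) hS
  rw [h] at hopen
  have hmem := hopen.2 (Or.inl (by norm_num))
  obtain ⟨x, ⟨hx1, hx2⟩, hx3⟩ :=
    (realUltra T).neBot.nonempty_of_mem (inter_mem (inter_mem hT hT1) hmem)
  rcases hx3 with hx3 | hx3
  · exact lt_asymm (mem_Ioi.1 hx2) hx3.2
  · obtain ⟨n, hn, hxn⟩ := mem_iUnion₂.1 hx1
    obtain ⟨m, hm, hxm⟩ := mem_iUnion₂.1 hx3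
    rw [← floor_eq_of_mem_Ioo hxn] at hn
    rw [← floor_eq_of_mem_Ioo hxm] at hm
    exact hn hm

/-- There are 2^𝔠 topologies ϑ ∈ 𝓛₀ such that no topology from 𝓛
lies strictly between ϑ and η. -/
theorem statement_16 :
    ∃ 𝒱 : Set (TopologicalSpace ℝ),
      Cardinal.mk ↥𝒱 = 2 ^ Cardinal.continuum ∧
      (∀ ϑ ∈ 𝒱, InL0 ϑ) ∧
      ∀ ϑ ∈ 𝒱, ¬ ∃ τ : TopologicalSpace ℝ, InL τ ∧
        (Coarser ϑ τ ∧ ϑ ≠ τ) ∧ (Coarser τ eta ∧ τ ≠ eta) := by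
  refine ⟨range fun S : Set (Set ℕ) => thetaTop (realUltra S), ?_, ?_, ?_⟩
  · rw [Cardinal.mk_range_eq _ fun S T h =>
      (subset_of_thetaTop_eq h).antisymm (subset_of_thetaTop_eq h.symm)]
    simp
  · rintro _ ⟨S, rfl⟩
    exact thetaTop_inL0 ((realUltra_le S).trans (realFilter_le_atTop S))
  · rintro _ ⟨S, rfl⟩ ⟨τ, -, ⟨h1, hne⟩, h2, hne2⟩
    exact hne2 (thetaTop_no_between ((realUltra_le S).trans inf_le_right) h1 hne h2)
end

section
/- For every infinite cardinal κ ≤ c there exists a family 𝒯_κ ⊆ 𝓛 with |𝒯_κ| = 2^κ such that for each τ ∈ 𝒯_κ the space (ℝ, τ) is a completely normal Baire space of weight κ, and for distinct τ, τ' ∈ 𝒯_κ the spaces (ℝ, τ) and (ℝ, τ') are not homeomorphic. -/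
/-!
For `J ⊆ ℝ` the Euclidean topology is coarsened at the two points `0` and `-1` only: a neighbourhood
of `-1` must also contain a uniform neighbourhood of all large odd integers, and a neighbourhood of
`0` a uniform neighbourhood of the even integers `2 * n`, `n ∈ A`, for some `A` in a filter `Fil J`
on `ℤ`. The filter `Fil J` is generated by the tails towards `+∞` and the complements of the
branches of the elements of `J`; here the branch of `x` is a set of powers of two coding the dyadic
approximations of `x`, so that distinct branches are almost disjoint.

The resulting space is regular Hausdorff and, like every coarsening of `ℝ`, hereditarily Lindelöf,
hence completely normal. It is a Baire space since the complement of the two coarse points is an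
open dense subspace carrying its Euclidean topology. If `J` is infinite, the weight is `#J`: the
filter has a base of size `#J` (`weight_le`), and a basis of smaller size would contain one
neighbourhood of `0` missing the branches of infinitely many `j ∈ J`, whereas a set in `Fil J`
contains infinitely many elements of the branch of every `j` outside a finite set (`le_weight`).

A homeomorphism between the spaces of `J` and `J'` is increasing near `+∞` (`Iso.end_atTop`) and
permutes the coarse points. It cannot interchange them, because the images of odd integers would
have to fill the even integers, including those in a branch removed from the filter of `J'`. So it
fixes `-1` and moves large odd integers, approximately, by a constant even translation
(`odd_shift`); the even integers in between then move by the same translation `2 * k`, which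
therefore carries `Fil J` into `Fil J'`. A nonzero translation moves almost all powers of two off
the powers of two, so in any case `J' ⊆ J` (`subset_of_shift`), and `J = J'` by symmetry
(`eq_of_homeomorph`). Selecting one real from each of `κ` disjoint pairs yields `2 ^ κ` sets `J` of
size `κ`.
-/

open Topology Set

/-- The weight of the topology τ on ℝ: the least cardinality of a basis of τ. -/
noncomputable def weightOf (τ : TopologicalSpace ℝ) : Cardinal :=
  sInf {κ : Cardinal | ∃ B : Set (Set ℝ),
    @TopologicalSpace.IsTopologicalBasis ℝ τ B ∧ Cardinal.mk ↥B = κ}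


namespace CoarseReal

open Filter

/-! ### Fattened filters -/

/-- The site filter `G` on `ℤ`, fattened to a filter on `ℝ`: its members contain, for some `A ∈ G`
and some `ε > 0`, the `ε`-neighbourhood of `A`. -/
noncomputable def Th (G : Filter ℤ) : Filter ℝ :=
  Filter.map (fun p : ℤ × ℝ => (p.1 : ℝ) + p.2) (G ×ˢ 𝓝 (0 : ℝ))

/-- The open `ε`-neighbourhood in `ℝ` of a set of integers. -/
def thick (A : Set ℤ) (ε : ℝ) : Set ℝ := {x | ∃ n ∈ A, |x - n| < ε}

lemma mem_Th {G : Filter ℤ} {S : Set ℝ} :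
    S ∈ Th G ↔ ∃ A ∈ G, ∃ ε > 0, thick A ε ⊆ S := by
  unfold Th
  rw [mem_map, mem_prod_iff]
  constructor
  · rintro ⟨A, hA, t, ht, h⟩
    obtain ⟨ε, hε, hb⟩ := Metric.mem_nhds_iff.1 ht
    refine ⟨A, hA, ε, hε, ?_⟩
    rintro x ⟨n, hn, hx⟩
    have : ((n, x - n) : ℤ × ℝ) ∈ A ×ˢ t := ⟨hn, hb (by simpa [Real.dist_eq] using hx)⟩
    simpa using h this
  · rintro ⟨A, hA, ε, hε, h⟩
    refine ⟨A, hA, Metric.ball 0 ε, Metric.ball_mem_nhds _ hε, ?_⟩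
    rintro ⟨n, t⟩ ⟨hn, ht⟩
    refine h ⟨n, hn, ?_⟩
    simpa [Real.dist_eq] using ht

lemma thick_mem_Th {G : Filter ℤ} {A : Set ℤ} (hA : A ∈ G) {ε : ℝ} (hε : 0 < ε) :
    thick A ε ∈ Th G := mem_Th.2 ⟨A, hA, ε, hε, subset_rfl⟩

lemma isOpen_thick (A : Set ℤ) (ε : ℝ) : IsOpen (thick A ε) := by
  have : thick A ε = ⋃ n ∈ A, Metric.ball (n : ℝ) ε := by
    ext x; simp [thick, Real.dist_eq]
  rw [this]
  exact isOpen_biUnion fun _ _ => Metric.isOpen_ball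

lemma thick_mono {A B : Set ℤ} {ε δ : ℝ} (h : A ⊆ B) (h' : ε ≤ δ) : thick A ε ⊆ thick B δ := by
  rintro x ⟨n, hn, hx⟩
  exact ⟨n, h hn, hx.trans_le h'⟩

lemma closure_thick_subset (A : Set ℤ) {ε δ : ℝ} (h : ε < δ) :
    closure (thick A ε) ⊆ thick A δ := by
  intro x hx
  obtain ⟨y, ⟨n, hn, hy⟩, hxy⟩ := Metric.mem_closure_iff.1 hx (δ - ε) (by linarith)
  refine ⟨n, hn, ?_⟩
  rw [Real.dist_eq] at hxy
  have := abs_sub_le x y n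
  linarith

lemma tendsto_cast_Th (G : Filter ℤ) : Tendsto (fun n : ℤ => (n : ℝ)) G (Th G) := by
  intro S hS
  obtain ⟨A, hA, ε, hε, h⟩ := mem_Th.1 hS
  exact mem_map.2 <| mem_of_superset hA fun n hn => h ⟨n, hn, by simpa using hε⟩

lemma Th_bot : Th ⊥ = ⊥ := by simp [Th]

lemma Th_neBot {G : Filter ℤ} [G.NeBot] : (Th G).NeBot := by unfold Th; infer_instance

lemma Th_le_atTop {G : Filter ℤ} (h : G ≤ atTop) : Th G ≤ atTop := by
  refine atTop_basis.ge_iff.2 fun a _ => ?_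
  refine mem_Th.2 ⟨Ici (⌈a⌉ + 1), h (mem_atTop _), 1, one_pos, ?_⟩
  rintro x ⟨n, hn, hx⟩
  have h1 : (⌈a⌉ : ℝ) + 1 ≤ n := by exact_mod_cast hn
  have := Int.le_ceil a
  have := abs_lt.1 hx
  simp only [mem_Ici]; linarith

/-- Distinct integers are at distance at least `1`. -/
lemma int_eq_of_close {m n : ℤ} {x r s : ℝ} (h1 : |x - m| < r) (h2 : |x - n| < s)
    (hrs : r + s ≤ 1) : m = n := by
  have h : |(m : ℝ) - n| < 1 := by
    have := abs_sub_le (m : ℝ) x n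
    rw [abs_sub_comm (m : ℝ) x] at this
    linarith
  have h' : |m - n| < 1 := by exact_mod_cast h
  have := Int.abs_lt_one_iff.1 h'
  omega

lemma disjoint_thick {A B : Set ℤ} (h : Disjoint A B) : Disjoint (thick A (1/2)) (thick B (1/2)) := by
  rw [Set.disjoint_left] at *
  rintro x ⟨m, hm, hx⟩ ⟨n, hn, hy⟩
  exact h hm (int_eq_of_close hx hy (by norm_num) ▸ hn)

lemma Th_disjoint {G H : Filter ℤ} (h : Disjoint G H) : Disjoint (Th G) (Th H) := by
  obtain ⟨A, hA, B, hB, hAB⟩ := Filter.disjoint_iff.1 h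
  exact Filter.disjoint_iff.2 ⟨_, thick_mem_Th hA one_half_pos, _, thick_mem_Th hB one_half_pos,
    disjoint_thick hAB⟩

/-! ### Topologies prescribed by sites -/

/-- Conditions on an assignment `σ` of site filters to the points of `ℝ`: all sites escape to `+∞`,
each point has a set of sites which is avoided by the sites of every other point, and only `0` and
`-1` have sites. -/
structure SiteOK (σ : ℝ → Filter ℤ) : Prop where
  le_atTop : ∀ x, σ x ≤ atTop
  sep : ∀ x, ∃ A ∈ σ x, ∀ y, y ≠ x → Aᶜ ∈ σ y
  supp : ∀ x, x ≠ 0 → x ≠ -1 → σ x = ⊥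

/-- The neighbourhood filter at `x` of the topology with sites `σ`. -/
noncomputable def nh (σ : ℝ → Filter ℤ) (x : ℝ) : Filter ℝ := 𝓝 x ⊔ Th (σ x)

/-- The topology on `ℝ` in which `x` is moreover approached along its sites `σ x`. -/
@[reducible] noncomputable def top (σ : ℝ → Filter ℤ) : TopologicalSpace ℝ :=
  TopologicalSpace.mkOfNhds (nh σ)

variable {σ : ℝ → Filter ℤ}

lemma SiteOK.disj (h : SiteOK σ) (x y : ℝ) (hxy : x ≠ y) : Disjoint (σ x) (σ y) := by
  obtain ⟨A, hA, hA'⟩ := h.sep x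
  exact Filter.disjoint_iff.2 ⟨A, hA, Aᶜ, hA' y hxy.symm, disjoint_compl_right⟩

lemma SiteOK.nh_eq (h : SiteOK σ) {x : ℝ} (h0 : x ≠ 0) (h1 : x ≠ -1) : nh σ x = 𝓝 x := by
  simp [nh, h.supp x h0 h1, Th_bot]

lemma SiteOK.nh_eq_of_pos (h : SiteOK σ) {x : ℝ} (h0 : 0 < x) : nh σ x = 𝓝 x :=
  h.nh_eq h0.ne' (by linarith)

lemma SiteOK.nhds_top (h : SiteOK σ) (x : ℝ) : @nhds ℝ (top σ) x = nh σ x := by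
  refine TopologicalSpace.nhds_mkOfNhds _ _ (fun x => (pure_le_nhds x).trans le_sup_left) ?_
  intro a s hs
  have hs' := hs
  rw [nh, mem_sup] at hs
  rw [nh, eventually_sup]
  constructor
  · have hfin : (({0, -1} : Set ℝ) \ {a})ᶜ ∈ 𝓝 a :=
      ((Set.toFinite _).isClosed.isOpen_compl).mem_nhds (by simp)
    filter_upwards [eventually_mem_nhds_iff.2 hs.1, hfin] with y hy hy'
    by_cases hya : y = a
    · subst hya; exact hs'
    · have : y ≠ 0 ∧ y ≠ -1 := by
        constructor <;> rintro rfl <;> simp_all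
      rwa [h.nh_eq this.1 this.2]
  · obtain ⟨A, hA, ε, hε, hsub⟩ := mem_Th.1 hs.2
    filter_upwards [thick_mem_Th hA hε, Th_le_atTop (h.le_atTop a) (Ioi_mem_atTop 0)] with y hy hy0
    rw [h.nh_eq_of_pos hy0]
    exact mem_of_superset ((isOpen_thick A ε).mem_nhds hy) hsub

lemma SiteOK.isOpen_iff (h : SiteOK σ) {U : Set ℝ} :
    IsOpen[top σ] U ↔ IsOpen U ∧ ∀ x ∈ U, U ∈ Th (σ x) := by
  rw [@isOpen_iff_mem_nhds ℝ (top σ), isOpen_iff_mem_nhds]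
  simp only [h.nhds_top, nh, mem_sup]
  constructor
  · exact fun H => ⟨fun x hx => (H x hx).1, fun x hx => (H x hx).2⟩
  · exact fun H x hx => ⟨H.1 x hx, H.2 x hx⟩

lemma SiteOK.coarser (h : SiteOK σ) : Coarser (top σ) eta := fun _ hU => (h.isOpen_iff.1 hU).1

lemma SiteOK.isOpen_of_avoid (h : SiteOK σ) {U : Set ℝ} (hU : IsOpen U) (h0 : (0 : ℝ) ∉ U)
    (h1 : (-1 : ℝ) ∉ U) : IsOpen[top σ] U := by
  refine h.isOpen_iff.2 ⟨hU, fun x hx => ?_⟩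
  rw [h.supp x (by rintro rfl; exact h0 hx) (by rintro rfl; exact h1 hx), Th_bot]
  trivial

lemma SiteOK.t2 (h : SiteOK σ) : @T2Space ℝ (top σ) := by
  rw [@t2Space_iff_disjoint_nhds ℝ (top σ)]
  intro x y hxy
  have key : ∀ x y : ℝ, Disjoint (𝓝 x) (Th (σ y)) := fun x y =>
    (disjoint_nhds_atTop x).mono_right (Th_le_atTop (h.le_atTop y))
  rw [h.nhds_top, h.nhds_top, nh, nh, disjoint_sup_left, disjoint_sup_right, disjoint_sup_right]
  exact ⟨⟨disjoint_nhds_nhds.2 hxy, key x y⟩, (key y x).symm, Th_disjoint (h.disj x y hxy)⟩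

lemma SiteOK.regular (h : SiteOK σ) : @RegularSpace ℝ (top σ) := by
  refine @RegularSpace.of_exists_mem_nhds_isClosed_subset ℝ (top σ) ?_
  intro x s hs
  rw [h.nhds_top, nh, mem_sup] at hs
  obtain ⟨δ, hδ, hball⟩ := Metric.nhds_basis_closedBall.mem_iff.1 hs.1
  obtain ⟨A₀, hA₀, ε, hε, hthick₀⟩ := mem_Th.1 hs.2
  obtain ⟨A₁, hA₁, hsep⟩ := h.sep x
  obtain ⟨A, hA, hAA₁, hthick⟩ : ∃ A ∈ σ x, A ⊆ A₁ ∧ thick A ε ⊆ s :=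
    ⟨A₀ ∩ A₁, inter_mem hA₀ hA₁, inter_subset_right,
      (thick_mono inter_subset_left le_rfl).trans hthick₀⟩
  set r := min (ε / 2) (1 / 4) with hr
  have hr0 : 0 < r := by positivity
  set t := Metric.closedBall x δ ∪ closure (thick A r) with ht
  refine ⟨t, ?_, ?_, ?_⟩
  · rw [h.nhds_top, nh, mem_sup]
    exact ⟨mem_of_superset (Metric.closedBall_mem_nhds x hδ) subset_union_left,
      mem_of_superset (thick_mem_Th hA hr0) (subset_closure.trans subset_union_right)⟩
  · refine (@isOpen_compl_iff ℝ t (top σ)).1 (h.isOpen_iff.2 ⟨?_, ?_⟩)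
    · exact (Metric.isClosed_closedBall.union isClosed_closure).isOpen_compl
    · intro y hy
      have hxy : x ≠ y := by
        rintro rfl
        exact hy (Or.inl (Metric.mem_closedBall_self hδ.le))
      have hfar : (Metric.closedBall x δ)ᶜ ∈ Th (σ y) := by
        refine Th_le_atTop (h.le_atTop y) (mem_of_superset (Ioi_mem_atTop (x + δ)) ?_)
        intro z hz hz'
        rw [Metric.mem_closedBall, Real.dist_eq] at hz'
        have := (abs_le.1 hz').2
        have := mem_Ioi.1 hz
        linarith
      filter_upwards [hfar, thick_mem_Th (hsep y hxy.symm) one_half_pos] with z hz hz' hzt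
      rcases hzt with hzt | hzt
      · exact hz hzt
      · have h1 : z ∈ thick A₁ (1 / 2) := thick_mono hAA₁ le_rfl
          (closure_thick_subset A (by linarith [min_le_right (ε / 2) (1 / 4 : ℝ)]) hzt)
        exact Set.disjoint_left.1 (disjoint_thick disjoint_compl_right) h1 hz'
  · refine union_subset hball ((closure_thick_subset A ?_).trans hthick)
    have := min_le_left (ε / 2) (1 / 4 : ℝ)
    linarith

lemma SiteOK.completelyNormal (h : SiteOK σ) : @CompletelyNormalSpace ℝ (top σ) := by
  have hlin : ∀ s : Set ℝ, @IsLindelof ℝ (top σ) s := by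
    intro s
    have hid : @Continuous ℝ ℝ _ (top σ) id := continuous_id_iff_le.2 h.coarser
    simpa using @IsLindelof.image ℝ ℝ _ (top σ) s _ (HereditarilyLindelofSpace.isLindelof s) hid
  let τ := top σ
  have : RegularSpace ℝ := h.regular
  have : HereditarilyLindelofSpace ℝ := .of_forall_isOpen fun s _ => hlin s
  exact CompletelyNormalSpace.of_forall_normalSpace fun s => inferInstance

lemma SiteOK.baire (h : SiteOK σ) : @BaireSpace ℝ (top σ) := by
  refine @BaireSpace.mk ℝ (top σ) fun f ho hd => ?_
  have hd' : ∀ n, Dense (f n) := by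
    intro n
    rw [dense_iff_inter_open]
    intro U hU hne
    -- a nonempty Euclidean open set contains a nonempty one that avoids `0` and `-1`
    have hU' : (U \ {0, -1}).Nonempty := by
      have hinf : U.Infinite := by
        obtain ⟨x, hx⟩ := hne
        exact infinite_of_mem_nhds x (hU.mem_nhds hx)
      exact (hinf.sdiff (Set.toFinite _)).nonempty
    have hopen : IsOpen[top σ] (U \ {0, -1}) :=
      h.isOpen_of_avoid (hU.sdiff (Set.toFinite _).isClosed) (by simp) (by simp)
    obtain ⟨x, hx, hx'⟩ := (@dense_iff_inter_open ℝ (top σ) _).1 (hd n) _ hopen hU'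
    exact ⟨x, hx.1, hx'⟩
  have := dense_iInter_of_isOpen_nat (fun n => (h.isOpen_iff.1 (ho n)).1) hd'
  rw [@dense_iff_inter_open ℝ (top σ)]
  intro U hU hne
  exact this.inter_open_nonempty U (h.isOpen_iff.1 hU).1 hne

/-! ### Almost disjoint sets and the filters they generate -/

/-- The set of integers coding the dyadic approximations of `x`. For distinct `x` these sets are
almost disjoint, and all of them consist of powers of two. -/
def branch (x : ℝ) : Set ℤ :=
  Set.range fun n : ℕ => (2 : ℤ) ^ (Encodable.encode ((n, ⌊x * 2 ^ n⌋) : ℕ × ℤ))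

lemma branch_pow {x : ℝ} {n : ℤ} (h : n ∈ branch x) : ∃ i : ℕ, n = 2 ^ i := by
  obtain ⟨m, rfl⟩ := h
  exact ⟨_, rfl⟩

lemma eventually_floor_ne {x y : ℝ} (hxy : x ≠ y) :
    ∀ᶠ n : ℕ in atTop, ⌊x * 2 ^ n⌋ ≠ ⌊y * 2 ^ n⌋ := by
  have hpos : 0 < |x - y| := abs_pos.2 (sub_ne_zero.2 hxy)
  have hlim : Tendsto (fun n : ℕ => (2 : ℝ) ^ n) atTop atTop :=
    tendsto_pow_atTop_atTop_of_one_lt (by norm_num)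
  filter_upwards [hlim.eventually_gt_atTop (1 / |x - y|)] with n hn heq
  have h1 := Int.abs_sub_lt_one_of_floor_eq_floor heq
  rw [← sub_mul, abs_mul, abs_of_pos (show (0 : ℝ) < 2 ^ n by positivity)] at h1
  rw [div_lt_iff₀ hpos] at hn
  linarith

/-- A branch is not covered, even up to finitely many elements, by finitely many other branches. -/
lemma branch_escape (x : ℝ) (K : Finset ℝ) (hx : x ∉ K) (N : ℤ) :
    ∃ n ∈ branch x, N ≤ n ∧ ∀ y ∈ K, n ∉ branch y := by
  have h1 : ∀ᶠ n : ℕ in atTop, ∀ y ∈ K, ⌊x * 2 ^ n⌋ ≠ ⌊y * 2 ^ n⌋ := by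
    rw [Filter.eventually_all_finset]
    intro y hy
    exact eventually_floor_ne (by rintro rfl; exact hx hy)
  obtain ⟨n, hn, hnN⟩ := (h1.and (eventually_ge_atTop N.toNat)).exists
  refine ⟨_, ⟨n, rfl⟩, ?_, ?_⟩
  · have h2 : n ≤ Encodable.encode ((n, ⌊x * 2 ^ n⌋) : ℕ × ℤ) := Nat.left_le_pair _ _
    have h3 := (Nat.lt_two_pow_self (n := Encodable.encode ((n, ⌊x * 2 ^ n⌋) : ℕ × ℤ)))
    have h4 : (n : ℤ) ≤ 2 ^ (Encodable.encode ((n, ⌊x * 2 ^ n⌋) : ℕ × ℤ)) := by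
      exact_mod_cast h2.trans h3.le
    exact (Int.self_le_toNat N).trans ((Int.ofNat_le.2 hnN).trans h4)
  · rintro y hy ⟨m, hm⟩
    have h5 : Encodable.encode ((m, ⌊y * 2 ^ m⌋) : ℕ × ℤ)
        = Encodable.encode ((n, ⌊x * 2 ^ n⌋) : ℕ × ℤ) :=
      Int.pow_right_injective (a := 2) (by norm_num) hm
    have h6 := Encodable.encode_injective h5
    rw [Prod.mk.injEq] at h6
    obtain ⟨rfl, h7⟩ := h6
    exact hn y hy h7.symm

/-- Nonzero translates of the powers of two meet the powers of two in a bounded set. -/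
lemma pow_shift {n k : ℤ} (hk : k ≠ 0) {i j : ℕ} (hi : n = 2 ^ i) (hj : n + k = 2 ^ j) :
    n ≤ 2 * |k| := by
  have hij : i ≠ j := by rintro rfl; omega
  have hi1 : (1 : ℤ) ≤ 2 ^ i := one_le_pow₀ (by norm_num)
  have hj1 : (1 : ℤ) ≤ 2 ^ j := one_le_pow₀ (by norm_num)
  rcases lt_or_gt_of_ne hij with h | h
  · have : (2 : ℤ) ^ (i + 1) ≤ 2 ^ j := pow_le_pow_right₀ (by norm_num) h
    rw [pow_succ] at this
    have := le_abs_self k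
    omega
  · have : (2 : ℤ) ^ (j + 1) ≤ 2 ^ i := pow_le_pow_right₀ (by norm_num) h
    rw [pow_succ] at this
    have := neg_le_abs k
    omega

/-- The tail `{n ≥ N}` with the branches of the elements of `K` removed. -/
def cut (K : Finset ℝ) (N : ℤ) : Set ℤ := {n | N ≤ n ∧ ∀ y ∈ K, n ∉ branch y}

/-- The filter on `ℤ` generated by the tails towards `+∞` and the complements of the branches of
the elements of `J`. -/
def Fil (J : Set ℝ) : Filter ℤ where
  sets := {S | ∃ K : Finset ℝ, ↑K ⊆ J ∧ ∃ N : ℤ, cut K N ⊆ S}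
  univ_sets := ⟨∅, by simp, 0, subset_univ _⟩
  sets_of_superset := by
    rintro S T ⟨K, hK, N, h⟩ hST
    exact ⟨K, hK, N, h.trans hST⟩
  inter_sets := by
    classical
    rintro S T ⟨K, hK, N, h⟩ ⟨L, hL, M, h'⟩
    refine ⟨K ∪ L, by simp [hK, hL], max N M, ?_⟩
    rintro n ⟨hn, hn'⟩
    exact ⟨h ⟨(le_max_left _ _).trans hn, fun y hy => hn' y (Finset.mem_union_left _ hy)⟩,
      h' ⟨(le_max_right _ _).trans hn, fun y hy => hn' y (Finset.mem_union_right _ hy)⟩⟩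

lemma mem_Fil {J : Set ℝ} {S : Set ℤ} :
    S ∈ Fil J ↔ ∃ K : Finset ℝ, ↑K ⊆ J ∧ ∃ N : ℤ, cut K N ⊆ S := Iff.rfl

lemma cut_mem_Fil {J : Set ℝ} {K : Finset ℝ} (hK : ↑K ⊆ J) (N : ℤ) : cut K N ∈ Fil J :=
  mem_Fil.2 ⟨K, hK, N, subset_rfl⟩

lemma Fil_le_atTop (J : Set ℝ) : Fil J ≤ atTop := by
  refine atTop_basis.ge_iff.2 fun N _ => mem_Fil.2 ⟨∅, by simp, N, ?_⟩
  exact fun n hn => hn.1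

lemma branch_compl_mem {J : Set ℝ} {x : ℝ} (hx : x ∈ J) : (branch x)ᶜ ∈ Fil J :=
  mem_Fil.2 ⟨{x}, by simpa using hx, 0, fun n hn => hn.2 x (by simp)⟩

instance Fil_neBot (J : Set ℝ) : (Fil J).NeBot := by
  refine ⟨fun h => ?_⟩
  obtain ⟨K, _, N, h⟩ := mem_Fil.1 (Filter.empty_mem_iff_bot.2 h)
  -- odd integers greater than `1` belong to no branch
  refine h (a := 2 * |N| + 3) ⟨by have := le_abs_self N; have := abs_nonneg N; omega, ?_⟩
  intro y _ hy
  obtain ⟨i, hi⟩ := branch_pow hy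
  have := abs_nonneg N
  rcases i with _ | i
  · simp at hi; omega
  · rw [pow_succ] at hi; omega

/-- The filter determines the index set, even up to a translation of `ℤ`. -/
lemma subset_of_shift {J J' : Set ℝ} {k : ℤ} (h : Tendsto (fun n => n + k) (Fil J) (Fil J')) :
    J' ⊆ J := by
  intro x hx
  obtain ⟨K, hK, N, hKN⟩ := mem_Fil.1 (h (branch_compl_mem hx))
  by_contra hxJ
  have hxK : x ∉ K := fun hx' => hxJ (hK hx')
  obtain ⟨n, hn, hnN, hnK⟩ := branch_escape x K hxK (max N 0 + 3 * |k| + 1)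
  have hk1 := le_abs_self k
  have hk2 := abs_nonneg k
  have hmem : n - k ∈ cut K N → False := fun hc => by
    have := hKN hc
    simp only [mem_preimage, sub_add_cancel, mem_compl_iff] at this
    exact this hn
  refine hmem ⟨by omega, ?_⟩
  intro y hy hny
  by_cases hk : k = 0
  · subst hk
    exact hnK y hy (by simpa using hny)
  · obtain ⟨i, hi⟩ := branch_pow hn
    obtain ⟨j, hj⟩ := branch_pow hny
    have := pow_shift (n := n - k) hk hj (by rw [sub_add_cancel]; exact hi)
    omega

/-- The sites attached to `J`: the even integers, filtered by `Fil J`, for the point `0`, and all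
large odd integers for the point `-1`. -/
noncomputable def site (J : Set ℝ) (x : ℝ) : Filter ℤ :=
  open Classical in
  if x = 0 then (Fil J).map (fun n => 2 * n)
  else if x = -1 then (atTop : Filter ℤ).map (fun n => 2 * n + 1) else ⊥

lemma site_zero (J : Set ℝ) : site J 0 = (Fil J).map (fun n => 2 * n) := by simp [site]

lemma site_neg_one (J : Set ℝ) : site J (-1) = (atTop : Filter ℤ).map (fun n => 2 * n + 1) := by
  simp [site]

lemma site_ok (J : Set ℝ) : SiteOK (site J) where
  le_atTop x := by
    have h2 : Tendsto (fun n : ℤ => 2 * n) atTop atTop :=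
      tendsto_id.const_mul_atTop' (by norm_num)
    unfold site
    split_ifs
    · exact h2.mono_left (Fil_le_atTop J)
    · exact tendsto_atTop_add_const_right _ 1 h2
    · exact bot_le
  sep x := by
    have he : ∀ y, y ≠ 0 → {n : ℤ | Even n}ᶜ ∈ site J y := by
      intro y hy
      unfold site
      rw [if_neg hy]
      split_ifs
      · exact mem_map.2 (Filter.univ_mem' fun n => by simp)
      · trivial
    have ho : ∀ y, y ≠ -1 → {n : ℤ | Even n} ∈ site J y := by
      intro y hy
      unfold site
      split_ifs
      · exact mem_map.2 (Filter.univ_mem' fun n => by simp)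
      · trivial
    by_cases h0 : x = 0
    · exact ⟨{n | Even n}, ho x (by rw [h0]; norm_num), fun y hy => he y (by rwa [h0] at hy)⟩
    by_cases h1 : x = -1
    · exact ⟨{n | Even n}ᶜ, he x h0, fun y hy => by rw [compl_compl]; exact ho y (by rwa [h1] at hy)⟩
    · exact ⟨∅, by simp [site, h0, h1], fun y _ => by simp⟩
  supp x h0 h1 := by simp [site, h0, h1]

/-! ### The weight -/

/-- A base of the site filters at `0` and `-1` indexed by `ι` gives a base of the topology indexed
by `ℚ × ℚ ⊕ ι × ℕ`. -/
lemma SiteOK.exists_basis {σ : ℝ → Filter ℤ} (h : SiteOK σ) {ι : Type} (z : ι → ℝ) (A : ι → Set ℤ)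
    (hz : ∀ i, z i = 0 ∨ z i = -1) (hA : ∀ i, A i ∈ σ (z i)) (hA2 : ∀ i, A i ⊆ Ici 2)
    (hbase : ∀ w : ℝ, (w = 0 ∨ w = -1) → ∀ S ∈ σ w, ∃ i, z i = w ∧ A i ⊆ S) :
    ∃ f : (ℚ × ℚ) ⊕ (ι × ℕ) → Set ℝ,
      @TopologicalSpace.IsTopologicalBasis ℝ (top σ) (Set.range f) := by
  have hr1 : ∀ k : ℕ, (1 : ℝ) / (k + 1) ≤ 1 := fun k => by
    rw [div_le_one (by positivity)]; linarith [(Nat.cast_nonneg k : (0 : ℝ) ≤ k)]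
  have hr0 : ∀ k : ℕ, (0 : ℝ) < 1 / (k + 1) := fun k => by positivity
  refine ⟨Sum.elim (fun q => Ioo (q.1 : ℝ) q.2 \ {0, -1})
    (fun p => Metric.ball (z p.1) (1 / (p.2 + 1)) ∪ thick (A p.1) (1 / (p.2 + 1))), ?_⟩
  refine @TopologicalSpace.isTopologicalBasis_of_isOpen_of_nhds ℝ (top σ) _ ?_ ?_
  · rintro _ ⟨(q | ⟨i, k⟩), rfl⟩
    · exact h.isOpen_of_avoid (isOpen_Ioo.sdiff (Set.toFinite _).isClosed) (by simp) (by simp)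
    · refine h.isOpen_iff.2 ⟨Metric.isOpen_ball.union (isOpen_thick _ _), fun x hx => ?_⟩
      -- the only point of this set that has sites is its centre `z i`
      have hx' : x = z i ∨ (x ≠ 0 ∧ x ≠ -1) := by
        have h1 := hr1 k
        rcases hx with hx | ⟨n, hn, hx⟩
        · by_contra hcon
          push Not at hcon
          simp only [Metric.mem_ball, Real.dist_eq] at hx
          have hlt : |x - z i| < 1 := hx.trans_le h1
          rw [abs_lt] at hlt
          by_cases hx0 : x = 0
          · rcases hz i with hzi | hzi
            · exact hcon.1 (by rw [hx0, hzi])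
            · rw [hx0, hzi] at hlt; norm_num at hlt
          · have hx1 := hcon.2 hx0
            rcases hz i with hzi | hzi
            · rw [hx1, hzi] at hlt; norm_num at hlt
            · exact hcon.1 (by rw [hx1, hzi])
        · right
          have hn2 : (2 : ℝ) ≤ n := by exact_mod_cast hA2 i hn
          have := (abs_lt.1 hx).1
          simp only at h1 this
          constructor <;> intro hxx <;> rw [hxx] at this <;> linarith
      rcases hx' with rfl | ⟨h0, h1⟩
      · exact mem_of_superset (thick_mem_Th (hA i) (hr0 k)) subset_union_right
      · rw [h.supp x h0 h1, Th_bot]; trivial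
  · intro x U hx hU
    obtain ⟨hUo, hUs⟩ := h.isOpen_iff.1 hU
    by_cases hc : x = 0 ∨ x = -1
    · obtain ⟨δ, hδ, hball⟩ := Metric.isOpen_iff.1 hUo x hx
      obtain ⟨S, hS, ε, hε, hth⟩ := mem_Th.1 (hUs x hx)
      obtain ⟨i, rfl, hi⟩ := hbase x hc S hS
      obtain ⟨k, hk⟩ := exists_nat_one_div_lt (lt_min hδ hε)
      refine ⟨_, ⟨Sum.inr (i, k), rfl⟩, Or.inl (Metric.mem_ball_self (hr0 k)), ?_⟩
      exact union_subset ((Metric.ball_subset_ball (hk.le.trans (min_le_left _ _))).trans hball)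
        ((thick_mono hi (hk.le.trans (min_le_right _ _))).trans hth)
    · push Not at hc
      obtain ⟨δ, hδ, hball⟩ := Metric.isOpen_iff.1 hUo x hx
      obtain ⟨a, ha1, ha2⟩ := exists_rat_btwn (show x - δ < x by linarith)
      obtain ⟨b, hb1, hb2⟩ := exists_rat_btwn (show x < x + δ by linarith)
      refine ⟨_, ⟨Sum.inl (a, b), rfl⟩, ⟨⟨ha2, hb1⟩, by simpa using hc⟩, ?_⟩
      rintro y ⟨⟨hy1, hy2⟩, _⟩
      simp only at hy1 hy2
      refine hball ?_
      rw [Metric.mem_ball, Real.dist_eq, abs_lt]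
      constructor <;> linarith

lemma weight_le (J : Set ℝ) (hJ : Cardinal.aleph0 ≤ Cardinal.mk J) :
    weightOf (top (site J)) ≤ Cardinal.mk J := by
  have : Infinite J := Cardinal.infinite_iff.2 hJ
  obtain ⟨f, hf⟩ := (site_ok J).exists_basis (ι := (Finset J × ℕ) ⊕ ℕ)
    (Sum.elim (fun _ => 0) (fun _ => -1))
    (Sum.elim (fun p => (fun n => 2 * n) '' cut (p.1.map (Function.Embedding.subtype _)) (p.2 + 1))
      (fun N => (fun n : ℤ => 2 * n + 1) '' Ici ((N : ℤ) + 1)))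
    (by rintro (_ | _) <;> simp)
    (by
      rintro (p | N)
      · simp only [Sum.elim_inl, site_zero]
        refine image_mem_map (cut_mem_Fil ?_ _)
        intro x hx
        simp only [Finset.coe_map, Function.Embedding.coe_subtype, Set.mem_image] at hx
        obtain ⟨y, _, rfl⟩ := hx
        exact y.2
      · simp only [Sum.elim_inr, site_neg_one]
        exact image_mem_map (mem_atTop _))
    (by
      rintro (p | N)
      · rintro _ ⟨n, hn, rfl⟩
        have := hn.1
        simp only [mem_Ici]; omega
      · rintro _ ⟨n, hn, rfl⟩
        simp only [mem_Ici] at hn ⊢; omega)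
    (by
      classical
      rintro w (rfl | rfl) S hS
      · rw [site_zero, mem_map] at hS
        obtain ⟨K, hK, N, hKN⟩ := mem_Fil.1 hS
        refine ⟨Sum.inl (K.subtype (· ∈ J), N.toNat), rfl, ?_⟩
        rintro _ ⟨n, ⟨hn, hn'⟩, rfl⟩
        refine hKN ⟨by simp only at hn; omega, fun y hy => hn' y ?_⟩
        simp only [Finset.mem_map, Finset.mem_subtype, Function.Embedding.coe_subtype]
        exact ⟨⟨y, hK hy⟩, hy, rfl⟩
      · rw [site_neg_one, mem_map, mem_atTop_sets] at hS
        obtain ⟨N, hN⟩ := hS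
        refine ⟨Sum.inr N.toNat, rfl, ?_⟩
        rintro _ ⟨n, hn, rfl⟩
        simp only [mem_Ici] at hn
        exact hN n (by omega))
  have hle : weightOf (top (site J)) ≤ Cardinal.mk (Set.range f) := csInf_le' ⟨_, hf, rfl⟩
  refine hle.trans (Cardinal.mk_range_le.trans ?_)
  simp only [Cardinal.mk_sum, Cardinal.mk_prod, Cardinal.lift_id, Cardinal.mk_finset_of_infinite,
    Cardinal.mk_eq_aleph0 ℚ, Cardinal.mk_eq_aleph0 ℕ]
  rw [Cardinal.mul_aleph0_eq hJ, Cardinal.aleph0_mul_aleph0, Cardinal.add_eq_left hJ hJ,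
    Cardinal.mul_aleph0_eq hJ, Cardinal.add_eq_right hJ hJ]

lemma le_weight (J : Set ℝ) (hJ : Cardinal.aleph0 ≤ Cardinal.mk J) :
    Cardinal.mk J ≤ weightOf (top (site J)) := by
  have : Infinite J := Cardinal.infinite_iff.2 hJ
  have h := site_ok J
  refine le_csInf ⟨_, _, @TopologicalSpace.isTopologicalBasis_opens ℝ (top (site J)), rfl⟩ ?_
  rintro _ ⟨B, hB, rfl⟩
  by_contra hlt
  push Not at hlt
  -- for `j ∈ J`, a basic neighbourhood `b j` of `0` that avoids the sites in the branch of `j`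
  have hex : ∀ j : J, ∃ b : B, (0 : ℝ) ∈ b.1 ∧ ∀ n ∈ branch j, 0 < n → ((2 * n : ℤ) : ℝ) ∉ b.1 := by
    intro j
    have hU : Iio (1 : ℝ) ∪ thick ((fun n => 2 * n) '' (branch j)ᶜ) 1 ∈ @nhds ℝ (top (site J)) 0 := by
      rw [h.nhds_top, nh, mem_sup]
      refine ⟨mem_of_superset (Iio_mem_nhds one_pos) subset_union_left,
        mem_of_superset (thick_mem_Th ?_ one_pos) subset_union_right⟩
      rw [site_zero]
      exact image_mem_map (branch_compl_mem j.2)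
    obtain ⟨b, hb, h0, hbU⟩ := (@TopologicalSpace.IsTopologicalBasis.mem_nhds_iff ℝ (top (site J))
      _ _ _ hB).1 hU
    refine ⟨⟨b, hb⟩, h0, fun n hn hn0 hnb => ?_⟩
    rcases hbU hnb with hlt | ⟨_, ⟨m, hm, rfl⟩, hmn⟩
    · have h1 : 2 * n < 1 := by exact_mod_cast mem_Iio.1 hlt
      omega
    · have h1 : |2 * n - 2 * m| < 1 := by exact_mod_cast hmn
      rw [Int.abs_lt_one_iff] at h1
      have : m = n := by omega
      exact hm (this ▸ hn)
  choose b hb0 hb using hex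
  obtain ⟨b₀, hinf⟩ := Cardinal.exists_infinite_fiber b hlt
  have hb₀ : (0 : ℝ) ∈ b₀.1 := by
    obtain ⟨j, hj⟩ := hinf.nonempty
    have := hb0 j
    rwa [hj] at this
  have hmem : b₀.1 ∈ Th (site J 0) := (h.isOpen_iff.1
    (@TopologicalSpace.IsTopologicalBasis.isOpen ℝ (top (site J)) _ _ hB b₀.2)).2 0 hb₀
  have hmem' := tendsto_cast_Th _ hmem
  rw [site_zero] at hmem'
  obtain ⟨K, hK, N, hKN⟩ := mem_Fil.1 (mem_map.1 (mem_map.1 hmem'))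
  -- only the finitely many elements of `K` can share the basic set `b₀`
  have hsub : ((↑) : J → ℝ) '' (b ⁻¹' {b₀}) ⊆ ↑K := by
    rintro _ ⟨j, hj, rfl⟩
    by_contra hjK
    obtain ⟨n, hn, hnN, hnK⟩ := branch_escape j K hjK (max N 1)
    have h1 := hb j n hn (by omega)
    rw [mem_preimage, mem_singleton_iff] at hj
    rw [hj] at h1
    exact h1 (hKN ⟨by omega, hnK⟩)
  have hfin := (K.finite_toSet.subset hsub)
  exact (Set.infinite_coe_iff.1 hinf).image Subtype.val_injective.injOn hfin

/-! ### Rigidity -/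

/-- A bijection `f` of `ℝ` with inverse `g`, continuous in both directions from the topology with
sites `σ` to the one with sites `σ'`, expressed through neighbourhood filters. -/
structure Iso (σ σ' : ℝ → Filter ℤ) (f g : ℝ → ℝ) : Prop where
  left : ∀ x, g (f x) = x
  right : ∀ x, f (g x) = x
  cont : ∀ x, Tendsto f (nh σ x) (nh σ' (f x))
  cont' : ∀ x, Tendsto g (nh σ' x) (nh σ (g x))

section

variable {σ' : ℝ → Filter ℤ} {f g : ℝ → ℝ}

lemma Iso.symm (i : Iso σ σ' f g) : Iso σ' σ g f := ⟨i.right, i.left, i.cont', i.cont⟩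

lemma Iso.inj (i : Iso σ σ' f g) : Function.Injective f :=
  Function.LeftInverse.injective i.left

lemma not_atTop_le_nh (z : ℝ) : ¬ (atTop : Filter ℝ) ≤ nh σ z := by
  intro h
  have hmem : Iio (z + 1) ∪ thick univ (1 / 2) ∈ nh σ z := by
    rw [nh, mem_sup]
    exact ⟨mem_of_superset (Iio_mem_nhds (by linarith)) subset_union_left,
      mem_of_superset (thick_mem_Th univ_mem one_half_pos) subset_union_right⟩
  obtain ⟨a, ha⟩ := mem_atTop_sets.1 (h hmem)
  -- a large half-integer belongs to neither part of the neighbourhood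
  have hm := Int.le_ceil (max a (z + 1))
  set m := ⌈max a (z + 1)⌉
  have h1 := (le_max_left a (z + 1)).trans hm
  have h2 := (le_max_right a (z + 1)).trans hm
  rcases ha (m + 1 / 2) (by linarith) with h3 | ⟨n, -, hn⟩
  · have := mem_Iio.1 h3
    linarith
  · rw [abs_lt] at hn
    have h4 : (m : ℝ) < n := by linarith
    have h5 : (n : ℝ) < m + 1 := by linarith
    have h4' : m < n := by exact_mod_cast h4
    have h5' : n < m + 1 := by exact_mod_cast h5
    omega

/-- An isomorphism fixes the end `+∞` of `ℝ` and is increasing near it. -/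
lemma Iso.end_atTop (hσ : SiteOK σ) (hσ' : SiteOK σ') (hne : (σ (-1)).NeBot) (i : Iso σ σ' f g) :
    Tendsto f atTop atTop ∧ ∃ M : ℝ, ∀ x y, M < x → x < y → f x < f y := by
  set M := max (g 0) (g (-1)) with hM
  have hcont : ∀ x, M < x → ContinuousAt f x := by
    intro x hx
    have h0 : f x ≠ 0 := by
      intro h; have h' := i.left x; rw [h] at h'
      have := le_max_left (g 0) (g (-1)); linarith
    have h1 : f x ≠ -1 := by
      intro h; have h' := i.left x; rw [h] at h'
      have := le_max_right (g 0) (g (-1)); linarith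
    have := i.cont x
    rw [hσ'.nh_eq h0 h1] at this
    exact this.mono_left le_sup_left
  -- reparametrise the half-line `(M, ∞)` by `ℝ`
  set φ : ℝ → ℝ := fun t => f (M + Real.exp t) with hφ
  have hφc : Continuous φ := by
    rw [continuous_iff_continuousAt]
    intro t
    have : ContinuousAt (fun t => M + Real.exp t) t := by fun_prop
    exact ContinuousAt.comp (g := f) (hcont _ (by have := Real.exp_pos t; linarith)) this
  have hφi : Function.Injective φ := by
    intro s t h
    exact Real.exp_injective (by have := i.inj h; linarith)
  have hfφ : ∀ x, M < x → f x = φ (Real.log (x - M)) := by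
    intro x hx
    simp only [hφ]
    rw [Real.exp_log (by linarith)]
    congr 1; ring
  have hlim : ∀ l : Filter ℝ, Tendsto φ atTop l → Tendsto f atTop l := by
    intro l hl
    have h1 : Tendsto (fun x => Real.log (x - M)) atTop atTop :=
      Real.tendsto_log_atTop.comp (tendsto_atTop_add_const_right _ (-M) tendsto_id)
    refine (hl.comp h1).congr' ?_
    filter_upwards [eventually_gt_atTop M] with x hx
    exact (hfφ x hx).symm
  -- no finite limit, since otherwise `x` would converge as `x → ∞`
  have hfin : ∀ L : ℝ, ¬ Tendsto φ atTop (𝓝 L) := by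
    intro L hL
    have h1 : Tendsto f atTop (nh σ' L) := (hlim _ hL).mono_right le_sup_left
    have h2 := (i.cont' L).comp h1
    have h3 : g ∘ f = id := funext i.left
    rw [h3] at h2
    exact not_atTop_le_nh _ h2
  -- the limit is not `-∞`: along the sites of `-1`, `f` converges to `f (-1)` in the topology
  -- given by `σ'`, whose neighbourhoods can be taken bounded below
  have hbot : ¬ Tendsto φ atTop atBot := by
    intro hL
    have h1 := (hlim _ hL).mono_left (Th_le_atTop (hσ.le_atTop (-1)))
    have h2 := (i.cont (-1)).mono_left (le_sup_right : Th (σ (-1)) ≤ nh σ (-1))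
    have hd : Disjoint (atBot : Filter ℝ) (nh σ' (f (-1))) := by
      rw [nh, disjoint_sup_right]
      exact ⟨(disjoint_nhds_atBot _).symm,
        disjoint_atBot_atTop.mono_right (Th_le_atTop (hσ'.le_atTop _))⟩
    have : (Th (σ (-1))).NeBot := Th_neBot
    exact (h1.not_tendsto hd) h2
  rcases hφc.strictMono_of_inj hφi with hm | ha
  · refine ⟨hlim _ ?_, M, ?_⟩
    · rcases tendsto_atTop_of_monotone hm.monotone with h | ⟨l, h⟩
      · exact h
      · exact absurd h (hfin l)
    · intro x y hx hxy
      rw [hfφ x hx, hfφ y (hx.trans hxy)]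
      exact hm (Real.log_lt_log (by linarith) (by linarith))
  · exfalso
    rcases tendsto_atTop_of_antitone ha.antitone with h | ⟨l, h⟩
    · exact hbot h
    · exact hfin l h

/-- Sites of `x` are carried to sites of `f x`. -/
lemma Iso.tendsto_Th (hσ : SiteOK σ) (i : Iso σ σ' f g)
    (hf : Tendsto f atTop atTop) (x : ℝ) : Tendsto f (Th (σ x)) (Th (σ' (f x))) := by
  have h1 := (i.cont x).mono_left (le_sup_right : Th (σ x) ≤ nh σ x)
  have h2 := hf.mono_left (Th_le_atTop (hσ.le_atTop x))
  refine (tendsto_inf.2 ⟨h1, h2⟩).mono_right ?_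
  rw [nh, inf_sup_right, (disjoint_nhds_atTop (f x)).eq_bot, bot_sup_eq]
  exact inf_le_left

lemma Iso.coarse (hσ : SiteOK σ) (hσ' : SiteOK σ') (i : Iso σ σ' f g)
    (hf : Tendsto f atTop atTop) {x : ℝ} (hx : (σ x).NeBot) : f x = 0 ∨ f x = -1 := by
  by_contra hcon
  push Not at hcon
  have h1 := i.tendsto_Th hσ hf x
  rw [hσ'.supp _ hcon.1 hcon.2, Th_bot] at h1
  exact (Th_neBot (G := σ x)).ne (Filter.map_eq_bot_iff.1 (le_bot_iff.1 h1))

end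

/-- The filter of large odd integers. -/
noncomputable def odds : Filter ℤ := (atTop : Filter ℤ).map (fun n => 2 * n + 1)

lemma near_odd_of_tendsto {f : ℝ → ℝ} {G : Filter ℤ} (h : Tendsto f (Th G) (Th odds)) :
    ∃ A ∈ G, ∃ δ : ℝ, 0 < δ ∧ δ ≤ 1 / 4 ∧
      ∀ n ∈ A, ∀ x : ℝ, |x - n| < δ → ∃ m : ℤ, |f x - (2 * m + 1)| < 1 / 4 := by
  have hmem : thick ((fun n => 2 * n + 1) '' univ) (1 / 4) ∈ Th odds :=
    thick_mem_Th (image_mem_map univ_mem) (by norm_num)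
  obtain ⟨A, hA, δ, hδ, hsub⟩ := mem_Th.1 (h hmem)
  refine ⟨A, hA, min δ (1 / 4), by positivity, min_le_right _ _, fun n hn x hx => ?_⟩
  obtain ⟨_, ⟨m, -, rfl⟩, hm⟩ := hsub ⟨n, hn, hx.trans_le (min_le_left _ _)⟩
  exact ⟨m, by simpa using hm⟩

lemma not_near_odd (n m : ℤ) : ¬ |(2 * n : ℝ) - (2 * m + 1)| < 1 / 4 := by
  intro h
  have h1 : |((2 * n - (2 * m + 1) : ℤ) : ℝ)| < 1 := by
    push_cast; linarith
  have h2 : |2 * n - (2 * m + 1)| < 1 := by exact_mod_cast h1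
  rw [Int.abs_lt_one_iff] at h2
  omega

/-- If `f` and its inverse `g` are increasing near `+∞` and both respect the fattened filter of odd
integers, then `f` matches the large odd integers up to a fixed even translation. -/
lemma odd_shift {f g : ℝ → ℝ} (hgf : ∀ x, g (f x) = x) (hfg : ∀ x, f (g x) = x)
    (hft : Tendsto f atTop atTop) {M : ℝ}
    (hfm : ∀ x y, M < x → x < y → f x < f y) (hgm : ∀ x y, M < x → x < y → g x < g y)
    (hf : Tendsto f (Th odds) (Th odds)) (hg : Tendsto g (Th odds) (Th odds)) :
    ∃ k N : ℤ, ∀ n ≥ N, |f (2 * n + 1) - (2 * (n + k : ℤ) + 1)| < 1 / 4 := by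
  obtain ⟨A, hA, δ₁, hδ₁, hδ₁', hF⟩ := near_odd_of_tendsto hf
  obtain ⟨A', hA', δ₂, hδ₂, hδ₂', hG⟩ := near_odd_of_tendsto hg
  set δ := min δ₁ δ₂ with hδ
  have hδ0 : 0 < δ := lt_min hδ₁ hδ₂
  have hδ4 : δ ≤ 1 / 4 := (min_le_left _ _).trans hδ₁'
  obtain ⟨N₁, hN₁⟩ : ∃ N₁ : ℤ, ∀ n ≥ N₁, 2 * n + 1 ∈ A ∧ 2 * n + 1 ∈ A' :=
    mem_atTop_sets.1 (inter_mem (mem_map.1 hA) (mem_map.1 hA'))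
  -- images of large odd integers are `δ`-close to odd integers beyond any prescribed bound
  have hnear : ∀ u : ℝ → ℝ, Tendsto u (Th odds) (Th odds) → ∀ L : ℤ, ∃ N : ℤ, ∀ n ≥ N,
      ∃ m ≥ L, |u (2 * n + 1) - (2 * m + 1)| < δ := by
    intro u hu L
    have hmem : thick ((fun n => 2 * n + 1) '' Ici L) δ ∈ Th odds :=
      thick_mem_Th (image_mem_map (mem_atTop L)) hδ0
    have h1 := (hu.comp (tendsto_cast_Th odds)) hmem
    obtain ⟨N, hN⟩ := mem_atTop_sets.1 (mem_map.1 (mem_map.1 h1))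
    refine ⟨N, fun n hn => ?_⟩
    obtain ⟨_, ⟨m, hm, rfl⟩, hm'⟩ := hN n hn
    exact ⟨m, hm, by simpa using hm'⟩
  have hcast : Tendsto (fun n : ℤ => (2 * n + 1 : ℝ)) atTop atTop :=
    tendsto_atTop_add_const_right _ _ (tendsto_intCast_atTop_atTop.const_mul_atTop (by norm_num))
  obtain ⟨N₂, hN₂⟩ := hnear g hg N₁
  obtain ⟨L, hL⟩ : ∃ L : ℤ, M < L := exists_int_gt M
  obtain ⟨N₃, hN₃⟩ := hnear f hf (max (max N₁ N₂) (|L| + 1))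
  obtain ⟨N₄, hN₄⟩ := eventually_atTop.1 ((hft.comp hcast).eventually_gt_atTop M)
  choose! h hhL hh using hN₃
  set N := max (max N₃ N₄) (max N₁ (|L| + 1)) with hN
  have hstep : ∀ n ≥ N, h (n + 1) = h n + 1 := by
    intro n hn
    have hn3 : n ≥ N₃ := by omega
    have hn4 : n ≥ N₄ := by omega
    have hn1 : n ≥ N₁ := by omega
    have hLa := le_abs_self L
    have hLn := abs_nonneg L
    have hnL : M < 2 * n + 1 := by
      have : (L : ℝ) ≤ 2 * n + 1 := by exact_mod_cast (by omega : L ≤ 2 * n + 1)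
      linarith
    have hfM : M < f (2 * n + 1) := hN₄ n hn4
    have ha := hh n hn3
    have hb := hh (n + 1) (by omega)
    have hmL := hhL n hn3
    push_cast at hb
    have e3 : (2 * ((n : ℝ) + 1) + 1) = 2 * n + 3 := by ring
    rw [e3] at hb
    rw [abs_lt] at ha hb
    have hlt1 := hfm (2 * n + 1) (2 * n + 2) hnL (by linarith)
    have hlt2 := hfm (2 * n + 2) (2 * n + 3) (by linarith) (by linarith)
    have hle : h n ≤ h (n + 1) := by
      have : (2 * h n : ℝ) < 2 * h (n + 1) + 1 := by linarith
      have : 2 * h n < 2 * h (n + 1) + 1 := by exact_mod_cast this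
      omega
    have hne : h n ≠ h (n + 1) := by
      intro heq
      rw [← heq] at hb
      obtain ⟨m, hm⟩ := hG (2 * h n + 1) (hN₁ _ (by omega)).2 (f (2 * n + 2)) (by
        push_cast
        refine lt_of_lt_of_le (b := δ) ?_ (min_le_right _ _)
        rw [abs_lt]; constructor <;> linarith)
      rw [hgf] at hm
      exact not_near_odd (n + 1) m (by push_cast; convert hm using 2; ring)
    by_contra hcon
    have hgap : h n + 2 ≤ h (n + 1) := by omega
    have hgap' : (h n : ℝ) + 2 ≤ h (n + 1) := by exact_mod_cast hgap
    -- the odd integer `2 * (h n + 1) + 1` lies strictly between the two images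
    obtain ⟨j, hj, hjn⟩ := hN₂ (h n + 1) (by omega)
    push_cast at hjn
    have hM1 : M < 2 * (h n : ℝ) + 2 := by
      have : (L : ℝ) ≤ 2 * h n + 2 := by exact_mod_cast (by omega : L ≤ 2 * h n + 2)
      linarith
    have g1 := hgm (f (2 * n + 1)) (2 * h n + 2) hfM (by linarith)
    have g2 := hgm (2 * h n + 2) (2 * (h n + 1) + 1) hM1 (by linarith)
    have g3 := hgm (2 * (h n + 1) + 1) (2 * h n + 4) (by linarith) (by linarith)
    have g4 := hgm (2 * h n + 4) (f (2 * n + 3)) (by linarith) (by linarith)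
    rw [hgf] at g1 g4
    rw [abs_lt] at hjn
    have hjlo : n ≤ j := by
      have : (2 * n : ℝ) < 2 * j + 1 := by linarith
      have : 2 * n < 2 * j + 1 := by exact_mod_cast this
      omega
    have hjhi : j ≤ n + 1 := by
      have : (2 * j : ℝ) < 2 * n + 3 := by linarith
      have : 2 * j < 2 * n + 3 := by exact_mod_cast this
      omega
    obtain rfl | rfl : j = n ∨ j = n + 1 := by omega
    · obtain ⟨m, hm⟩ := hF (2 * j + 1) (hN₁ _ hj).1 (g (2 * h j + 2)) (by
        push_cast
        refine lt_of_lt_of_le (b := δ) ?_ (min_le_left _ _)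
        rw [abs_lt]; constructor <;> linarith)
      rw [hfg] at hm
      exact not_near_odd (h j + 1) m (by push_cast; convert hm using 2; ring)
    · obtain ⟨m, hm⟩ := hF (2 * (n + 1) + 1) (hN₁ _ hj).1 (g (2 * h n + 4)) (by
        push_cast at hjn ⊢
        refine lt_of_lt_of_le (b := δ) ?_ (min_le_left _ _)
        rw [abs_lt]; constructor <;> linarith)
      rw [hfg] at hm
      exact not_near_odd (h n + 2) m (by push_cast; convert hm using 2; ring)
  refine ⟨h N - N, N, fun n hn => ?_⟩
  have hind : h n = n + (h N - N) := by
    induction n, hn using Int.leInduction with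
    | base => ring
    | succ n hn ih => rw [hstep n hn, ih]; ring
  rw [← hind]
  exact (hh n (by omega)).trans_le hδ4

/-- An isomorphism fixes both coarse points; squeezed between the images of the odd integers, the
images of the even integers undergo a translation which carries `Fil J` into `Fil J'`. -/
lemma subset_of_iso {J J' : Set ℝ} (hJ' : J'.Nonempty) {f g : ℝ → ℝ}
    (i : Iso (site J) (site J') f g) : J' ⊆ J := by
  have ok := site_ok J
  have ok' := site_ok J'
  have hne1 : ∀ J, (site J (-1)).NeBot := fun J => by rw [site_neg_one]; infer_instance
  have hne0 : ∀ J, (site J 0).NeBot := fun J => by rw [site_zero]; infer_instance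
  obtain ⟨hft, M₁, hfm₁⟩ := i.end_atTop ok ok' (hne1 J)
  obtain ⟨hgt, M₂, hgm₁⟩ := i.symm.end_atTop ok' ok (hne1 J')
  set M := max M₁ M₂ with hM
  have hfm : ∀ x y, M < x → x < y → f x < f y := fun x y hx =>
    hfm₁ x y ((le_max_left _ _).trans_lt hx)
  have hgm : ∀ x y, M < x → x < y → g x < g y := fun x y hx =>
    hgm₁ x y ((le_max_right _ _).trans_lt hx)
  have f1 := i.tendsto_Th ok hft (-1)
  have f0 := i.tendsto_Th ok hft 0
  have c1 := i.coarse ok ok' hft (hne1 J)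
  have c0 := i.coarse ok ok' hft (hne0 J)
  have hinj : f 0 ≠ f (-1) := fun h => by have := i.inj h; norm_num at this
  have hcast : Tendsto (fun n : ℤ => (2 * n + 1 : ℝ)) atTop atTop :=
    tendsto_atTop_add_const_right _ _ (tendsto_intCast_atTop_atTop.const_mul_atTop (by norm_num))
  rcases c1 with c1 | c1
  · -- `f` cannot interchange the two coarse points
    exfalso
    have c0' : f 0 = -1 := by
      rcases c0 with c0 | c0
      · exact absurd (c0.trans c1.symm) hinj
      · exact c0
    have g1 := i.symm.tendsto_Th ok' hgt (-1)
    rw [← c0', i.left, c0'] at g1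
    rw [c1] at f1
    rw [c0'] at f0
    rw [site_neg_one] at f0 f1 g1
    rw [site_zero] at f0 f1 g1
    obtain ⟨x, hx⟩ := hJ'
    -- images of large odd integers stay away from the even integers given by the branch of `x`
    obtain ⟨N₁, hN₁⟩ : ∃ N₁ : ℤ, ∀ n ≥ N₁, ∃ b, b ∉ branch x ∧ |f (2 * n + 1) - 2 * b| < 1 / 4 := by
      have hmem : thick ((fun n => 2 * n) '' (branch x)ᶜ) (1 / 4) ∈
          Th ((Fil J').map (fun n => 2 * n)) :=
        thick_mem_Th (image_mem_map (branch_compl_mem hx)) (by norm_num)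
      have h1 := (f1.comp (tendsto_cast_Th _)) hmem
      obtain ⟨N, hN⟩ := mem_atTop_sets.1 (mem_map.1 (mem_map.1 h1))
      refine ⟨N, fun n hn => ?_⟩
      obtain ⟨_, ⟨b, hb, rfl⟩, hb'⟩ := hN n hn
      exact ⟨b, hb, by simpa using hb'⟩
    obtain ⟨A, hA, δ, hδ, hδ4, hF⟩ := near_odd_of_tendsto f0
    obtain ⟨L, hL⟩ : ∃ L : ℤ, M < L := exists_int_gt M
    obtain ⟨N₂, hN₂⟩ : ∃ N₂ : ℤ, ∀ n ≥ N₂, ∃ a, 2 * a ∈ A ∧ max N₁ |L| ≤ a ∧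
        |g (2 * n + 1) - 2 * a| < δ := by
      have hA2 : {a : ℤ | 2 * a ∈ A ∧ max N₁ |L| ≤ a} ∈ Fil J :=
        inter_mem (mem_map.1 hA) (Fil_le_atTop J (mem_atTop _))
      have hmem := thick_mem_Th (image_mem_map (m := fun n : ℤ => 2 * n) hA2) hδ
      have h1 := (g1.comp (tendsto_cast_Th _)) hmem
      obtain ⟨N, hN⟩ := mem_atTop_sets.1 (mem_map.1 (mem_map.1 h1))
      refine ⟨N, fun n hn => ?_⟩
      obtain ⟨_, ⟨a, ⟨ha, ha'⟩, rfl⟩, hb'⟩ := hN n hn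
      exact ⟨a, ha, ha', by simpa using hb'⟩
    obtain ⟨N₃, hN₃⟩ := eventually_atTop.1 ((hgt.comp hcast).eventually_gt_atTop M)
    obtain ⟨d, hd, hdN, -⟩ := branch_escape x ∅ (by simp) (max (max N₂ N₃) |L| + 1)
    have hLa := le_abs_self L
    have hLn := abs_nonneg L
    obtain ⟨a₁, ha₁, hb₁, hc₁⟩ := hN₂ (d - 1) (by omega)
    obtain ⟨a₂, ha₂, hb₂, hc₂⟩ := hN₂ d (by omega)
    have hgM := hN₃ (d - 1) (by omega)
    simp only [Function.comp] at hgM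
    push_cast at hc₁ hgM
    have e1 : (2 * ((d : ℝ) - 1) + 1) = 2 * d - 1 := by ring
    rw [e1] at hc₁ hgM
    rw [abs_lt] at hc₁ hc₂
    have hdM : M < 2 * (d : ℝ) - 1 := by
      have : (L : ℝ) ≤ 2 * d - 1 := by exact_mod_cast (by omega : L ≤ 2 * d - 1)
      linarith
    have l1 := hgm (2 * d - 1) (2 * d) hdM (by linarith)
    have l2 := hgm (2 * d) (2 * d + 1) (by linarith) (by linarith)
    have hle : a₁ ≤ a₂ := by
      have : (2 * a₁ : ℝ) < 2 * a₂ + 1 := by linarith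
      have : 2 * a₁ < 2 * a₂ + 1 := by exact_mod_cast this
      omega
    rcases hle.eq_or_lt with rfl | hlt
    · obtain ⟨m, hm⟩ := hF _ ha₁ (g (2 * d)) (by
        push_cast
        rw [abs_lt]; constructor <;> linarith)
      rw [i.right] at hm
      exact not_near_odd d m hm
    · have hlt' : (a₁ : ℝ) + 1 ≤ a₂ := by exact_mod_cast hlt
      have k1 := hfm (g (2 * d - 1)) (2 * a₁ + 1) hgM (by linarith)
      have haM : M < 2 * (a₁ : ℝ) + 1 := by
        have : (L : ℝ) ≤ 2 * a₁ + 1 := by exact_mod_cast (by omega : L ≤ 2 * a₁ + 1)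
        linarith
      have k2 := hfm (2 * a₁ + 1) (g (2 * d + 1)) haM (by linarith)
      rw [i.right] at k1 k2
      obtain ⟨b, hb, hb'⟩ := hN₁ a₁ (by omega)
      rw [abs_lt] at hb'
      have u1 : 2 * d - 2 < 2 * b := by
        have : (2 * d - 2 : ℝ) < 2 * b := by linarith
        exact_mod_cast this
      have u2 : 2 * b < 2 * d + 2 := by
        have : (2 * b : ℝ) < 2 * d + 2 := by linarith
        exact_mod_cast this
      have : b = d := by omega
      exact hb (this ▸ hd)
  · have c0' : f 0 = 0 := by
      rcases c0 with c0 | c0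
      · exact c0
      · exact absurd (c0.trans c1.symm) hinj
    have g1 := i.symm.tendsto_Th ok' hgt (-1)
    rw [← c1, i.left, c1] at g1
    rw [c1] at f1
    rw [c0'] at f0
    rw [site_neg_one, site_neg_one] at f1 g1
    rw [site_zero, site_zero] at f0
    obtain ⟨k, N, hk⟩ := odd_shift i.left i.right hft hfm hgm f1 g1
    refine subset_of_shift (k := k) ?_
    intro B hB
    have hmem : thick ((fun n => 2 * n) '' B) (1 / 4) ∈ Th ((Fil J').map (fun n => 2 * n)) :=
      thick_mem_Th (image_mem_map hB) (by norm_num)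
    have h1 := (f0.comp (tendsto_cast_Th _)) hmem
    rw [mem_map, mem_map] at h1
    obtain ⟨L, hL⟩ : ∃ L : ℤ, M < L := exists_int_gt M
    rw [mem_map]
    filter_upwards [h1, Fil_le_atTop J (mem_atTop (max (N + 1) (|L| + 1)))] with n hn hnN
    obtain ⟨_, ⟨b, hb, rfl⟩, hb'⟩ := hn
    have hLa := le_abs_self L
    have hLn := abs_nonneg L
    replace hnN : max (N + 1) (|L| + 1) ≤ n := hnN
    have h2 := hk (n - 1) (by omega)
    have h3 := hk n (by omega)
    simp only [Function.comp] at hb'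
    push_cast at h2 h3 hb'
    have e1 : (2 * ((n : ℝ) - 1) + 1) = 2 * n - 1 := by ring
    rw [e1] at h2
    have hnM : M < 2 * (n : ℝ) - 1 := by
      have : (L : ℝ) ≤ 2 * n - 1 := by exact_mod_cast (by omega : L ≤ 2 * n - 1)
      linarith
    have l1 := hfm (2 * n - 1) (2 * n) hnM (by linarith)
    have l2 := hfm (2 * n) (2 * n + 1) (by linarith) (by linarith)
    rw [abs_lt] at h2 h3 hb'
    have u1 : 2 * (n + k) - 2 < 2 * b := by
      have : (2 * (n + k) - 2 : ℝ) < 2 * b := by linarith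
      exact_mod_cast this
    have u2 : 2 * b < 2 * (n + k) + 2 := by
      have : (2 * b : ℝ) < 2 * (n + k) + 2 := by linarith
      exact_mod_cast this
    have : n + k = b := by omega
    rw [mem_preimage, this]
    exact hb

lemma eq_of_homeomorph {J J' : Set ℝ} (hJ : J.Nonempty) (hJ' : J'.Nonempty)
    (e : @Homeomorph ℝ ℝ (top (site J)) (top (site J'))) : J = J' := by
  set E := @Homeomorph.toEquiv ℝ ℝ (top (site J)) (top (site J')) e with hE
  have i : Iso (site J) (site J') E E.symm := by
    refine ⟨E.symm_apply_apply, E.apply_symm_apply, fun x => ?_, fun x => ?_⟩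
    · have := @Continuous.tendsto ℝ ℝ (top (site J)) (top (site J')) E
        (@Homeomorph.continuous_toFun ℝ ℝ (top (site J)) (top (site J')) e) x
      rwa [(site_ok J).nhds_top, (site_ok J').nhds_top] at this
    · have := @Continuous.tendsto ℝ ℝ (top (site J')) (top (site J)) E.symm
        (@Homeomorph.continuous_invFun ℝ ℝ (top (site J)) (top (site J')) e) x
      rwa [(site_ok J).nhds_top, (site_ok J').nhds_top] at this
  exact (subset_of_iso hJ i.symm).antisymm (subset_of_iso hJ' i)

end CoarseReal

/-- For every infinite cardinal κ ≤ 𝔠 there are 2^κ mutually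
non-homeomorphic τ ∈ 𝓛 such that (ℝ, τ) is a completely normal Baire space of
weight κ. -/
theorem statement_19 (κ : Cardinal) (hκ₁ : Cardinal.aleph0 ≤ κ)
    (hκ₂ : κ ≤ Cardinal.continuum) :
    ∃ 𝒯 : Set (TopologicalSpace ℝ),
      Cardinal.mk ↥𝒯 = 2 ^ κ ∧
      (∀ τ ∈ 𝒯, InL τ ∧ @CompletelyNormalSpace ℝ τ ∧ @BaireSpace ℝ τ ∧
        weightOf τ = κ) ∧
      ∀ τ ∈ 𝒯, ∀ τ' ∈ 𝒯, τ ≠ τ' → IsEmpty (@Homeomorph ℝ ℝ τ τ') := by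
  classical
  -- `κ` disjoint pairs of reals; a subset of the index set selects one real from each pair
  obtain ⟨e⟩ : Nonempty (κ.out × Bool ↪ ℝ) := by
    rw [← Cardinal.le_def, Cardinal.mk_prod, Cardinal.mk_out, Cardinal.mk_bool,
      Cardinal.mk_real]
    simp only [Cardinal.lift_id]
    rw [Cardinal.mul_eq_left hκ₁ (Cardinal.ofNat_lt_aleph0.le.trans hκ₁) two_ne_zero]
    exact hκ₂
  set sel : Set κ.out → κ.out → ℝ := fun S i => e (i, decide (i ∈ S)) with hsel
  have hsel_inj : ∀ S, Function.Injective (sel S) := fun S i j h =>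
    congrArg Prod.fst (e.injective h)
  have hcard : ∀ S, Cardinal.mk (range (sel S)) = κ := fun S => by
    rw [Cardinal.mk_range_eq _ (hsel_inj S), Cardinal.mk_out]
  have hnonempty : ∀ S, (range (sel S)).Nonempty := fun S => by
    rw [← nonempty_coe_sort, ← Cardinal.mk_ne_zero_iff, hcard]
    exact (Cardinal.aleph0_pos.trans_le hκ₁).ne'
  have hrange : ∀ S T, range (sel S) = range (sel T) → S = T := by
    intro S T h
    ext i
    obtain ⟨j, hj⟩ : sel S i ∈ range (sel T) := h ▸ mem_range_self i
    have hp := e.injective hj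
    obtain rfl : j = i := congrArg Prod.fst hp
    have hd : decide (j ∈ T) = decide (j ∈ S) := congrArg Prod.snd hp
    rw [decide_eq_decide] at hd
    exact hd.symm
  have hhom : ∀ S T, @Homeomorph ℝ ℝ (CoarseReal.top (CoarseReal.site (range (sel S))))
      (CoarseReal.top (CoarseReal.site (range (sel T)))) → S = T := fun S T h =>
    hrange S T (CoarseReal.eq_of_homeomorph (hnonempty S) (hnonempty T) h)
  have hinj : Function.Injective
      fun S => CoarseReal.top (CoarseReal.site (range (sel S))) := by
    intro S T h
    refine hhom S T ?_
    simp only at h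
    rw [h]
    exact @Homeomorph.refl ℝ (CoarseReal.top (CoarseReal.site (range (sel T))))
  refine ⟨range fun S => CoarseReal.top (CoarseReal.site (range (sel S))), ?_, ?_, ?_⟩
  · rw [Cardinal.mk_range_eq _ hinj, Cardinal.mk_set, Cardinal.mk_out]
  · rintro _ ⟨S, rfl⟩
    have ok := CoarseReal.site_ok (range (sel S))
    have hinf : Cardinal.aleph0 ≤ Cardinal.mk (range (sel S)) := (hcard S).symm ▸ hκ₁
    refine ⟨⟨ok.coarser, ok.t2⟩, ok.completelyNormal, ok.baire, ?_⟩
    exact (le_antisymm (CoarseReal.weight_le _ hinf) (CoarseReal.le_weight _ hinf)).trans (hcard S)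
  · rintro _ ⟨S, rfl⟩ _ ⟨T, rfl⟩ hne
    refine ⟨fun h => hne ?_⟩
    rw [hhom S T h]
end
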